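/- Let α ∈ ℝ \ {0}. Then there exists ε₀ > 0 such that every steady solution of the Euler equations on the non-rotating sphere whose vorticity Ω̄ satisfies ‖Ω̄ + 2αY₁⁰‖_{H⁴} ≤ ε₀ and ⟨Ω̄, Y₁^m⟩ = 0 for |m| = 1, must be zonal: the velocity is Ū = Ū(θ)e_φ and Ω̄ = Ω̄(θ). -/

import Mathlib

open MeasureTheory
open scoped ENNReal

noncomputable section

/-- Functions on the unit sphere, represented in colatitude-longitude coordinates `(θ, φ)`. -/
abbrev SphereFun : Type := ℝ → ℝ → ℝ

/-- The `L²` inner product on the sphere: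
`⟨u,v⟩ = ∫₀^{2π} ∫₀^π u v sin θ dθ dφ`. -/
def sInner (u v : SphereFun) : ℝ :=
  ∫ φ in (0:ℝ)..(2*Real.pi), ∫ θ in (0:ℝ)..Real.pi, u θ φ * v θ φ * Real.sin θ

/-- Legendre polynomials via Rodrigues' formula. -/
def legP (n : ℕ) (s : ℝ) : ℝ :=
  (1 / ((2:ℝ)^n * (Nat.factorial n : ℝ))) * iteratedDeriv n (fun x : ℝ => (x^2 - 1)^n) s

/-- Associated Legendre functions `P_n^m`. -/
def assocLegP (n m : ℕ) (s : ℝ) : ℝ :=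
  (-1 : ℝ)^m * (1 - s^2) ^ ((m : ℝ)/2) * iteratedDeriv m (legP n) s

/-- Real spherical harmonics `Y_n^m`. -/
def Ynm (n : ℕ) (m : ℤ) : SphereFun := fun θ φ =>
  if m = 0 then
    Real.sqrt ((2*(n:ℝ)+1)/(4*Real.pi)) * legP n (Real.cos θ)
  else if 0 < m then
    (-1 : ℝ)^(m.natAbs) * Real.sqrt 2 *
      Real.sqrt ((2*(n:ℝ)+1)/(4*Real.pi) *
        ((Nat.factorial (n - m.natAbs) : ℝ) / (Nat.factorial (n + m.natAbs) : ℝ))) *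
      assocLegP n m.natAbs (Real.cos θ) * Real.cos ((m.natAbs : ℝ) * φ)
  else
    (-1 : ℝ)^(m.natAbs) * Real.sqrt 2 *
      Real.sqrt ((2*(n:ℝ)+1)/(4*Real.pi) *
        ((Nat.factorial (n - m.natAbs) : ℝ) / (Nat.factorial (n + m.natAbs) : ℝ))) *
      assocLegP n m.natAbs (Real.cos θ) * Real.sin ((m.natAbs : ℝ) * φ)

/-- The spherical-harmonic coefficient `u_n^m = ⟨u, Y_n^m⟩`. -/
def coeff (u : SphereFun) (n : ℕ) (m : ℤ) : ℝ := sInner u (Ynm n m)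

/-- `μ_n = n(n+1) + 1`. -/
def muSp (n : ℕ) : ℝ := (n:ℝ)*((n:ℝ)+1)+1

/-- Squared (inhomogeneous) Sobolev norm `‖u‖²_{H^k} = Σ μ_n^k |u_n^m|²`. -/
def sobNormSq (k : ℕ) (u : SphereFun) : ℝ≥0∞ :=
  ∑' p : ℕ × ℤ, if |p.2| ≤ (p.1 : ℤ) then
    ENNReal.ofReal ((muSp p.1)^k * (coeff u p.1 p.2)^2) else 0

/-- Squared homogeneous Sobolev norm `‖u‖²_{Ḣ^k} = Σ_{n ≥ 1} λ_n^k |u_n^m|²`. -/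
def dotNormSq (k : ℕ) (u : SphereFun) : ℝ≥0∞ :=
  ∑' p : ℕ × ℤ, if 1 ≤ p.1 ∧ |p.2| ≤ (p.1 : ℤ) then
    ENNReal.ofReal (((p.1:ℝ)*((p.1:ℝ)+1))^k * (coeff u p.1 p.2)^2) else 0

/-- Squared Gevrey norm `‖u‖²_{G_λ} = Σ_{n ≥ 1} μ_n² e^{2λ√μ_n} |u_n^m|²`. -/
def gevNormSq (lam : ℝ) (u : SphereFun) : ℝ≥0∞ :=
  ∑' p : ℕ × ℤ, if 1 ≤ p.1 ∧ |p.2| ≤ (p.1 : ℤ) then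
    ENNReal.ofReal ((muSp p.1)^2 * Real.exp (2*lam*Real.sqrt (muSp p.1)) *
      (coeff u p.1 p.2)^2) else 0

/-- `∂_θ`. -/
def dTheta (u : SphereFun) : SphereFun := fun θ φ => deriv (fun t => u t φ) θ

/-- `∂_φ`. -/
def dPhi (u : SphereFun) : SphereFun := fun θ φ => deriv (fun p => u θ p) φ

/-- The Laplace–Beltrami operator in colatitude-longitude coordinates:
`Δu = (1/sinθ)∂_θ(sinθ ∂_θu) + (1/sin²θ)∂²_φu`. -/
def lapS (u : SphereFun) : SphereFun := fun θ φ =>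
  (1 / Real.sin θ) * deriv (fun t => Real.sin t * dTheta u t φ) θ
  + (1 / (Real.sin θ)^2) * dPhi (dPhi u) θ φ

/-- A zonal function: one depending only on the colatitude `θ`. -/
def Zonal (u : SphereFun) : Prop := ∀ (θ φ₁ φ₂ : ℝ), u θ φ₁ = u θ φ₂

/-- Zonal on the coordinate chart `θ ∈ [0, π]`. -/
def ZonalOn (u : SphereFun) : Prop :=
  ∀ θ ∈ Set.Icc (0:ℝ) Real.pi, ∀ (φ₁ φ₂ : ℝ), u θ φ₁ = u θ φ₂

/-- `2π`-periodicity in the longitude. -/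
def PeriodicPhi (u : SphereFun) : Prop := ∀ θ φ, u θ (φ + 2*Real.pi) = u θ φ

/-- The advection term `U·∇f` for the velocity `U = ∇⊥Ψ`, i.e.
`(1/sinθ)∂_φΨ ∂_θf − ∂_θΨ (1/sinθ)∂_φf`. -/
def advect (Ψ f : SphereFun) : SphereFun := fun θ φ =>
  (1 / Real.sin θ) * dPhi Ψ θ φ * dTheta f θ φ
  - dTheta Ψ θ φ * ((1 / Real.sin θ) * dPhi f θ φ)

/-- Smoothness in the coordinates. -/
def SphSmooth (u : SphereFun) : Prop := ContDiff ℝ (⊤ : ℕ∞) (Function.uncurry u)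

/-- A function is trivial if it is a zonal function plus an element of
`span{Y₂^m : |m| ≤ 2}`; non-triviality is the negation of this. -/
def SphNontrivial (u : SphereFun) : Prop :=
  ¬ ∃ (z : SphereFun) (c : ℤ → ℝ), Zonal z ∧
      ∀ θ ∈ Set.Icc (0:ℝ) Real.pi, ∀ φ : ℝ,
        u θ φ = z θ φ + ∑ m ∈ Finset.Icc (-2 : ℤ) 2, c m * Ynm 2 m θ φ

/-- Real analyticity on the sphere, characterized by membership in a Gevrey class. -/
def RealAnalyticSphere (u : SphereFun) : Prop := ∃ lam > 0, gevNormSq lam u < ⊤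

section PartA1
open Polynomial

/-- Legendre polynomial. -/
def LP (n : ℕ) : ℝ[X] := C (1 / ((2:ℝ)^n * (Nat.factorial n : ℝ))) * derivative^[n] ((X^2 - 1)^n)

lemma iteratedDeriv_poly (p : ℝ[X]) (m : ℕ) :
    iteratedDeriv m (fun x => p.eval x) = fun x => (derivative^[m] p).eval x := by
  induction m with
  | zero => simp
  | succ k ih =>
    rw [iteratedDeriv_succ, ih, Function.iterate_succ_apply']
    funext x
    exact Polynomial.deriv _

lemma legP_eq (n : ℕ) : legP n = fun s => (LP n).eval s := by
  funext s
  have h := iteratedDeriv_poly ((X^2 - 1)^n) n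
  simp only [eval_pow, eval_sub, eval_X, eval_one] at h
  simp only [legP, LP, h, eval_mul, eval_C]

lemma iter_legP (n m : ℕ) (s : ℝ) : iteratedDeriv m (legP n) s = (derivative^[m] (LP n)).eval s := by
  rw [legP_eq, iteratedDeriv_poly]

lemma yrec (n k : ℕ) :
    ((X:ℝ[X])^2 - 1) * derivative^[k+2] ((X^2 - 1)^n)
      + C (2*((k:ℝ)+1-n)) * X * derivative^[k+1] ((X^2 - 1)^n)
      + C (((k:ℝ)+1)*(k-2*n)) * derivative^[k] ((X^2 - 1)^n) = 0 := by
  induction k with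
  | zero =>
    have h1 : ((X:ℝ[X])^2 - 1) * derivative ((X^2 - 1)^n) = C (2*(n:ℝ)) * X * (X^2-1)^n := by
      cases n with
      | zero => simp
      | succ n =>
        rw [derivative_pow]
        simp only [derivative_sub, derivative_X_pow, derivative_one, Nat.add_sub_cancel]
        simp
        ring
    have h2 := congrArg derivative h1
    simp only [derivative_mul, derivative_sub, derivative_X_pow, derivative_one, derivative_C,
      derivative_X] at h2
    simp only [Function.iterate_succ_apply', Function.iterate_zero, id] at h2 ⊢
    simp at h2 ⊢
    linear_combination h2
  | succ k ih =>
    have h2 := congrArg derivative ih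
    simp only [derivative_mul, derivative_sub, derivative_add, derivative_X_pow, derivative_one, derivative_C,
      derivative_X, derivative_zero, ← Function.iterate_succ_apply' derivative] at h2
    simp only [map_mul, map_add, map_sub, map_natCast, map_one, map_ofNat, Nat.cast_add, Nat.cast_one, Nat.cast_ofNat, Nat.add_sub_cancel] at h2 ⊢
    simp at h2
    simp only [show k+1+2 = k+1+1+1 from rfl, Function.iterate_succ_apply]
    linear_combination h2

lemma LPrec (n m : ℕ) :
    ((X:ℝ[X])^2 - 1) * derivative^[m+2] (LP n)
      + C (2*((m:ℝ)+1)) * X * derivative^[m+1] (LP n)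
      + C (((n:ℝ)+m+1)*(m-n)) * derivative^[m] (LP n) = 0 := by
  have h := yrec n (m+n)
  simp only [LP, iterate_derivative_C_mul, ← Function.iterate_add_apply]
  rw [show m + n + 2 = m + 2 + n by ring, show m + n + 1 = m + 1 + n by ring] at h
  rw [show (2*(((m+n:ℕ):ℝ)+1-n)) = 2*((m:ℝ)+1) by push_cast; ring,
    show ((((m+n:ℕ):ℝ)+1)*(((m+n:ℕ):ℝ)-2*n)) = ((n:ℝ)+m+1)*(m-n) by push_cast; ring] at h
  linear_combination C (1 / ((2:ℝ)^n * (Nat.factorial n : ℝ))) * h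

lemma SL (n m : ℕ) :
    derivative ((1 - (X:ℝ[X])^2)^(m+1) * derivative^[m+1] (LP n))
      = - C (((n:ℝ)+m+1)*(n-m)) * ((1 - X^2)^m * derivative^[m] (LP n)) := by
  have h := LPrec n m
  rw [derivative_mul, derivative_pow, ← Function.iterate_succ_apply' derivative]
  simp only [derivative_sub, derivative_X_pow, derivative_one, Nat.add_sub_cancel]
  simp at h ⊢
  linear_combination (-(1 - (X:ℝ[X])^2)^m) * h

lemma iter_eval (n : ℕ) (a : ℝ) : ∀ q : ℝ[X], (derivative^[n] ((X - C a)^n * q)).eval a = n.factorial * q.eval a := by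
  induction n with
  | zero => intro q; simp
  | succ n ih =>
    intro q
    rw [Function.iterate_succ_apply]
    have : derivative ((X - C a)^(n+1) * q) = (X - C a)^n * (C ((n:ℝ)+1) * q + (X - C a) * derivative q) := by
      rw [derivative_mul, derivative_pow]
      simp
      ring
    rw [this, ih]
    simp [Nat.factorial_succ]
    ring

lemma LP_one (n : ℕ) : (LP n).eval 1 = 1 := by
  have h := iter_eval n 1 ((X+1)^n)
  rw [← mul_pow] at h
  rw [show ((X:ℝ[X]) - C 1) * (X + 1) = X^2 - 1 by simp; ring] at h
  simp only [LP, eval_mul, h, eval_C, eval_pow, eval_add, eval_X, eval_one]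
  have : (n.factorial:ℝ) ≠ 0 := by positivity
  field_simp
  norm_num

lemma LP_neg_one (n : ℕ) : (LP n).eval (-1) = (-1)^n := by
  have h := iter_eval n (-1) ((X-1)^n)
  rw [← mul_pow] at h
  rw [show ((X:ℝ[X]) - C (-1)) * (X - 1) = X^2 - 1 by simp; ring] at h
  simp only [LP, eval_mul, h, eval_C, eval_pow, eval_sub, eval_X, eval_one]
  have : (n.factorial:ℝ) ≠ 0 := by positivity
  rw [show (-1 - 1:ℝ) = (-1)*2 by norm_num, mul_pow]
  field_simp

lemma natDegree_base (n : ℕ) : (((X:ℝ[X])^2 - 1)^n).natDegree = 2*n := by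
  rw [natDegree_pow, show ((X:ℝ[X])^2 - 1) = X^2 - C 1 by simp, natDegree_X_pow_sub_C, mul_comm]

lemma LP_natDegree_le (n : ℕ) : (LP n).natDegree ≤ n := by
  refine (natDegree_C_mul_le _ _).trans ?_
  refine (natDegree_iterate_derivative _ _).trans ?_
  rw [natDegree_base]; omega

lemma LP_coeff_ne (n : ℕ) : (LP n).coeff n ≠ 0 := by
  have hm : ((X:ℝ[X])^2 - 1)^n |>.Monic := by
    apply Monic.pow
    rw [show ((X:ℝ[X])^2 - 1) = X^2 - C 1 by simp]
    exact monic_X_pow_sub_C _ (by norm_num)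
  have h2 := hm.coeff_natDegree
  rw [natDegree_base] at h2
  rw [LP, coeff_C_mul, coeff_iterate_derivative, ← two_mul, h2]
  have : (n.factorial:ℝ) ≠ 0 := by positivity
  have h3 : ((2*n).descFactorial n : ℝ) ≠ 0 := by
    rw [Nat.cast_ne_zero, Ne, Nat.descFactorial_eq_zero_iff_lt]; omega
  simp [h3, this]

lemma dLP_natDegree_le (n m : ℕ) : (derivative^[m] (LP n)).natDegree ≤ n - m :=
  (natDegree_iterate_derivative _ _).trans (Nat.sub_le_sub_right (LP_natDegree_le n) m)

lemma dLP_coeff_ne (j m : ℕ) : (derivative^[m] (LP (m + j))).coeff j ≠ 0 := by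
  rw [coeff_iterate_derivative, add_comm m j, nsmul_eq_mul]
  refine mul_ne_zero ?_ (LP_coeff_ne _)
  rw [Nat.cast_ne_zero, Ne, Nat.descFactorial_eq_zero_iff_lt]; omega

lemma dLP_zero {n m : ℕ} (h : n < m) : derivative^[m] (LP n) = 0 :=
  iterate_derivative_eq_zero ((LP_natDegree_le n).trans_lt h)

lemma span_seq (r : ℕ → ℝ[X]) (h1 : ∀ k, (r k).natDegree ≤ k) (h2 : ∀ k, (r k).coeff k ≠ 0) (N : ℕ) :
    ∀ Q : ℝ[X], Q.natDegree < N → ∃ a : ℕ → ℝ, Q = ∑ k ∈ Finset.range N, C (a k) * r k := by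
  induction N with
  | zero => intro Q h; omega
  | succ N ih =>
    intro Q hQ
    set c := Q.coeff N / (r N).coeff N with hc
    have hd : (Q - C c * r N).natDegree ≤ N := by
      refine (natDegree_sub_le _ _).trans (max_le (by omega) ((natDegree_C_mul_le _ _).trans (h1 N)))
    have hcf : (Q - C c * r N).coeff N = 0 := by
      simp [hc, h2 N]
    rcases Nat.eq_zero_or_pos N with h0 | hpos
    · subst h0
      refine ⟨fun _ => c, ?_⟩
      have := eq_C_of_natDegree_le_zero hd
      rw [hcf] at this
      simp at this
      simp
      linear_combination this
    · have hlt : (Q - C c * r N).natDegree < N := by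
        refine lt_of_le_of_ne hd ?_
        intro heq
        have : (Q - C c * r N).leadingCoeff = 0 := by rw [leadingCoeff, heq, hcf]
        rw [leadingCoeff_eq_zero] at this
        rw [this] at heq
        simp at heq
        omega
      obtain ⟨a, ha⟩ := ih _ hlt
      refine ⟨Function.update a N c, ?_⟩
      rw [Finset.sum_range_succ]
      have : ∑ k ∈ Finset.range N, C (Function.update a N c k) * r k = ∑ k ∈ Finset.range N, C (a k) * r k := by
        apply Finset.sum_congr rfl
        intro k hk
        rw [Finset.mem_range] at hk
        rw [Function.update_of_ne (by omega)]
      rw [this, ← ha]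
      simp

end PartA1

section PartA2
open Polynomial

/-- Integral of a polynomial over [-1,1]. -/
def II (p : ℝ[X]) : ℝ := ∫ x in (-1:ℝ)..1, p.eval x

lemma poly_ii (p : ℝ[X]) (a b : ℝ) : IntervalIntegrable (fun x => p.eval x) volume a b :=
  p.continuous.intervalIntegrable a b

lemma II_add (p q : ℝ[X]) : II (p + q) = II p + II q := by
  simp only [II, eval_add]
  exact intervalIntegral.integral_add (poly_ii _ _ _) (poly_ii _ _ _)

lemma II_C_mul (c : ℝ) (p : ℝ[X]) : II (C c * p) = c * II p := by
  simp only [II, eval_mul, eval_C]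
  exact intervalIntegral.integral_const_mul _ _

lemma II_sum {ι : Type*} (s : Finset ι) (f : ι → ℝ[X]) : II (∑ i ∈ s, f i) = ∑ i ∈ s, II (f i) := by
  simp only [II, eval_finsetSum]
  exact intervalIntegral.integral_finsetSum (fun i _ => poly_ii _ _ _)

lemma II_deriv (p : ℝ[X]) : II (derivative p) = p.eval 1 - p.eval (-1) := by
  exact intervalIntegral.integral_eq_sub_of_hasDerivAt (fun x _ => p.hasDerivAt x) (poly_ii _ _ _)

lemma II_neg (p : ℝ[X]) : II (-p) = - II p := by
  have := II_C_mul (-1) p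
  simpa using this

lemma II_SL (n k m : ℕ) :
    II ((1 - X^2)^(m+1) * derivative^[m+1] (LP n) * derivative^[m+1] (LP k))
      = (((n:ℝ)+m+1)*(n-m)) * II ((1 - X^2)^m * derivative^[m] (LP n) * derivative^[m] (LP k)) := by
  have h := II_deriv ((1 - X^2)^(m+1) * derivative^[m+1] (LP n) * derivative^[m] (LP k))
  rw [derivative_mul, SL, II_add, ← Function.iterate_succ_apply' derivative] at h
  simp only [eval_mul, eval_pow, eval_sub, eval_one, eval_X] at h
  have e : -C (((n:ℝ) + m + 1) * (n - m)) * ((1 - X ^ 2) ^ m * derivative^[m] (LP n)) * derivative^[m] (LP k)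
     = C (-(((n:ℝ) + m + 1) * (n - m))) * ((1 - X ^ 2) ^ m * derivative^[m] (LP n) * derivative^[m] (LP k)) := by
    rw [C_neg]; ring
  rw [e, II_C_mul] at h
  have z1 : ((1:ℝ) - 1^2)^(m+1) = 0 := by norm_num
  have z2 : ((1:ℝ) - (-1)^2)^(m+1) = 0 := by norm_num
  rw [z1, z2] at h
  simp only [zero_mul, sub_zero] at h
  linarith

lemma LP_orth {n k : ℕ} (h : n ≠ k) : II (LP n * LP k) = 0 := by
  have h1 := II_SL n k 0
  have h2 := II_SL k n 0
  simp only [pow_zero, one_mul, Function.iterate_zero, id] at h1 h2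
  rw [mul_comm (LP k), mul_right_comm, h1] at h2
  have hne : ((n:ℝ) - k) * (n + k + 1) ≠ 0 := by
    refine mul_ne_zero (sub_ne_zero.2 (by exact_mod_cast h)) (by positivity)
  have : ((n:ℝ) - k) * (n + k + 1) * II (LP n * LP k) = 0 := by
    push_cast at h2
    linarith
  exact (mul_eq_zero.1 this).resolve_left hne

lemma LP_orth_low (n : ℕ) (Q : ℝ[X]) (hQ : Q.natDegree < n) : II (LP n * Q) = 0 := by
  obtain ⟨a, ha⟩ := span_seq LP LP_natDegree_le LP_coeff_ne n Q hQ
  rw [ha, Finset.mul_sum, II_sum]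
  apply Finset.sum_eq_zero
  intro k hk
  rw [Finset.mem_range] at hk
  rw [mul_left_comm, II_C_mul, LP_orth (by omega), mul_zero]

lemma LP_norm (n : ℕ) : II (LP n * LP n) = 2 / (2*n+1) := by
  rcases Nat.eq_zero_or_pos n with h0 | hpos
  · subst h0
    simp [LP, II]
    norm_num
  have h := II_deriv (X * (LP n * LP n))
  have e : derivative (X * (LP n * LP n)) = C (2*n+1:ℝ) * (LP n * LP n)
      + C 2 * (LP n * (X * derivative (LP n) - C (n:ℝ) * LP n)) := by
    have h2 : (C (2:ℝ)) = (2:ℝ[X]) := rfl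
    simp [derivative_mul, h2]
    ring
  have hl : (X * derivative (LP n) - C (n:ℝ) * LP n).natDegree < n := by
    have hd : (X * derivative (LP n) - C (n:ℝ) * LP n).natDegree ≤ n := by
      refine (natDegree_sub_le _ _).trans (max_le ?_ ((natDegree_C_mul_le _ _).trans (LP_natDegree_le n)))
      refine natDegree_mul_le.trans ?_
      have := natDegree_derivative_le (LP n)
      have := LP_natDegree_le n
      simp only [natDegree_X]
      omega
    refine lt_of_le_of_ne hd fun heq => ?_
    have hc : (X * derivative (LP n) - C (n:ℝ) * LP n).coeff n = 0 := by
      obtain ⟨j, rfl⟩ : ∃ j, n = j + 1 := ⟨n-1, by omega⟩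
      rw [coeff_sub, coeff_X_mul, coeff_derivative, coeff_C_mul]
      push_cast
      ring
    have : (X * derivative (LP n) - C (n:ℝ) * LP n).leadingCoeff = 0 := by rw [leadingCoeff, heq, hc]
    rw [leadingCoeff_eq_zero] at this
    rw [this] at heq
    simp at heq
    omega
  rw [e, II_add, II_C_mul, II_C_mul, LP_orth_low n _ hl] at h
  simp only [eval_mul, eval_X, LP_one, LP_neg_one] at h
  have h2 : ((-1:ℝ)^n * (-1)^n) = 1 := by rw [← mul_pow]; norm_num
  rw [h2] at h
  have : (2*(n:ℝ)+1) ≠ 0 := by positivity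
  field_simp
  linarith

lemma dLP_orth {n k : ℕ} (m : ℕ) (h : n ≠ k) :
    II ((1 - X^2)^m * derivative^[m] (LP n) * derivative^[m] (LP k)) = 0 := by
  induction m with
  | zero => simpa using LP_orth h
  | succ m ih => rw [II_SL, ih, mul_zero]

lemma dLP_norm (n : ℕ) : ∀ m ≤ n,
    II ((1 - X^2)^m * derivative^[m] (LP n) * derivative^[m] (LP n))
      = 2/(2*n+1) * ((n+m).factorial / (n-m).factorial) := by
  intro m
  induction m with
  | zero =>
    intro _
    have : (n.factorial:ℝ) ≠ 0 := by positivity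
    simpa [this] using LP_norm n
  | succ m ih =>
    intro hm
    rw [II_SL, ih (by omega)]
    obtain ⟨j, rfl⟩ : ∃ j, n = m + 1 + j := ⟨n - (m+1), by omega⟩
    rw [show m + 1 + j - m = j + 1 by omega, show m + 1 + j - (m+1) = j by omega,
      show m + 1 + j + (m+1) = (m + 1 + j + m) + 1 by ring, Nat.factorial_succ, Nat.factorial_succ (m+1+j+m)]
    have : (j.factorial:ℝ) ≠ 0 := by positivity
    have : ((2:ℝ)*(m+1+j)+1) ≠ 0 := by positivity
    have : ((j:ℝ)+1) ≠ 0 := by positivity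
    push_cast
    field_simp
    ring

lemma LP_le_one (n : ℕ) (s : ℝ) (hs : s ∈ Set.Icc (-1:ℝ) 1) : |(LP n).eval s| ≤ 1 := by
  rcases Nat.eq_zero_or_pos n with h0 | hpos
  · subst h0; simp [LP]
  set V : ℝ[X] := C ((n:ℝ)*(n+1)) * (LP n)^2 + (1 - X^2) * (derivative (LP n))^2 with hV
  have hdV : derivative V = C 2 * X * (derivative (LP n))^2 := by
    have h := LPrec n 0
    simp only [Function.iterate_succ_apply', Function.iterate_zero, id] at h
    have h2 : (C (2:ℝ)) = (2:ℝ[X]) := rfl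
    simp [hV, derivative_mul, derivative_pow, h2] at h ⊢
    linear_combination (-2 * derivative (LP n)) * h
  have hlam : (0:ℝ) < (n:ℝ)*(n+1) := by positivity
  have key : V.eval s ≤ (n:ℝ)*(n+1) := by
    have hp : V.eval 1 = (n:ℝ)*(n+1) := by simp [hV, LP_one]
    have hm : V.eval (-1) = (n:ℝ)*(n+1) := by
      have h2 : (((-1:ℝ)^n)^2) = 1 := by rw [← pow_mul, mul_comm, pow_mul]; norm_num
      simp [hV, LP_neg_one, h2]
    rcases le_total 0 s with h | h
    · have hmono : MonotoneOn (fun x => V.eval x) (Set.Icc (0:ℝ) 1) := by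
        apply monotoneOn_of_deriv_nonneg (convex_Icc _ _) V.continuous.continuousOn V.differentiable.differentiableOn
        intro x hx
        rw [interior_Icc] at hx
        rw [Polynomial.deriv, hdV]
        simp only [eval_mul, eval_C, eval_X, eval_pow]
        have := hx.1
        positivity
      have := hmono ⟨h, hs.2⟩ ⟨zero_le_one, le_refl _⟩ hs.2
      simpa [hp] using this
    · have hmono : AntitoneOn (fun x => V.eval x) (Set.Icc (-1:ℝ) 0) := by
        apply antitoneOn_of_deriv_nonpos (convex_Icc _ _) V.continuous.continuousOn V.differentiable.differentiableOn
        intro x hx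
        rw [interior_Icc] at hx
        rw [Polynomial.deriv, hdV]
        simp only [eval_mul, eval_C, eval_X, eval_pow]
        have := hx.2
        nlinarith [sq_nonneg (eval x (derivative (LP n)))]
      have := hmono ⟨le_refl _, by norm_num⟩ ⟨hs.1, h⟩ hs.1
      simpa [hm] using this
  have h1 : 0 ≤ (1 - s^2) := by nlinarith [hs.1, hs.2]
  simp [hV] at key
  have h3 : 0 ≤ (1 - s^2) * (eval s (derivative (LP n)))^2 := by positivity
  have h4 : (n:ℝ)*(n+1) * (eval s (LP n))^2 ≤ (n:ℝ)*(n+1) * 1 := by linarith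
  have h5 := le_of_mul_le_mul_left h4 hlam
  exact (sq_le_one_iff_abs_le_one _).1 h5

lemma nikolskii (N : ℕ) (Q : ℝ[X]) (hQ : Q.natDegree ≤ N) (hpos : ∀ s ∈ Set.Icc (-1:ℝ) 1, 0 ≤ Q.eval s)
    (s : ℝ) (hs : s ∈ Set.Icc (-1:ℝ) 1) : Q.eval s ≤ (N+1)^2/2 * II Q := by
  obtain ⟨a, ha⟩ := span_seq LP LP_natDegree_le LP_coeff_ne (N+1) Q (by omega)
  have hk : ∀ k ∈ Finset.range (N+1), a k = (2*k+1)/2 * II (Q * LP k) := by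
    intro k hk
    have : II (Q * LP k) = a k * (2/(2*k+1)) := by
      rw [ha, Finset.sum_mul, II_sum, Finset.sum_eq_single k]
      · rw [mul_assoc, II_C_mul, LP_norm]
      · intro j _ hj
        rw [mul_assoc, II_C_mul, LP_orth hj, mul_zero]
      · intro h; exact absurd hk h
    rw [this]
    have : (2*(k:ℝ)+1) ≠ 0 := by positivity
    field_simp
  have hb : ∀ k, |II (Q * LP k)| ≤ II Q := by
    intro k
    simp only [II, ← Real.norm_eq_abs]
    refine intervalIntegral.norm_integral_le_of_norm_le (by norm_num) ?_ (poly_ii _ _ _)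
    refine Filter.Eventually.of_forall fun x hx => ?_
    have hx' : x ∈ Set.Icc (-1:ℝ) 1 := ⟨hx.1.le, hx.2⟩
    rw [eval_mul, Real.norm_eq_abs, abs_mul, abs_of_nonneg (hpos x hx')]
    exact mul_le_of_le_one_right (hpos x hx') (LP_le_one k x hx')
  have hII : 0 ≤ II Q := (abs_nonneg _).trans (hb 0)
  calc Q.eval s = ∑ k ∈ Finset.range (N+1), a k * (LP k).eval s := by
        conv_lhs => rw [ha]
        simp [eval_finsetSum]
    _ ≤ ∑ k ∈ Finset.range (N+1), (2*(k:ℝ)+1)/2 * II Q := by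
        apply Finset.sum_le_sum
        intro k hk'
        rw [hk k hk']
        refine (le_abs_self _).trans ?_
        rw [abs_mul, abs_mul, abs_of_nonneg (by positivity : (0:ℝ) ≤ (2*k+1)/2)]
        refine (mul_le_of_le_one_right (by positivity) (LP_le_one k s hs)).trans ?_
        exact mul_le_mul_of_nonneg_left (hb k) (by positivity)
    _ = _ := by
        rw [← Finset.sum_mul]
        congr 1
        clear hk ha hQ
        induction N with
        | zero => simp
        | succ N ih => rw [Finset.sum_range_succ, ih]; push_cast; ring

/-- normalized polynomial part of the associated Legendre function -/
def EP (n m : ℕ) : ℝ[X] :=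
  C (Real.sqrt ((2*(n:ℝ)+1)/2 * ((n-m).factorial / (n+m).factorial))) * derivative^[m] (LP n)

lemma EP_orth {n k : ℕ} (m : ℕ) (h : n ≠ k) : II ((1-X^2)^m * EP n m * EP k m) = 0 := by
  unfold EP
  set c := Real.sqrt ((2*(n:ℝ)+1)/2 * ((n-m).factorial / (n+m).factorial))
  set d := Real.sqrt ((2*(k:ℝ)+1)/2 * ((k-m).factorial / (k+m).factorial))
  have := dLP_orth m h
  have e : (1 - X ^ 2) ^ m * (C c * derivative^[m] (LP n)) * (C d * derivative^[m] (LP k))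
    = C c * (C d * ((1 - X ^ 2) ^ m * derivative^[m] (LP n) * derivative^[m] (LP k))) := by ring
  rw [e, II_C_mul, II_C_mul, this]; simp

lemma EP_norm {n m : ℕ} (h : m ≤ n) : II ((1-X^2)^m * EP n m * EP n m) = 1 := by
  unfold EP
  set c := Real.sqrt ((2*(n:ℝ)+1)/2 * ((n-m).factorial / (n+m).factorial)) with hc
  have := dLP_norm n m h
  have e : (1 - X ^ 2) ^ m * (C c * derivative^[m] (LP n)) * (C c * derivative^[m] (LP n))
    = C c * (C c * ((1 - X ^ 2) ^ m * derivative^[m] (LP n) * derivative^[m] (LP n))) := by ring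
  rw [e, II_C_mul, II_C_mul, this, ← mul_assoc, hc, Real.mul_self_sqrt (by positivity)]
  have : ((n-m).factorial:ℝ) ≠ 0 := by positivity
  have : ((n+m).factorial:ℝ) ≠ 0 := by positivity
  field_simp

lemma EP_zero {n m : ℕ} (h : n < m) : EP n m = 0 := by rw [EP, dLP_zero h, mul_zero]

lemma EP_sup (n m : ℕ) (s : ℝ) (hs : s ∈ Set.Icc (-1:ℝ) 1) :
    (1-s^2)^m * ((EP n m).eval s)^2 ≤ (2*n+1)^2 := by
  rcases lt_or_ge n m with h | h
  · rw [EP_zero h]; simp; positivity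
  have hd : ((1-X^2)^m * EP n m * EP n m).natDegree ≤ 2*n := by
    have h1 : (EP n m).natDegree ≤ n - m := (natDegree_C_mul_le _ _).trans (dLP_natDegree_le n m)
    have h2 : ((1-(X:ℝ[X])^2)^m).natDegree ≤ m * 2 := by
      refine natDegree_pow_le.trans ?_
      refine Nat.mul_le_mul_left _ ?_
      refine (natDegree_sub_le _ _).trans ?_
      simp
    refine natDegree_mul_le.trans ?_
    have := natDegree_mul_le (p := (1-(X:ℝ[X])^2)^m) (q := EP n m)
    omega
  have hp : ∀ s ∈ Set.Icc (-1:ℝ) 1, 0 ≤ ((1-X^2)^m * EP n m * EP n m).eval s := by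
    intro s hs
    simp only [eval_mul, eval_pow, eval_sub, eval_one, eval_X]
    have : 0 ≤ 1 - s^2 := by nlinarith [hs.1, hs.2]
    rw [mul_assoc]
    exact mul_nonneg (by positivity) (mul_self_nonneg _)
  have := nikolskii (2*n) _ hd hp s hs
  rw [EP_norm h] at this
  simp only [eval_mul, eval_pow, eval_sub, eval_one, eval_X] at this
  push_cast at this
  have h0 : (0:ℝ) ≤ (2*n+1)^2 := by positivity
  nlinarith

lemma EP_sup_sin (n m : ℕ) (θ : ℝ) : |Real.sin θ ^ m * (EP n m).eval (Real.cos θ)| ≤ 2*n+1 := by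
  have := EP_sup n m (Real.cos θ) ⟨Real.neg_one_le_cos _, Real.cos_le_one _⟩
  rw [← Real.sin_sq, ← pow_mul, mul_comm 2 m, pow_mul, ← mul_pow] at this
  exact abs_le_of_sq_le_sq this (by positivity)

lemma int_cos (g : ℝ → ℝ) (hg : Continuous g) :
    ∫ θ in (0:ℝ)..Real.pi, g (Real.cos θ) * Real.sin θ = ∫ x in (-1:ℝ)..1, g x := by
  have h := intervalIntegral.integral_comp_mul_deriv (a := 0) (b := Real.pi) (f := Real.cos)
    (f' := fun x => - Real.sin x) (g := g) (fun x _ => Real.hasDerivAt_cos x)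
    (by fun_prop) hg
  simp only [Function.comp, Real.cos_zero, Real.cos_pi, mul_neg, intervalIntegral.integral_neg] at h
  rw [intervalIntegral.integral_symm (-1) 1] at h
  linarith

lemma EP_ortho_sin {n m : ℕ} (k : ℕ) (h : m ≤ n) :
    ∫ θ in (0:ℝ)..Real.pi, (Real.sin θ ^ m * (EP n m).eval (Real.cos θ)) *
      (Real.sin θ ^ m * (EP k m).eval (Real.cos θ)) * Real.sin θ = if n = k then 1 else 0 := by
  have e : II ((1-X^2)^m * EP n m * EP k m) = if n = k then 1 else 0 := by
    split_ifs with hk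
    · subst hk; exact EP_norm h
    · exact EP_orth m hk
  rw [← e, II, ← int_cos _ (Polynomial.continuous _)]
  apply intervalIntegral.integral_congr
  intro θ _
  simp only [eval_mul, eval_pow, eval_sub, eval_one, eval_X]
  rw [← Real.sin_sq]
  ring

lemma EP_span (m : ℕ) (Q : ℝ[X]) : ∃ (N : ℕ) (a : ℕ → ℝ), Q = ∑ j ∈ Finset.range N, C (a j) * EP (m+j) m := by
  refine ⟨Q.natDegree + 1, span_seq (fun j => EP (m+j) m) ?_ ?_ _ Q (Nat.lt_succ_self _)⟩
  · intro k
    refine ((natDegree_C_mul_le _ _).trans (dLP_natDegree_le _ _)).trans (by omega)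
  · intro k
    rw [EP, coeff_C_mul]
    exact mul_ne_zero (Real.sqrt_ne_zero'.2 (by positivity)) (dLP_coeff_ne k m)

end PartA2

section PartA3
open Polynomial

lemma sq_int_zero {K : ℝ → ℝ} (hK : ContinuousOn K (Set.Icc 0 Real.pi))
    (h : ∫ θ in (0:ℝ)..Real.pi, K θ * K θ ≤ 0) : ∀ θ ∈ Set.Icc 0 Real.pi, K θ = 0 := by
  intro θ hθ
  by_contra hne
  have := intervalIntegral.integral_pos (f := fun θ => K θ * K θ) Real.pi_pos (hK.mul hK)
    (fun x _ => mul_self_nonneg _) ⟨θ, hθ, mul_self_pos.2 hne⟩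
  linarith

lemma weier {K : ℝ → ℝ} (hK : Continuous K)
    (h : ∀ p : ℝ[X], ∫ θ in (0:ℝ)..Real.pi, K θ * p.eval (Real.cos θ) = 0) :
    ∀ θ ∈ Set.Icc 0 Real.pi, K θ = 0 := by
  apply sq_int_zero hK.continuousOn
  have hM : 0 ≤ ∫ θ in (0:ℝ)..Real.pi, |K θ| :=
    intervalIntegral.integral_nonneg Real.pi_pos.le (fun _ _ => abs_nonneg _)
  set M := ∫ θ in (0:ℝ)..Real.pi, |K θ| with hMdef
  have key : ∀ ε > 0, ∫ θ in (0:ℝ)..Real.pi, K θ * K θ ≤ ε * M := by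
    intro ε hε
    obtain ⟨p, hp⟩ := exists_polynomial_near_of_continuousOn (-1) 1 (fun x => K (Real.arccos x))
      (hK.comp Real.continuous_arccos).continuousOn ε hε
    have e1 : ∫ θ in (0:ℝ)..Real.pi, K θ * K θ
        = ∫ θ in (0:ℝ)..Real.pi, K θ * (K θ - p.eval (Real.cos θ)) := by
      have : ∀ θ, K θ * (K θ - p.eval (Real.cos θ)) = K θ * K θ - K θ * p.eval (Real.cos θ) := fun θ => by ring
      simp_rw [this]
      have hc : Continuous fun θ => p.eval (Real.cos θ) := p.continuous.comp Real.continuous_cos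
      have i1 : IntervalIntegrable (fun θ => K θ * K θ) volume 0 Real.pi := (hK.mul hK).intervalIntegrable _ _
      have i2 : IntervalIntegrable (fun θ => K θ * p.eval (Real.cos θ)) volume 0 Real.pi :=
        (hK.mul hc).intervalIntegrable _ _
      rw [intervalIntegral.integral_sub i1 i2, h p, sub_zero]
    rw [e1, hMdef, ← intervalIntegral.integral_const_mul]
    have hc : Continuous fun θ => p.eval (Real.cos θ) := p.continuous.comp Real.continuous_cos
    apply intervalIntegral.integral_mono_on Real.pi_pos.le
      ((hK.mul (hK.sub hc)).intervalIntegrable _ _)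
      ((continuous_const.mul hK.abs).intervalIntegrable _ _)
    intro θ hθ
    have h1 := hp (Real.cos θ) ⟨Real.neg_one_le_cos _, Real.cos_le_one _⟩
    simp only [Real.arccos_cos hθ.1 hθ.2] at h1
    rw [abs_sub_comm] at h1
    calc K θ * (K θ - p.eval (Real.cos θ)) ≤ |K θ * (K θ - p.eval (Real.cos θ))| := le_abs_self _
      _ = |K θ - p.eval (Real.cos θ)| * |K θ| := by rw [abs_mul, mul_comm]
      _ ≤ ε * |K θ| := mul_le_mul_of_nonneg_right h1.le (abs_nonneg _)
  by_contra hcon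
  push Not at hcon
  set Z := ∫ θ in (0:ℝ)..Real.pi, K θ * K θ
  have := key (Z / (2*(M+1))) (by positivity)
  have h2 : Z / (2*(M+1)) * M ≤ Z / 2 := by
    rw [div_mul_eq_mul_div, div_le_div_iff₀ (by positivity) (by positivity)]
    nlinarith
  linarith

lemma mode_bound (m : ℕ) {H : ℝ → ℝ} (hH : Continuous H)
    (hs : Summable fun n : ℕ => |∫ θ in (0:ℝ)..Real.pi, H θ * (EP n m).eval (Real.cos θ)| * (2*n+1)) :
    ∀ θ ∈ Set.Icc 0 Real.pi, |H θ| ≤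
      (∑' n : ℕ, |∫ θ in (0:ℝ)..Real.pi, H θ * (EP n m).eval (Real.cos θ)| * (2*n+1)) * Real.sin θ ^ (m+1) := by
  set c : ℕ → ℝ := fun n => ∫ θ in (0:ℝ)..Real.pi, H θ * (EP n m).eval (Real.cos θ) with hc
  set e : ℕ → ℝ → ℝ := fun n θ => Real.sin θ ^ m * (EP n m).eval (Real.cos θ) with he
  have hcp : ∀ n, Continuous fun θ => (EP n m).eval (Real.cos θ) :=
    fun n => (EP n m).continuous.comp Real.continuous_cos
  have hec : ∀ n, Continuous (e n) := fun n => (Real.continuous_sin.pow m).mul (hcp n)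
  have hb : ∀ n θ, ‖c n * e n θ‖ ≤ |c n| * (2*n+1) := by
    intro n θ
    rw [Real.norm_eq_abs, abs_mul]
    exact mul_le_mul_of_nonneg_left (EP_sup_sin n m θ) (abs_nonneg _)
  set v : ℝ → ℝ := fun θ => ∑' n, c n * e n θ with hv
  have hvc : Continuous v := continuous_tsum (fun n => continuous_const.mul (hec n)) hs hb
  have hvb : ∀ θ, |v θ| ≤ ∑' n, |c n| * (2*n+1) := by
    intro θ
    rw [← Real.norm_eq_abs]
    exact tsum_of_norm_bounded hs.hasSum (fun n => hb n θ)
  set K : ℝ → ℝ := fun θ => H θ - v θ * Real.sin θ ^ (m+1) with hKdef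
  have hKc : Continuous K := hH.sub (hvc.mul (Real.continuous_sin.pow _))
  have hK0 : ∀ k, m ≤ k → ∫ θ in (0:ℝ)..Real.pi, K θ * (EP k m).eval (Real.cos θ) = 0 := by
    intro k hk
    have e1 : ∀ θ, K θ * (EP k m).eval (Real.cos θ) =
        H θ * (EP k m).eval (Real.cos θ) - v θ * (e k θ * Real.sin θ) := by
      intro θ; simp only [hKdef, he]; ring
    simp_rw [e1]
    have i1 : IntervalIntegrable (fun θ => H θ * (EP k m).eval (Real.cos θ)) volume 0 Real.pi :=
      (hH.mul (hcp k)).intervalIntegrable _ _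
    have i2 : IntervalIntegrable (fun θ => v θ * (e k θ * Real.sin θ)) volume 0 Real.pi :=
      (hvc.mul ((hec k).mul Real.continuous_sin)).intervalIntegrable _ _
    rw [intervalIntegral.integral_sub i1 i2]
    have h2 : HasSum (fun n => ∫ θ in (0:ℝ)..Real.pi, c n * e n θ * (e k θ * Real.sin θ))
        (∫ θ in (0:ℝ)..Real.pi, v θ * (e k θ * Real.sin θ)) := by
      apply intervalIntegral.hasSum_integral_of_dominated_convergence
        (fun n θ => |c n| * (2*n+1) * (2*k+1))
      · intro n
        exact (((continuous_const.mul (hec n)).mul ((hec k).mul Real.continuous_sin))).aestronglyMeasurable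
      · intro n
        refine Filter.Eventually.of_forall fun θ _ => ?_
        rw [norm_mul]
        refine mul_le_mul (hb n θ) ?_ (norm_nonneg _) (by positivity)
        rw [Real.norm_eq_abs, abs_mul]
        exact (mul_le_of_le_one_right (abs_nonneg _) (Real.abs_sin_le_one _)).trans (EP_sup_sin k m θ)
      · exact Filter.Eventually.of_forall fun θ _ => hs.mul_right _
      · simp
      · refine Filter.Eventually.of_forall fun θ _ => ?_
        exact (Summable.of_norm_bounded hs (fun n => hb n θ)).hasSum.mul_right _
    have h3 : ∀ n, ∫ θ in (0:ℝ)..Real.pi, c n * e n θ * (e k θ * Real.sin θ) = if n = k then c k else 0 := by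
      intro n
      have := EP_ortho_sin n hk
      have e2 : ∀ θ, c n * e n θ * (e k θ * Real.sin θ) = c n * (e k θ * e n θ * Real.sin θ) := fun θ => by ring
      simp_rw [e2]
      rw [intervalIntegral.integral_const_mul]
      simp only [he]
      rw [this]
      by_cases h : n = k
      · subst h; simp
      · rw [if_neg h, if_neg (Ne.symm h), mul_zero]
    simp_rw [h3] at h2
    have h4 := h2.unique (hasSum_ite_eq k (c k))
    rw [h4]
    simp [hc]
  have hall : ∀ p : ℝ[X], ∫ θ in (0:ℝ)..Real.pi, K θ * p.eval (Real.cos θ) = 0 := by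
    intro p
    obtain ⟨N, a, ha⟩ := EP_span m p
    rw [ha]
    simp only [eval_finsetSum, eval_mul, eval_C, Finset.mul_sum]
    rw [intervalIntegral.integral_finsetSum]
    · apply Finset.sum_eq_zero
      intro j _
      have e2 : ∀ θ, K θ * (a j * (EP (m+j) m).eval (Real.cos θ)) = a j * (K θ * (EP (m+j) m).eval (Real.cos θ)) :=
        fun θ => by ring
      simp_rw [e2]
      rw [intervalIntegral.integral_const_mul, hK0 _ (by omega), mul_zero]
    · intro j _
      exact (hKc.mul (continuous_const.mul (hcp _))).intervalIntegrable _ _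
  intro θ hθ
  have := weier hKc hall θ hθ
  have h5 : H θ = v θ * Real.sin θ ^ (m+1) := by simp only [hKdef] at this; linarith
  rw [h5, abs_mul, abs_of_nonneg (pow_nonneg (Real.sin_nonneg_of_mem_Icc hθ) _)]
  exact mul_le_mul_of_nonneg_right (hvb θ) (pow_nonneg (Real.sin_nonneg_of_mem_Icc hθ) _)

end PartA3

section PartB
lemma SphSmooth.cd {u : SphereFun} (h : SphSmooth u) : ContDiff ℝ (⊤ : ℕ∞) (fun p : ℝ × ℝ => u p.1 p.2) := h

lemma SphSmooth.mk {u : SphereFun} (h : ContDiff ℝ (⊤ : ℕ∞) (fun p : ℝ × ℝ => u p.1 p.2)) : SphSmooth u := h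

lemma SphSmooth.cont {u : SphereFun} (h : SphSmooth u) : Continuous (fun p : ℝ × ℝ => u p.1 p.2) :=
  h.continuous

lemma SphSmooth.c1 {u : SphereFun} (h : SphSmooth u) (φ : ℝ) : Continuous (fun t => u t φ) := by
  have := h.cont; exact this.comp (by fun_prop : Continuous fun t : ℝ => (t, φ))

lemma SphSmooth.c2 {u : SphereFun} (h : SphSmooth u) (θ : ℝ) : Continuous (fun p => u θ p) := by
  have := h.cont; exact this.comp (by fun_prop : Continuous fun t : ℝ => (θ, t))

lemma SphSmooth.hT' {u : SphereFun} (h : SphSmooth u) (θ φ : ℝ) :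
    HasDerivAt (fun t => u t φ) (fderiv ℝ (fun p : ℝ × ℝ => u p.1 p.2) (θ, φ) (1, 0)) θ := by
  have h1 : HasFDerivAt (fun p : ℝ × ℝ => u p.1 p.2) _ (θ, φ) :=
    (h.cd.differentiable (by simp)).differentiableAt.hasFDerivAt
  have h2 : HasDerivAt (fun t : ℝ => (t, φ)) ((1 : ℝ), (0 : ℝ)) θ :=
    (hasDerivAt_id θ).prodMk (hasDerivAt_const θ φ)
  exact HasFDerivAt.comp_hasDerivAt (x := θ) (f := fun t : ℝ => (t, φ)) h1 h2

lemma SphSmooth.hP' {u : SphereFun} (h : SphSmooth u) (θ φ : ℝ) :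
    HasDerivAt (fun t => u θ t) (fderiv ℝ (fun p : ℝ × ℝ => u p.1 p.2) (θ, φ) (0, 1)) φ := by
  have h1 : HasFDerivAt (fun p : ℝ × ℝ => u p.1 p.2) _ (θ, φ) :=
    (h.cd.differentiable (by simp)).differentiableAt.hasFDerivAt
  have h2 : HasDerivAt (fun t : ℝ => (θ, t)) ((0 : ℝ), (1 : ℝ)) φ :=
    (hasDerivAt_const φ θ).prodMk (hasDerivAt_id φ)
  exact HasFDerivAt.comp_hasDerivAt (x := φ) (f := fun t : ℝ => (θ, t)) h1 h2

lemma SphSmooth.eT {u : SphereFun} (h : SphSmooth u) (θ φ : ℝ) :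
    dTheta u θ φ = fderiv ℝ (fun p : ℝ × ℝ => u p.1 p.2) (θ, φ) (1, 0) := (h.hT' θ φ).deriv

lemma SphSmooth.eP {u : SphereFun} (h : SphSmooth u) (θ φ : ℝ) :
    dPhi u θ φ = fderiv ℝ (fun p : ℝ × ℝ => u p.1 p.2) (θ, φ) (0, 1) := (h.hP' θ φ).deriv

lemma SphSmooth.hT {u : SphereFun} (h : SphSmooth u) (θ φ : ℝ) :
    HasDerivAt (fun t => u t φ) (dTheta u θ φ) θ := by rw [h.eT]; exact h.hT' θ φ

lemma SphSmooth.hP {u : SphereFun} (h : SphSmooth u) (θ φ : ℝ) :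
    HasDerivAt (fun t => u θ t) (dPhi u θ φ) φ := by rw [h.eP]; exact h.hP' θ φ

lemma SphSmooth.dT {u : SphereFun} (h : SphSmooth u) : SphSmooth (dTheta u) := by
  apply SphSmooth.mk
  simp_rw [h.eT]
  have h1 : ContDiff ℝ (⊤ : ℕ∞) (fderiv ℝ (fun p : ℝ × ℝ => u p.1 p.2)) := h.cd.fderiv_right (by simp)
  exact h1.clm_apply contDiff_const

lemma SphSmooth.dP {u : SphereFun} (h : SphSmooth u) : SphSmooth (dPhi u) := by
  apply SphSmooth.mk
  simp_rw [h.eP]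
  have h1 : ContDiff ℝ (⊤ : ℕ∞) (fderiv ℝ (fun p : ℝ × ℝ => u p.1 p.2)) := h.cd.fderiv_right (by simp)
  exact h1.clm_apply contDiff_const

lemma SphSmooth.comm {u : SphereFun} (h : SphSmooth u) (θ φ : ℝ) :
    dTheta (dPhi u) θ φ = dPhi (dTheta u) θ φ := by
  have h1 : ContDiff ℝ (⊤ : ℕ∞) (fderiv ℝ (fun p : ℝ × ℝ => u p.1 p.2)) := h.cd.fderiv_right (by simp)
  have hd : DifferentiableAt ℝ (fderiv ℝ (fun p : ℝ × ℝ => u p.1 p.2)) (θ, φ) :=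
    (h1.differentiable (by simp)).differentiableAt
  have key : IsSymmSndFDerivAt ℝ (fun p : ℝ × ℝ => u p.1 p.2) (θ, φ) :=
    (h.cd.contDiffAt).isSymmSndFDerivAt (by simp only [minSmoothness_of_isRCLikeNormedField]; exact WithTop.coe_le_coe.2 (le_top : (2:ℕ∞) ≤ ⊤))
  rw [h.dP.eT, h.dT.eP]
  simp_rw [h.eT, h.eP]
  rw [fderiv_clm_apply hd (by fun_prop), fderiv_clm_apply hd (by fun_prop)]
  simpa using key.eq (1,0) (0,1)

lemma SphSmooth.add {u v : SphereFun} (h : SphSmooth u) (k : SphSmooth v) : SphSmooth (fun θ φ => u θ φ + v θ φ) :=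
  ContDiff.add h.cd k.cd
lemma SphSmooth.sub {u v : SphereFun} (h : SphSmooth u) (k : SphSmooth v) : SphSmooth (fun θ φ => u θ φ - v θ φ) :=
  ContDiff.sub h.cd k.cd
lemma SphSmooth.mul {u v : SphereFun} (h : SphSmooth u) (k : SphSmooth v) : SphSmooth (fun θ φ => u θ φ * v θ φ) :=
  ContDiff.mul h.cd k.cd
lemma SphSmooth.th {g : ℝ → ℝ} (h : ContDiff ℝ (⊤ : ℕ∞) g) : SphSmooth (fun θ _ => g θ) :=
  h.comp contDiff_fst
lemma SphSmooth.ph {g : ℝ → ℝ} (h : ContDiff ℝ (⊤ : ℕ∞) g) : SphSmooth (fun _ φ => g φ) :=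
  h.comp contDiff_snd

lemma PeriodicPhi.dT {u : SphereFun} (h : PeriodicPhi u) : PeriodicPhi (dTheta u) := by
  intro θ φ; unfold dTheta; simp_rw [h _ φ]
lemma PeriodicPhi.dP {u : SphereFun} (h : PeriodicPhi u) : PeriodicPhi (dPhi u) := by
  intro θ φ
  unfold dPhi
  rw [← deriv_comp_add_const]
  simp_rw [h θ]

/-- integral over longitude -/
def avg (u : SphereFun) (θ : ℝ) : ℝ := ∫ φ in (0:ℝ)..(2*Real.pi), u θ φ

lemma avg_cont {u : SphereFun} (h : SphSmooth u) : Continuous (avg u) :=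
  intervalIntegral.continuous_parametric_intervalIntegral_of_continuous' h.cont 0 (2*Real.pi)

lemma avg_ii {u : SphereFun} (h : SphSmooth u) (θ a b : ℝ) : IntervalIntegrable (fun φ => u θ φ) volume a b :=
  (h.c2 θ).intervalIntegrable _ _

lemma avg_deriv {u : SphereFun} (h : SphSmooth u) (θ : ℝ) : HasDerivAt (avg u) (avg (dTheta u) θ) θ := by
  have hc := h.dT.cont
  obtain ⟨M, hM⟩ := ((isCompact_Icc (a := θ - 1) (b := θ+1)).prod
    (isCompact_Icc (a := 0) (b := 2*Real.pi))).exists_bound_of_continuousOn hc.continuousOn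
  refine (intervalIntegral.hasDerivAt_integral_of_dominated_loc_of_deriv_le
    (F := fun t φ => u t φ) (F' := fun t φ => dTheta u t φ) (bound := fun _ => M)
    (s := Set.Icc (θ-1) (θ+1)) (Icc_mem_nhds (by linarith) (by linarith)) ?_ ?_ ?_ ?_ ?_ ?_).2
  · exact Filter.Eventually.of_forall fun t => (h.c2 t).aestronglyMeasurable
  · exact avg_ii h _ _ _
  · exact (h.dT.c2 θ).aestronglyMeasurable
  · refine Filter.Eventually.of_forall fun φ hφ t ht => hM (t, φ) ⟨ht, ?_⟩
    rw [Set.uIoc_of_le (by positivity)] at hφ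
    exact ⟨hφ.1.le, hφ.2⟩
  · simp
  · exact Filter.Eventually.of_forall fun φ _ t _ => h.hT t φ

lemma avg_dPhi {u : SphereFun} (h : SphSmooth u) (p : PeriodicPhi u) (θ : ℝ) : avg (dPhi u) θ = 0 := by
  unfold avg
  rw [intervalIntegral.integral_eq_sub_of_hasDerivAt (fun x _ => h.hP θ x) (avg_ii h.dP _ _ _)]
  have := p θ 0
  rw [zero_add] at this; rw [this, sub_self]

lemma avg_ibp {u v : SphereFun} (hu : SphSmooth u) (hv : SphSmooth v) (pu : PeriodicPhi u)
    (pv : PeriodicPhi v) (θ : ℝ) :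
    avg (fun θ φ => u θ φ * dPhi v θ φ) θ = - avg (fun θ φ => dPhi u θ φ * v θ φ) θ := by
  have h1 := avg_dPhi (hu.mul hv) (fun θ φ => by simp [pu θ φ, pv θ φ]) θ
  have h2 : ∀ φ, dPhi (fun θ φ => u θ φ * v θ φ) θ φ = dPhi u θ φ * v θ φ + u θ φ * dPhi v θ φ :=
    fun φ => ((hu.hP θ φ).mul (hv.hP θ φ)).deriv
  unfold avg at *
  simp_rw [h2] at h1
  rw [intervalIntegral.integral_add (avg_ii (hu.dP.mul hv) _ _ _) (avg_ii (hu.mul hv.dP) _ _ _)] at h1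
  linarith

lemma sin_lower {θ : ℝ} (h0 : 0 ≤ θ) (h1 : θ ≤ Real.pi / 2) : θ ≤ 2 * Real.sin θ := by
  have := Real.mul_le_sin h0 h1
  have h3 : (1:ℝ)/2 ≤ 2 / Real.pi := by
    rw [div_le_div_iff₀ (by norm_num) Real.pi_pos]; linarith [Real.pi_le_four]
  nlinarith

lemma vanish_bound {u : SphereFun} (h : SphSmooth u) (h0 : ∀ φ, u 0 φ = 0) (h1 : ∀ φ, u Real.pi φ = 0) :
    ∃ C, 0 ≤ C ∧ ∀ θ ∈ Set.Icc 0 Real.pi, ∀ φ ∈ Set.Icc 0 (2*Real.pi), |u θ φ| ≤ C * Real.sin θ := by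
  obtain ⟨M, hM⟩ := ((isCompact_Icc (a := 0) (b := Real.pi)).prod
    (isCompact_Icc (a := 0) (b := 2*Real.pi))).exists_bound_of_continuousOn h.dT.cont.continuousOn
  have hM0 : 0 ≤ M := (norm_nonneg _).trans (hM (0,0) ⟨⟨le_rfl, Real.pi_pos.le⟩, ⟨le_rfl, by positivity⟩⟩)
  have lip : ∀ φ ∈ Set.Icc 0 (2*Real.pi), ∀ x ∈ Set.Icc 0 Real.pi, ∀ y ∈ Set.Icc 0 Real.pi,
      ‖u y φ - u x φ‖ ≤ M * ‖y - x‖ := by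
    intro φ hφ x hx y hy
    exact (convex_Icc 0 Real.pi).norm_image_sub_le_of_norm_hasDerivWithin_le
      (f := fun t => u t φ) (f' := fun t => dTheta u t φ)
      (fun t ht => (h.hT t φ).hasDerivWithinAt) (fun t ht => hM (t, φ) ⟨ht, hφ⟩) hx hy
  refine ⟨2*M, by positivity, fun θ hθ φ hφ => ?_⟩
  have hs := Real.sin_nonneg_of_mem_Icc hθ
  rcases le_total θ (Real.pi/2) with hle | hle
  · have := lip φ hφ 0 ⟨le_rfl, Real.pi_pos.le⟩ θ hθ
    rw [h0, sub_zero, sub_zero, Real.norm_eq_abs, Real.norm_eq_abs, abs_of_nonneg hθ.1] at this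
    nlinarith [sin_lower hθ.1 hle]
  · have := lip φ hφ Real.pi ⟨Real.pi_pos.le, le_rfl⟩ θ hθ
    rw [h1, sub_zero, Real.norm_eq_abs, Real.norm_eq_abs, abs_sub_comm θ, abs_of_nonneg (sub_nonneg.2 hθ.2)] at this
    have h2 := sin_lower (θ := Real.pi - θ) (by linarith [hθ.2]) (by linarith)
    rw [Real.sin_pi_sub] at h2
    nlinarith

lemma bdd_ii {g : ℝ → ℝ} {a b C : ℝ} (hab : a ≤ b) (hg : ContinuousOn g (Set.Ioo a b))
    (hb : ∀ x ∈ Set.Ioo a b, |g x| ≤ C) : IntervalIntegrable g volume a b := by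
  rw [intervalIntegrable_iff_integrableOn_Ioo_of_le hab]
  exact IntegrableOn.of_bound (by simp) (hg.aestronglyMeasurable measurableSet_Ioo) C
    ((ae_restrict_iff' measurableSet_Ioo).2 (Filter.Eventually.of_forall hb))

end PartB

section PartF
def mC (h : ℝ → ℝ) (n : ℤ) : ℝ := ∫ x in (0:ℝ)..(2*Real.pi), h x * Real.cos (n * x)
def mS (h : ℝ → ℝ) (n : ℤ) : ℝ := ∫ x in (0:ℝ)..(2*Real.pi), h x * Real.sin (n * x)

lemma fc_eq {h : ℝ → ℝ} (hc : Continuous h) (n : ℤ) :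
    ∫ x in (0:ℝ)..(2*Real.pi), Complex.exp (-(Complex.I * n * x)) * (h x : ℂ) =
      (mC h n : ℂ) - Complex.I * (mS h n : ℂ) := by
  have e1 : ∀ x : ℝ, Complex.exp (-(Complex.I * n * x)) * (h x : ℂ)
      = ((h x * Real.cos (n*x) : ℝ) : ℂ) - Complex.I * ((h x * Real.sin (n * x) : ℝ) : ℂ) := by
    intro x
    have : -(Complex.I * n * x) = ((-(n * x) : ℝ) : ℂ) * Complex.I := by push_cast; ring
    rw [this, Complex.exp_mul_I]
    rw [← Complex.ofReal_cos, ← Complex.ofReal_sin, Real.cos_neg, Real.sin_neg]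
    push_cast; ring
  simp_rw [e1]
  have i1 : IntervalIntegrable (fun x : ℝ => ((h x * Real.cos (n*x) : ℝ) : ℂ)) volume 0 (2*Real.pi) :=
    Continuous.intervalIntegrable (by fun_prop) _ _
  have i2 : IntervalIntegrable (fun x : ℝ => Complex.I * ((h x * Real.sin (n*x) : ℝ) : ℂ)) volume 0 (2*Real.pi) :=
    Continuous.intervalIntegrable (by fun_prop) _ _
  rw [intervalIntegral.integral_sub i1 i2, intervalIntegral.integral_const_mul,
    intervalIntegral.integral_ofReal, intervalIntegral.integral_ofReal]
  rfl

lemma four_e (n : ℤ) (x : ℝ) : fourier (-n) (x : AddCircle (2*Real.pi)) = Complex.exp (-(Complex.I * n * x)) := by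
  rw [fourier_coe_apply]
  congr 1
  have : (Real.pi : ℂ) ≠ 0 := by exact_mod_cast Real.pi_ne_zero
  push_cast
  field_simp

lemma four_e' {T : ℝ} (hT : T = 2*Real.pi) (n : ℤ) (x : ℝ) :
    fourier (-n) (x : AddCircle T) = Complex.exp (-(Complex.I * n * x)) := by
  subst hT; exact four_e n x

lemma parseval {h : ℝ → ℝ} (hc : Continuous h) :
    HasSum (fun n : ℤ => mC h n ^ 2 + mS h n ^ 2) (2 * Real.pi * ∫ x in (0:ℝ)..(2*Real.pi), h x ^ 2) := by
  have hL : MemLp (fun x => (h x : ℂ)) 2 (volume.restrict (Set.Ioc 0 (2*Real.pi))) := by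
    have hcc : Continuous (fun x => (h x : ℂ)) := by fun_prop
    obtain ⟨M, hM⟩ := (isCompact_Icc (a := 0) (b := 2*Real.pi)).exists_bound_of_continuousOn hcc.continuousOn
    exact MemLp.of_bound hcc.aestronglyMeasurable M ((ae_restrict_iff' measurableSet_Ioc).2
      (Filter.Eventually.of_forall fun x hx => hM x ⟨hx.1.le, hx.2⟩))
  have h1 := hasSum_sq_fourierCoeffOn Real.two_pi_pos hL
  have e : ∀ n : ℤ, ‖fourierCoeffOn Real.two_pi_pos (fun x => (h x : ℂ)) n‖^2 =
      (1/(2*Real.pi))^2 * (mC h n ^ 2 + mS h n ^ 2) := by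
    intro n
    rw [fourierCoeffOn_eq_integral]
    simp only [four_e' (sub_zero (2*Real.pi)), smul_eq_mul]
    rw [sub_zero, fc_eq hc, norm_smul, mul_pow, ← Complex.normSq_eq_norm_sq, Complex.normSq_apply]
    simp [abs_of_pos Real.pi_pos]
    ring
  simp_rw [e] at h1
  have h2 := h1.mul_left ((2*Real.pi)^2)
  have hp := Real.pi_ne_zero
  have e3 : ∀ n : ℤ, (2*Real.pi)^2 * ((1/(2*Real.pi))^2 * (mC h n ^ 2 + mS h n ^ 2)) = mC h n ^ 2 + mS h n ^ 2 :=
    fun n => by field_simp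
  have e4 : (2*Real.pi)^2 * ((2*Real.pi - 0)⁻¹ • ∫ (x : ℝ) in 0..2*Real.pi, ‖(h x : ℂ)‖ ^ 2) =
      2 * Real.pi * ∫ x in (0:ℝ)..(2*Real.pi), h x ^ 2 := by
    simp only [Complex.norm_real, Real.norm_eq_abs, sq_abs, smul_eq_mul, sub_zero]
    field_simp
  simp_rw [e3] at h2
  rwa [e4] at h2

lemma mode_sup {h : ℝ → ℝ} (hc : Continuous h) (hp : ∀ x, h (x + 2*Real.pi) = h x) (b : ℤ → ℝ)
    (hb : Summable b) (h1 : ∀ m : ℕ, |mC h m| ≤ b m) (h2 : ∀ m : ℕ, 0 < m → |mS h m| ≤ b (-m)) :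
    ∀ x, |h x| ≤ ∑' m, b m := by
  have hF : Fact (0 < 2*Real.pi) := ⟨Real.two_pi_pos⟩
  have hper : Function.Periodic (fun x => (h x : ℂ)) (2*Real.pi) := fun x => by simp [hp x]
  let f : C(AddCircle (2*Real.pi), ℂ) := ⟨hper.lift, (by fun_prop : Continuous fun x => (h x : ℂ)).quotient_liftOn' _⟩
  have hfx : ∀ x : ℝ, f (x : AddCircle (2*Real.pi)) = (h x : ℂ) := fun x => hper.lift_coe x
  have hco : ∀ n : ℤ, ‖fourierCoeff f n‖ ≤ 1/(2*Real.pi) * (|mC h n| + |mS h n|) := by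
    intro n
    rw [fourierCoeff_eq_intervalIntegral f n 0]
    simp only [zero_add, four_e, smul_eq_mul, hfx]
    rw [fc_eq hc, norm_smul]
    have : ‖(1/(2*Real.pi) : ℝ)‖ = 1/(2*Real.pi) := by
      rw [Real.norm_eq_abs, abs_of_pos (by positivity)]
    rw [this]
    gcongr
    refine (norm_sub_le _ _).trans ?_
    simp
  have hcs : ∀ n : ℤ, |mC h n| + |mS h n| ≤ b n + b (-n) := by
    intro n
    have hb0 : 0 ≤ b 0 := (abs_nonneg _).trans (h1 0)
    have cneg : ∀ n, mC h (-n) = mC h n := fun n => by unfold mC; simp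
    have sneg : ∀ n, mS h (-n) = - mS h n := fun n => by unfold mS; simp
    rcases lt_trichotomy n 0 with hn | hn | hn
    · obtain ⟨k, rfl⟩ : ∃ k : ℕ, n = -(k:ℤ) := ⟨n.natAbs, by omega⟩
      rw [cneg, sneg, abs_neg, neg_neg]
      linarith [h1 k, h2 k (by omega)]
    · subst hn
      have : mS h 0 = 0 := by simp [mS]
      rw [this]; have := h1 0; simp at this ⊢; linarith
    · obtain ⟨k, rfl⟩ : ∃ k : ℕ, n = (k:ℤ) := ⟨n.natAbs, by omega⟩
      linarith [h1 k, h2 k (by omega)]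
  have hbn : Summable fun n => b (-n) := (Equiv.neg ℤ).summable_iff.2 hb
  have hB : ∀ n, ‖fourierCoeff f n‖ ≤ 1/(2*Real.pi) * (b n + b (-n)) := fun n =>
    (hco n).trans (mul_le_mul_of_nonneg_left (hcs n) (by positivity))
  have hsB : Summable fun n => 1/(2*Real.pi) * (b n + b (-n)) := (hb.add hbn).mul_left _
  have hsum : Summable (fourierCoeff f) := Summable.of_norm_bounded hsB hB
  have hT : ∑' n, 1/(2*Real.pi) * (b n + b (-n)) = 1 / Real.pi * ∑' n, b n := by
    rw [tsum_mul_left, hb.tsum_add hbn]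
    rw [show ∑' n, b (-n) = ∑' n, b n from (Equiv.neg ℤ).tsum_eq b]
    field_simp; ring
  have hnn : 0 ≤ ∑' n, b n := tsum_nonneg fun n => by
    rcases le_or_gt 0 n with hn | hn
    · obtain ⟨k, rfl⟩ : ∃ k : ℕ, n = (k:ℤ) := ⟨n.natAbs, by omega⟩
      exact (abs_nonneg _).trans (h1 k)
    · obtain ⟨k, rfl⟩ : ∃ k : ℕ, n = -(k:ℤ) := ⟨n.natAbs, by omega⟩
      exact (abs_nonneg _).trans (h2 k (by omega))
  intro x
  have h3 := has_pointwise_sum_fourier_series_of_summable hsum (x : AddCircle (2*Real.pi))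
  rw [hfx] at h3
  have h4 : ‖(h x : ℂ)‖ ≤ ∑' n, 1/(2*Real.pi) * (b n + b (-n)) := by
    rw [← h3.tsum_eq]
    refine tsum_of_norm_bounded hsB.hasSum fun n => ?_
    rw [norm_smul]
    have : ‖fourier n (x : AddCircle (2*Real.pi))‖ = 1 := Circle.norm_coe _
    rw [this, mul_one]; exact hB n
  rw [Complex.norm_real, Real.norm_eq_abs, hT] at h4
  refine h4.trans (mul_le_of_le_one_left hnn ?_)
  rw [div_le_one Real.pi_pos]; linarith [Real.pi_gt_three]


lemma mC_deriv {h h' : ℝ → ℝ} (hd : ∀ x, HasDerivAt h (h' x) x) (hc' : Continuous h')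
    (hp : h (2*Real.pi) = h 0) (n : ℤ) : mC h' n = n * mS h n := by
  have hc : Continuous h := continuous_iff_continuousAt.2 fun x => (hd x).continuousAt
  have e : ∀ x, HasDerivAt (fun x => h x * Real.cos (n*x)) (h' x * Real.cos (n*x) - n * (h x * Real.sin (n * x))) x := by
    intro x
    have h1 : HasDerivAt (fun x : ℝ => (n:ℝ) * x) n x := by simpa using (hasDerivAt_id x).const_mul (n:ℝ)
    exact ((hd x).mul h1.cos).congr_deriv (by ring)
  have i1 : IntervalIntegrable (fun x => h' x * Real.cos (n*x)) volume 0 (2*Real.pi) :=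
    Continuous.intervalIntegrable (by fun_prop) _ _
  have i2 : IntervalIntegrable (fun x => n * (h x * Real.sin (n*x))) volume 0 (2*Real.pi) :=
    Continuous.intervalIntegrable (by fun_prop) _ _
  have := intervalIntegral.integral_eq_sub_of_hasDerivAt (fun x _ => e x) (i1.sub i2)
  rw [intervalIntegral.integral_sub i1 i2, intervalIntegral.integral_const_mul] at this
  rw [hp, Real.cos_int_mul_two_pi] at this
  simp at this
  unfold mC mS; linarith

lemma mS_deriv {h h' : ℝ → ℝ} (hd : ∀ x, HasDerivAt h (h' x) x) (hc' : Continuous h')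
    (hp : h (2*Real.pi) = h 0) (n : ℤ) : mS h' n = -(n * mC h n) := by
  have hc : Continuous h := continuous_iff_continuousAt.2 fun x => (hd x).continuousAt
  have e : ∀ x, HasDerivAt (fun x => h x * Real.sin (n*x)) (h' x * Real.sin (n*x) + n * (h x * Real.cos (n * x))) x := by
    intro x
    have h1 : HasDerivAt (fun x : ℝ => (n:ℝ) * x) n x := by simpa using (hasDerivAt_id x).const_mul (n:ℝ)
    exact ((hd x).mul h1.sin).congr_deriv (by ring)
  have i1 : IntervalIntegrable (fun x => h' x * Real.sin (n*x)) volume 0 (2*Real.pi) :=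
    Continuous.intervalIntegrable (by fun_prop) _ _
  have i2 : IntervalIntegrable (fun x => n * (h x * Real.cos (n*x))) volume 0 (2*Real.pi) :=
    Continuous.intervalIntegrable (by fun_prop) _ _
  have := intervalIntegral.integral_eq_sub_of_hasDerivAt (fun x _ => e x) (i1.add i2)
  rw [intervalIntegral.integral_add i1 i2, intervalIntegral.integral_const_mul] at this
  have hs0 : Real.sin ((n:ℝ) * (2*Real.pi)) = 0 := by
    have := Real.sin_int_mul_pi (2*n)
    push_cast at this
    rw [← this]; congr 1; ring
  rw [hs0] at this
  simp at this
  unfold mC mS; linarith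

lemma wirtinger {h h' : ℝ → ℝ} (hd : ∀ x, HasDerivAt h (h' x) x) (hc' : Continuous h')
    (hp : h (2*Real.pi) = h 0) (h0 : ∫ x in (0:ℝ)..(2*Real.pi), h x = 0) :
    ∫ x in (0:ℝ)..(2*Real.pi), h x ^ 2 ≤ ∫ x in (0:ℝ)..(2*Real.pi), h' x ^ 2 := by
  have hc : Continuous h := continuous_iff_continuousAt.2 fun x => (hd x).continuousAt
  have p1 := parseval hc
  have p2 := parseval hc'
  have := hasSum_le (fun n => ?_) p1 p2
  · exact le_of_mul_le_mul_left this Real.two_pi_pos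
  · rw [mC_deriv hd hc' hp, mS_deriv hd hc' hp]
    by_cases hn : n = 0
    · subst hn; simp [mC, mS, h0]
    · have h1 : (1:ℝ) ≤ (n:ℝ)^2 := by exact_mod_cast (by have := sq_nonneg n; have : n^2 ≠ 0 := pow_ne_zero 2 hn; omega : (1:ℤ) ≤ n^2)
      nlinarith [sq_nonneg (mC h n), sq_nonneg (mS h n)]

lemma wirtinger2 {h h' : ℝ → ℝ} (hd : ∀ x, HasDerivAt h (h' x) x) (hc' : Continuous h')
    (hp : h (2*Real.pi) = h 0) (h0 : ∫ x in (0:ℝ)..(2*Real.pi), h x = 0) :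
    4 * (∫ x in (0:ℝ)..(2*Real.pi), h x ^ 2) - 3 / Real.pi * (mC h 1 ^ 2 + mS h 1 ^ 2)
      ≤ ∫ x in (0:ℝ)..(2*Real.pi), h' x ^ 2 := by
  have hc : Continuous h := continuous_iff_continuousAt.2 fun x => (hd x).continuousAt
  have p1 := (parseval hc).mul_left 4
  have p2 := parseval hc'
  set y := mC h 1 ^ 2 + mS h 1 ^ 2 with hy
  have q1 := hasSum_ite_eq (1:ℤ) (3*y)
  have q2 := hasSum_ite_eq (-1:ℤ) (3*y)
  have := hasSum_le (fun n => ?_) (p1.sub (q1.add q2)) p2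
  · have hpi := Real.pi_pos
    have e : 3 / Real.pi * y = (6 * y) / (2*Real.pi) := by field_simp; ring
    rw [e, sub_le_iff_le_add]
    rw [← mul_le_mul_iff_right₀ Real.two_pi_pos, mul_add, mul_div_cancel₀ _ (by positivity)]
    linarith
  · rw [mC_deriv hd hc' hp, mS_deriv hd hc' hp]
    have cneg : ∀ n, mC h (-n) = mC h n := fun n => by unfold mC; simp
    have sneg : ∀ n, mS h (-n) = - mS h n := fun n => by unfold mS; simp
    by_cases hn : n = 0
    · subst hn; simp [mC, mS, h0]
    by_cases hn1 : n = 1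
    · subst hn1; simp; linarith
    by_cases hn2 : n = -1
    · subst hn2; simp [cneg, sneg]; linarith
    · rw [if_neg hn1, if_neg hn2]
      have h1 : (4:ℝ) ≤ (n:ℝ)^2 := by
        have : (4:ℤ) ≤ n^2 := by
          rcases (by omega : n ≤ -2 ∨ 2 ≤ n) with h | h <;> nlinarith
        exact_mod_cast this
      nlinarith [sq_nonneg (mC h n), sq_nonneg (mS h n)]

lemma bessel1 {h : ℝ → ℝ} (hc : Continuous h) : (mC h 1 ^ 2 + mS h 1 ^ 2) / Real.pi ≤ ∫ x in (0:ℝ)..(2*Real.pi), h x ^ 2 := by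
  have p1 := parseval hc
  have := sum_le_hasSum {1, -1} (fun n _ => by positivity) p1
  rw [Finset.sum_pair (by norm_num)] at this
  have cneg : mC h (-1) = mC h 1 := by unfold mC; simp
  have sneg : mS h (-1) = - mS h 1 := by unfold mS; simp
  rw [cneg, sneg] at this
  rw [div_le_iff₀ Real.pi_pos]
  nlinarith

end PartF

section PartC1
def W2 (Ψ : SphereFun) : SphereFun := fun θ φ =>
  Real.sin θ * Real.cos θ * dTheta Ψ θ φ + Real.sin θ ^ 2 * dTheta (dTheta Ψ) θ φ + dPhi (dPhi Ψ) θ φ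

def WW (β : ℝ) (Ψ : SphereFun) : SphereFun := fun θ φ =>
  W2 Ψ θ φ + 2 * β * Real.cos θ * Real.sin θ ^ 2

lemma W2_sm {Ψ : SphereFun} (h : SphSmooth Ψ) : SphSmooth (W2 Ψ) := by
  unfold W2
  have h1 := (SphSmooth.th (g := fun θ => Real.sin θ * Real.cos θ) (by fun_prop)).mul h.dT
  have h2 := (SphSmooth.th (g := fun θ => Real.sin θ ^ 2) (by fun_prop)).mul h.dT.dT
  exact (h1.add h2).add h.dP.dP

lemma WW_sm (β : ℝ) {Ψ : SphereFun} (h : SphSmooth Ψ) : SphSmooth (WW β Ψ) :=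
  (W2_sm h).add (SphSmooth.th (g := fun θ => 2 * β * Real.cos θ * Real.sin θ ^ 2) (by fun_prop))

lemma W2_per {Ψ : SphereFun} (h : PeriodicPhi Ψ) : PeriodicPhi (W2 Ψ) := by
  intro θ φ; unfold W2; rw [h.dT, h.dT.dT, h.dP.dP]

lemma WW_per (β : ℝ) {Ψ : SphereFun} (h : PeriodicPhi Ψ) : PeriodicPhi (WW β Ψ) := by
  intro θ φ; unfold WW; rw [W2_per h]

lemma lapS_eq {Ψ : SphereFun} (h : SphSmooth Ψ) {θ : ℝ} (hθ : θ ∈ Set.Ioo 0 Real.pi) (φ : ℝ) :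
    lapS Ψ θ φ = W2 Ψ θ φ / Real.sin θ ^ 2 := by
  have hs : 0 < Real.sin θ := Real.sin_pos_of_mem_Ioo hθ
  unfold lapS W2
  have e : deriv (fun t => Real.sin t * dTheta Ψ t φ) θ = Real.cos θ * dTheta Ψ θ φ + Real.sin θ * dTheta (dTheta Ψ) θ φ :=
    ((Real.hasDerivAt_sin θ).mul (h.dT.hT θ φ)).deriv
  rw [e]
  field_simp

lemma legP1 (s : ℝ) : legP 1 s = s := by
  unfold legP
  rw [iteratedDeriv_one]
  simp

lemma w_eq (α : ℝ) {Ψ : SphereFun} (h : SphSmooth Ψ) {θ : ℝ} (hθ : θ ∈ Set.Ioo 0 Real.pi) (φ : ℝ) :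
    lapS Ψ θ φ + 2*α*Ynm 1 0 θ φ = WW (α * Real.sqrt (3/(4*Real.pi))) Ψ θ φ / Real.sin θ ^ 2 := by
  have hs : 0 < Real.sin θ := Real.sin_pos_of_mem_Ioo hθ
  rw [lapS_eq h hθ]
  unfold WW Ynm
  rw [if_pos rfl, legP1]
  rw [show (2 * ((1:ℕ):ℝ) + 1) = 3 by norm_num]
  field_simp

lemma rpow_sin {θ : ℝ} (hs : 0 ≤ Real.sin θ) (m : ℕ) :
    (1 - Real.cos θ ^ 2) ^ ((m:ℝ)/2) = Real.sin θ ^ m := by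
  rw [← Real.sin_sq, ← Real.rpow_natCast, ← Real.rpow_mul hs, ← Real.rpow_natCast]
  congr 1; push_cast; ring

lemma sqrt_aux (X : ℝ) : Real.sqrt 2 * Real.sqrt (X / (4*Real.pi)) = 1 / Real.sqrt Real.pi * Real.sqrt (X/2) := by
  have := Real.pi_pos
  rw [← Real.sqrt_mul (by norm_num), one_div, ← Real.sqrt_inv, ← Real.sqrt_mul (by positivity)]
  congr 1; field_simp; ring

lemma EP_eval (n m : ℕ) (s : ℝ) : (EP n m).eval s =
    Real.sqrt ((2*(n:ℝ)+1)/2 * ((Nat.factorial (n - m) : ℝ) / (Nat.factorial (n + m) : ℝ))) * iteratedDeriv m (legP n) s := by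
  rw [iter_legP]
  simp [EP]

lemma Y_aux (n m : ℕ) {θ : ℝ} (hs : 0 ≤ Real.sin θ) :
    (-1 : ℝ)^m * Real.sqrt 2 *
      Real.sqrt ((2*(n:ℝ)+1)/(4*Real.pi) *
        ((Nat.factorial (n - m) : ℝ) / (Nat.factorial (n + m) : ℝ))) *
      assocLegP n m (Real.cos θ) = 1 / Real.sqrt Real.pi * (Real.sin θ ^ m * (EP n m).eval (Real.cos θ)) := by
  unfold assocLegP
  rw [rpow_sin hs, EP_eval]
  have h1 : ((-1:ℝ)^m) * ((-1)^m) = 1 := by rw [← mul_pow]; norm_num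
  have h2 := sqrt_aux ((2*(n:ℝ)+1) * ((Nat.factorial (n - m) : ℝ) / (Nat.factorial (n + m) : ℝ)))
  rw [show (2*(n:ℝ)+1) * ((Nat.factorial (n - m) : ℝ) / (Nat.factorial (n + m) : ℝ)) / (4*Real.pi) =
    (2*(n:ℝ)+1)/(4*Real.pi) * ((Nat.factorial (n - m) : ℝ) / (Nat.factorial (n + m) : ℝ)) by ring,
    show (2*(n:ℝ)+1) * ((Nat.factorial (n - m) : ℝ) / (Nat.factorial (n + m) : ℝ)) / 2 =
    (2*(n:ℝ)+1)/2 * ((Nat.factorial (n - m) : ℝ) / (Nat.factorial (n + m) : ℝ)) by ring] at h2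
  linear_combination (norm := ring_nf) (Real.sin θ ^ m * iteratedDeriv m (legP n) (Real.cos θ)) * h2 +
    Real.sqrt 2 * Real.sqrt ((2*(n:ℝ)+1)/(4*Real.pi) *
        ((Nat.factorial (n - m) : ℝ) / (Nat.factorial (n + m) : ℝ))) * Real.sin θ ^ m * iteratedDeriv m (legP n) (Real.cos θ) * h1

lemma Y_pos (n m : ℕ) (hm : 0 < m) {θ : ℝ} (hs : 0 ≤ Real.sin θ) (φ : ℝ) :
    Ynm n (m:ℤ) θ φ = 1 / Real.sqrt Real.pi * (Real.sin θ ^ m * (EP n m).eval (Real.cos θ)) * Real.cos (m * φ) := by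
  unfold Ynm
  rw [if_neg (by omega), if_pos (by omega), Int.natAbs_natCast, Y_aux n m hs]

lemma Y_neg (n m : ℕ) (hm : 0 < m) {θ : ℝ} (hs : 0 ≤ Real.sin θ) (φ : ℝ) :
    Ynm n (-(m:ℤ)) θ φ = 1 / Real.sqrt Real.pi * (Real.sin θ ^ m * (EP n m).eval (Real.cos θ)) * Real.sin (m * φ) := by
  unfold Ynm
  rw [if_neg (by omega), if_neg (by omega), Int.natAbs_neg, Int.natAbs_natCast, Y_aux n m hs]

lemma Y_zero (n : ℕ) (θ φ : ℝ) :
    Ynm n 0 θ φ = 1 / Real.sqrt (2*Real.pi) * (EP n 0).eval (Real.cos θ) := by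
  unfold Ynm
  rw [if_pos rfl, EP_eval, iteratedDeriv_zero]
  have hf : (Nat.factorial n : ℝ) ≠ 0 := by positivity
  simp only [Nat.sub_zero, Nat.add_zero]
  rw [div_self hf, mul_one, ← mul_assoc, one_div, ← Real.sqrt_inv, ← Real.sqrt_mul (by positivity)]
  congr 2
  field_simp; ring

lemma swap_cont {F : ℝ → ℝ → ℝ} (hF : Continuous (Function.uncurry F)) (a b c d : ℝ) :
    ∫ x in a..b, ∫ y in c..d, F x y = ∫ y in c..d, ∫ x in a..b, F x y := by
  apply MeasureTheory.intervalIntegral_intervalIntegral_swap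
  exact (hF.continuousOn.integrableOn_compact (isCompact_uIcc.prod isCompact_uIcc)).mono_set
    (Set.prod_mono Set.uIoc_subset_uIcc Set.uIoc_subset_uIcc)

lemma int_congr_Ioo {f g : ℝ → ℝ} (h : ∀ θ ∈ Set.Ioo 0 Real.pi, f θ = g θ) :
    ∫ θ in (0:ℝ)..Real.pi, f θ = ∫ θ in (0:ℝ)..Real.pi, g θ := by
  rw [intervalIntegral.integral_of_le Real.pi_pos.le, intervalIntegral.integral_of_le Real.pi_pos.le,
    integral_Ioc_eq_integral_Ioo, integral_Ioc_eq_integral_Ioo]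
  exact setIntegral_congr_fun measurableSet_Ioo h

/-- the coefficients for nonzero order -/
lemma coeff_mode {w W : SphereFun} (hW : SphSmooth W)
    (hw : ∀ θ ∈ Set.Ioo 0 Real.pi, ∀ φ, w θ φ = W θ φ / Real.sin θ ^ 2) (n m : ℕ) {k : ℤ} (hm : 0 < m)
    {g : ℝ → ℝ} (hg : Continuous g)
    (hY : ∀ θ, 0 ≤ Real.sin θ → ∀ φ, Ynm n k θ φ = 1 / Real.sqrt Real.pi * (Real.sin θ ^ m * (EP n m).eval (Real.cos θ)) * g φ) :
    ∫ θ in (0:ℝ)..Real.pi, (Real.sin θ ^ (m-1) * ∫ φ in (0:ℝ)..(2*Real.pi), W θ φ * g φ) * (EP n m).eval (Real.cos θ)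
      = Real.sqrt Real.pi * coeff w n k := by
  unfold coeff sInner
  have hp : Real.sqrt Real.pi ≠ 0 := by have := Real.pi_pos; positivity
  have e1 : ∀ φ, ∫ θ in (0:ℝ)..Real.pi, w θ φ * Ynm n k θ φ * Real.sin θ =
      ∫ θ in (0:ℝ)..Real.pi, 1 / Real.sqrt Real.pi * (Real.sin θ ^ (m-1) * (EP n m).eval (Real.cos θ) * (W θ φ * g φ)) := by
    intro φ
    apply int_congr_Ioo
    intro θ hθ
    have hs : 0 < Real.sin θ := Real.sin_pos_of_mem_Ioo hθ
    rw [hw θ hθ, hY θ hs.le]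
    obtain ⟨j, rfl⟩ : ∃ j, m = j + 1 := ⟨m-1, by omega⟩
    simp only [Nat.add_sub_cancel]
    field_simp
    ring
  simp_rw [e1, intervalIntegral.integral_const_mul]
  rw [← mul_assoc, mul_one_div_cancel hp, one_mul]
  have hc : Continuous (fun p : ℝ × ℝ => W p.1 p.2) := hW.cont
  have hE : Continuous (fun s => (EP n m).eval s) := (EP n m).continuous
  rw [swap_cont (F := fun φ θ => Real.sin θ ^ (m-1) * (EP n m).eval (Real.cos θ) * (W θ φ * g φ))]
  · congr 1; ext θ
    rw [intervalIntegral.integral_const_mul]; ring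
  · simp only [Function.uncurry_def]
    have : Continuous (fun p : ℝ × ℝ => W p.2 p.1) := hc.comp continuous_swap
    fun_prop

lemma coeff_zero_mode {w W : SphereFun} (hW : SphSmooth W)
    (hw : ∀ θ ∈ Set.Ioo 0 Real.pi, ∀ φ, w θ φ = W θ φ / Real.sin θ ^ 2) (n : ℕ)
    (h0 : ∀ φ, W 0 φ = 0) (h1 : ∀ φ, W Real.pi φ = 0) {H : ℝ → ℝ} (hH : ∀ θ, avg W θ = Real.sin θ * H θ) :
    ∫ θ in (0:ℝ)..Real.pi, H θ * (EP n 0).eval (Real.cos θ)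
      = Real.sqrt (2*Real.pi) * coeff w n 0 := by
  unfold coeff sInner
  have hp : Real.sqrt (2*Real.pi) ≠ 0 := by have := Real.pi_pos; positivity
  have hE : Continuous (fun s => (EP n 0).eval s) := (EP n 0).continuous
  have e1 : ∀ φ, ∫ θ in (0:ℝ)..Real.pi, w θ φ * Ynm n 0 θ φ * Real.sin θ =
      ∫ θ in (0:ℝ)..Real.pi, 1 / Real.sqrt (2*Real.pi) * ((EP n 0).eval (Real.cos θ) * (W θ φ / Real.sin θ)) := by
    intro φ
    apply int_congr_Ioo
    intro θ hθ
    have hs : 0 < Real.sin θ := Real.sin_pos_of_mem_Ioo hθ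
    rw [hw θ hθ, Y_zero]
    field_simp
  simp_rw [e1, intervalIntegral.integral_const_mul]
  rw [← mul_assoc, mul_one_div_cancel hp, one_mul]
  rw [MeasureTheory.intervalIntegral_intervalIntegral_swap]
  · apply int_congr_Ioo
    intro θ hθ
    have hs : 0 < Real.sin θ := Real.sin_pos_of_mem_Ioo hθ
    rw [intervalIntegral.integral_const_mul, intervalIntegral.integral_div]
    change _ = _ * (avg W θ / _)
    rw [hH]; field_simp
  · obtain ⟨C, hC0, hC⟩ := vanish_bound hW h0 h1
    rw [Set.uIoc_of_le Real.two_pi_pos.le, Set.uIoc_of_le Real.pi_pos.le]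
    have hEc : Continuous fun θ => (EP n 0).eval (Real.cos θ) := by fun_prop
    refine IntegrableOn.of_bound (C := (2*n+1) * C) ?_ ?_ ?_
    · rw [Measure.volume_eq_prod, Measure.prod_prod]; simp [ENNReal.mul_lt_top]
    · have hc2 : Continuous (fun p : ℝ × ℝ => W p.2 p.1) := hW.cont.comp continuous_swap
      have : Measurable (fun p : ℝ × ℝ => (EP n 0).eval (Real.cos p.2) * (W p.2 p.1 / Real.sin p.2)) := by
        refine Measurable.mul (by fun_prop : Continuous fun p : ℝ × ℝ => (EP n 0).eval (Real.cos p.2)).measurable ?_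
        exact hc2.measurable.div (by fun_prop : Continuous fun p : ℝ × ℝ => Real.sin p.2).measurable
      exact this.aestronglyMeasurable
    · refine (ae_restrict_iff' (measurableSet_Ioc.prod measurableSet_Ioc)).2 (Filter.Eventually.of_forall ?_)
      rintro ⟨φ, θ⟩ ⟨hφ, hθ⟩
      simp only [Function.uncurry]
      rw [norm_mul]
      have b1 := EP_sup_sin n 0 θ
      rw [pow_zero, one_mul] at b1
      refine mul_le_mul b1 ?_ (norm_nonneg _) (by positivity)
      have hs := Real.sin_nonneg_of_mem_Icc ⟨hθ.1.le, hθ.2⟩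
      rw [Real.norm_eq_abs, abs_div, abs_of_nonneg hs]
      exact div_le_of_le_mul₀ hs hC0 (hC θ ⟨hθ.1.le, hθ.2⟩ φ ⟨hφ.1.le, hφ.2⟩)

end PartC1

section PartC2
def tc (w : SphereFun) (p : ℕ × ℤ) : ℝ := if |p.2| ≤ (p.1 : ℤ) then |coeff w p.1 p.2| * (2*p.1+1) else 0
def yK (p : ℕ × ℤ) : ℝ := 4 * ((1 / (1+(p.1:ℝ)^2)) * (1/(1+(p.2:ℝ)^2)))

lemma tc_nonneg (w : SphereFun) (p : ℕ × ℤ) : 0 ≤ tc w p := by unfold tc; split_ifs <;> positivity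

lemma yK_sum : Summable yK := by
  have h1 : Summable (fun n : ℕ => 1 / (1+(n:ℝ)^2)) := by
    refine Summable.of_nonneg_of_le (fun n => by positivity) (fun n => ?_) ((summable_nat_add_iff 1).2 (Real.summable_one_div_nat_pow.2 (one_lt_two)) |>.mul_left 2)
    rw [mul_one_div, div_le_div_iff₀ (by positivity) (by positivity)]
    push_cast; nlinarith [sq_nonneg ((n:ℝ)-1)]
  have h2 : Summable (fun n : ℤ => 1 / (1+(n:ℝ)^2)) := by
    apply Summable.of_nat_of_neg
    · simpa using h1
    · simpa using h1
  have := h1.mul_of_nonneg h2 (fun n => by positivity) (fun n => by positivity)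
  exact this.mul_left 4

def K0 : ℝ := ∑' p, yK p
lemma yK_nonneg (p) : 0 ≤ yK p := by unfold yK; positivity
lemma K0_nonneg : 0 ≤ K0 := tsum_nonneg yK_nonneg

lemma tc_sum {w : SphereFun} {ε : ℝ} (hε : 0 < ε) (h : sobNormSq 4 w ≤ ENNReal.ofReal (ε^2)) :
    Summable (tc w) ∧ ∑' p, tc w p ≤ (1 + K0) * ε := by
  set x : ℕ × ℤ → ℝ := fun p => if |p.2| ≤ (p.1 : ℤ) then (muSp p.1)^4 * (coeff w p.1 p.2)^2 else 0 with hx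
  have hx0 : ∀ p, 0 ≤ x p := fun p => by
    simp only [hx]; split_ifs <;> [unfold muSp; skip] <;> positivity
  have hxs : ∀ s : Finset (ℕ × ℤ), ∑ p ∈ s, x p ≤ ε^2 := by
    intro s
    have h1 : ∑ p ∈ s, ENNReal.ofReal (x p) ≤ ENNReal.ofReal (ε^2) := by
      refine (ENNReal.sum_le_tsum s).trans (le_trans (le_of_eq ?_) h)
      unfold sobNormSq
      congr 1; ext p
      simp only [hx]; split_ifs <;> simp
    rw [← ENNReal.ofReal_sum_of_nonneg (fun p _ => hx0 p)] at h1
    exact (ENNReal.ofReal_le_ofReal_iff (by positivity)).1 h1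
  have hle : ∀ p, tc w p ≤ (1/(2*ε)) * x p + (ε/2) * yK p := by
    intro p
    by_cases hp : |p.2| ≤ (p.1 : ℤ)
    · simp only [tc, hx, if_pos hp]
      set c := coeff w p.1 p.2
      set n : ℝ := (p.1 : ℝ) with hn
      have hn0 : 0 ≤ n := by positivity
      set μ := muSp p.1 with hμ
      have hμe : μ = n*(n+1)+1 := rfl
      have hμ1 : 1 ≤ μ := by nlinarith
      have hmn : (p.2:ℝ)^2 ≤ n^2 := by
        rw [← sq_abs (p.2 : ℝ)]
        have : |(p.2:ℝ)| ≤ n := by rw [hn]; exact_mod_cast hp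
        exact pow_le_pow_left₀ (abs_nonneg _) this 2
      have hy : (2*n+1)^2 ≤ yK p * μ^4 := by
        unfold yK
        rw [show 4 * ((1 / (1+(p.1:ℝ)^2)) * (1/(1+(p.2:ℝ)^2))) * μ^4 = 4*μ^4 / ((1+n^2) * (1+(p.2:ℝ)^2)) by
          rw [hn]; field_simp]
        rw [le_div_iff₀ (by positivity)]
        have a1 : (2*n+1)^2 ≤ 4*μ := by nlinarith
        have a2 : 1+n^2 ≤ μ := by nlinarith
        have a3 : 1+(p.2:ℝ)^2 ≤ μ := by linarith
        calc (2*n+1)^2 * ((1+n^2) * (1+(p.2:ℝ)^2)) ≤ (4*μ) * (μ * μ) := by gcongr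
          _ = 4*μ^3 := by ring
          _ ≤ 4 * μ^4 := by
            have : μ^3 ≤ μ^4 := pow_le_pow_right₀ hμ1 (by norm_num)
            linarith
      have hy2 : ((2*n+1)/μ^2)^2 ≤ yK p := by
        rw [div_pow, div_le_iff₀ (by positivity)]
        calc _ ≤ _ := hy
          _ = _ := by ring
      have key : 0 ≤ (1/(2*ε)) * (μ^2 * |c| - ε * ((2*n+1)/μ^2))^2 := by positivity
      have e : (1/(2*ε)) * (μ^2 * |c| - ε * ((2*n+1)/μ^2))^2 =
          (1/(2*ε)) * (μ^4 * c^2) + ε/2 * ((2*n+1)/μ^2)^2 - |c| * (2*n+1) := by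
        rw [← sq_abs c]; field_simp; ring
      have : ε/2 * ((2*n+1)/μ^2)^2 ≤ ε/2 * yK p := mul_le_mul_of_nonneg_left hy2 (by positivity)
      linarith
    · simp only [tc, hx, if_neg hp]
      have := yK_nonneg p
      positivity
  have hb : ∀ s : Finset (ℕ × ℤ), ∑ p ∈ s, tc w p ≤ (1 + K0) * ε := by
    intro s
    calc ∑ p ∈ s, tc w p ≤ ∑ p ∈ s, ((1/(2*ε)) * x p + (ε/2) * yK p) := Finset.sum_le_sum fun p _ => hle p
      _ = (1/(2*ε)) * ∑ p ∈ s, x p + (ε/2) * ∑ p ∈ s, yK p := by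
        rw [Finset.sum_add_distrib, Finset.mul_sum, Finset.mul_sum]
      _ ≤ (1/(2*ε)) * ε^2 + (ε/2) * K0 := by
        gcongr
        · exact hxs s
        · exact yK_sum.sum_le_tsum s (fun p _ => yK_nonneg p)
      _ = (1+K0) * ε / 2 := by field_simp
      _ ≤ (1+K0) * ε := by have := K0_nonneg; have : 0 ≤ (1+K0)*ε := by positivity
                           linarith
  exact ⟨summable_of_sum_le (tc_nonneg w) hb, Real.tsum_le_of_sum_le (tc_nonneg w) hb⟩

def bm (w : SphereFun) (m : ℤ) : ℝ := ∑' n : ℕ, tc w (n, m)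

lemma bm_sum {w : SphereFun} (h : Summable (tc w)) : Summable (bm w) ∧ ∑' m, bm w m = ∑' p, tc w p := by
  have h1 : Summable (fun q : ℤ × ℕ => tc w (q.2, q.1)) := h.prod_symm
  refine ⟨h1.prod, ?_⟩
  unfold bm
  rw [← (Equiv.prodComm ℤ ℕ).tsum_eq (tc w)]
  exact (h1.tsum_prod).symm

lemma tc_fiber {w : SphereFun} (h : Summable (tc w)) (m : ℤ) : Summable fun n : ℕ => tc w (n, m) := by
  have h1 : Summable (fun q : ℤ × ℕ => tc w (q.2, q.1)) := h.prod_symm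
  exact h1.prod_factor m

lemma mode_est {w W : SphereFun} (hW : SphSmooth W)
    (hw : ∀ θ ∈ Set.Ioo 0 Real.pi, ∀ φ, w θ φ = W θ φ / Real.sin θ ^ 2) (ht : Summable (tc w)) (m : ℕ) {k : ℤ} (hm : 0 < m)
    (hk : |k| = m)
    {g : ℝ → ℝ} (hgs : ContDiff ℝ (⊤ : ℕ∞) g)
    (hY : ∀ n θ, 0 ≤ Real.sin θ → ∀ φ, Ynm n k θ φ = 1 / Real.sqrt Real.pi * (Real.sin θ ^ m * (EP n m).eval (Real.cos θ)) * g φ) :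
    ∀ θ ∈ Set.Icc 0 Real.pi, |∫ φ in (0:ℝ)..(2*Real.pi), W θ φ * g φ| ≤ Real.sqrt Real.pi * bm w k * Real.sin θ ^ 2 := by
  have hg := hgs.continuous
  set D : ℝ → ℝ := fun θ => ∫ φ in (0:ℝ)..(2*Real.pi), W θ φ * g φ with hD
  have hDc : Continuous D := avg_cont (u := fun θ φ => W θ φ * g φ) (hW.mul (SphSmooth.ph hgs))
  have hc := fun n => coeff_mode hW hw n m hm hg (hY n)
  have e : ∀ n : ℕ, |∫ θ in (0:ℝ)..Real.pi, (Real.sin θ ^ (m-1) * D θ) * (EP n m).eval (Real.cos θ)| * (2*n+1)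
      = Real.sqrt Real.pi * tc w (n, k) := by
    intro n
    by_cases hn : n < m
    · rw [EP_zero hn]
      simp only [tc]
      rw [if_neg (by rw [hk]; omega)]
      simp
    · rw [hc]
      simp only [tc]
      rw [if_pos (by rw [hk]; omega), abs_mul, abs_of_nonneg (Real.sqrt_nonneg _)]; ring
  have hs : Summable fun n : ℕ => |∫ θ in (0:ℝ)..Real.pi, (Real.sin θ ^ (m-1) * D θ) * (EP n m).eval (Real.cos θ)| * (2*n+1) := by
    simp_rw [e]; exact (tc_fiber ht k).mul_left _
  have hb := mode_bound m (H := fun θ => Real.sin θ ^ (m-1) * D θ) (by fun_prop) hs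
  simp_rw [e, tsum_mul_left] at hb
  change ∀ θ ∈ Set.Icc 0 Real.pi, |Real.sin θ ^ (m-1) * D θ| ≤ Real.sqrt Real.pi * bm w k * Real.sin θ ^ (m+1) at hb
  have hIoo : ∀ θ ∈ Set.Ioo 0 Real.pi, |D θ| ≤ Real.sqrt Real.pi * bm w k * Real.sin θ ^ 2 := by
    intro θ hθ
    have hsp : 0 < Real.sin θ := Real.sin_pos_of_mem_Ioo hθ
    have := hb θ ⟨hθ.1.le, hθ.2.le⟩
    rw [abs_mul, abs_of_pos (pow_pos hsp _)] at this
    have h2 : Real.sin θ ^ (m+1) = Real.sin θ ^ (m-1) * Real.sin θ ^ 2 := by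
      rw [← pow_add]; congr 1; omega
    rw [h2] at this
    refine le_of_mul_le_mul_left ?_ (pow_pos hsp (m-1))
    linarith
  intro θ hθ
  rw [← closure_Ioo Real.pi_pos.ne] at hθ
  exact le_on_closure hIoo (by fun_prop) (by fun_prop) hθ

lemma sup_w {Ψ : SphereFun} (hΨ : SphSmooth Ψ) (hP : PeriodicPhi Ψ) (α : ℝ) {ε : ℝ} (hε : 0 < ε)
    (hN : sobNormSq 4 (fun θ φ => lapS Ψ θ φ + 2*α*Ynm 1 0 θ φ) ≤ ENNReal.ofReal (ε^2)) :
    (∀ φ, dPhi Ψ 0 φ = 0) ∧ (∀ φ, dPhi Ψ Real.pi φ = 0) ∧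
    ∀ θ ∈ Set.Ioo 0 Real.pi, ∀ φ, |WW (α * Real.sqrt (3/(4*Real.pi))) Ψ θ φ| ≤
      (Real.sqrt (2*Real.pi) * (1+K0) * ε) * Real.sin θ ^ 2 := by
  set β := α * Real.sqrt (3/(4*Real.pi)) with hβ
  set w : SphereFun := fun θ φ => lapS Ψ θ φ + 2*α*Ynm 1 0 θ φ with hwdef
  set W := WW β Ψ with hWdef
  have hW : SphSmooth W := WW_sm β hΨ
  have hWP : PeriodicPhi W := WW_per β hP
  have hw : ∀ θ ∈ Set.Ioo 0 Real.pi, ∀ φ, w θ φ = W θ φ / Real.sin θ ^ 2 := fun θ hθ φ => w_eq α hΨ hθ φ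
  obtain ⟨ht, htl⟩ := tc_sum hε hN
  obtain ⟨hbs, hbe⟩ := bm_sum ht
  have hbn : ∀ m, 0 ≤ bm w m := fun m => tsum_nonneg fun n => tc_nonneg w _
  have hC : ∀ m : ℕ, 0 < m → ∀ θ ∈ Set.Icc 0 Real.pi, |mC (W θ) m| ≤ Real.sqrt Real.pi * bm w m * Real.sin θ ^ 2 := by
    intro m hm
    have := mode_est hW hw ht m (k := m) hm (by simp) (g := fun φ => Real.cos (m * φ)) (by fun_prop)
      (fun n θ hs φ => Y_pos n m hm hs φ)
    simpa [mC] using this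
  have hS : ∀ m : ℕ, 0 < m → ∀ θ ∈ Set.Icc 0 Real.pi, |mS (W θ) m| ≤ Real.sqrt Real.pi * bm w (-m) * Real.sin θ ^ 2 := by
    intro m hm
    have := mode_est hW hw ht m (k := -m) hm (by simp) (g := fun φ => Real.sin (m * φ)) (by fun_prop)
      (fun n θ hs φ => Y_neg n m hm hs φ)
    simpa [mS] using this
  have hend : ∀ θ ∈ Set.Icc 0 Real.pi, Real.sin θ = 0 → ∀ φ, dPhi Ψ θ φ = 0 := by
    intro θ hθ hs
    have hWe : ∀ φ, W θ φ = dPhi (dPhi Ψ) θ φ := by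
      intro φ; simp [hWdef, WW, W2, hs]
    have hWf : W θ = dPhi (dPhi Ψ) θ := funext hWe
    have c0 : ∀ m : ℕ, 0 < m → mC (dPhi (dPhi Ψ) θ) m = 0 := by
      intro m hm
      have := hC m hm θ hθ
      rw [hs] at this; rw [← hWf]; simpa using this
    have s0 : ∀ m : ℕ, 0 < m → mS (dPhi (dPhi Ψ) θ) m = 0 := by
      intro m hm
      have := hS m hm θ hθ
      rw [hs] at this; rw [← hWf]; simpa using this
    have per : dPhi Ψ θ (2*Real.pi) = dPhi Ψ θ 0 := by have := hP.dP θ 0; rwa [zero_add] at this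
    have d : ∀ x, HasDerivAt (dPhi Ψ θ) (dPhi (dPhi Ψ) θ x) x := fun x => hΨ.dP.hP θ x
    have dc : Continuous (dPhi (dPhi Ψ) θ) := hΨ.dP.dP.c2 θ
    have := mode_sup (h := dPhi Ψ θ) (hΨ.dP.c2 θ) (fun x => hP.dP θ x) (fun _ => 0) summable_zero ?_ ?_
    · intro φ; simpa using this φ
    · intro m
      rcases Nat.eq_zero_or_pos m with rfl | hm
      · have := avg_dPhi hΨ hP θ
        simp only [avg] at this
        simp [mC, this]
      · have h1 := s0 m hm
        rw [mS_deriv d dc per] at h1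
        have : (m:ℝ) ≠ 0 := by positivity
        simp [this] at h1
        simp [h1]
    · intro m hm
      have h1 := c0 m hm
      rw [mC_deriv d dc per] at h1
      have : (m:ℝ) ≠ 0 := by positivity
      simp [this] at h1
      simp [h1]
  have f0 := hend 0 ⟨le_rfl, Real.pi_pos.le⟩ Real.sin_zero
  have f1 := hend Real.pi ⟨Real.pi_pos.le, le_rfl⟩ Real.sin_pi
  refine ⟨f0, f1, ?_⟩
  have W0 : ∀ φ, W 0 φ = 0 := by
    intro φ
    have : dPhi (dPhi Ψ) 0 φ = 0 := by
      change deriv (fun p => dPhi Ψ 0 p) φ = 0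
      simp_rw [f0]; simp
    simp [hWdef, WW, W2, this]
  have W1 : ∀ φ, W Real.pi φ = 0 := by
    intro φ
    have : dPhi (dPhi Ψ) Real.pi φ = 0 := by
      change deriv (fun p => dPhi Ψ Real.pi p) φ = 0
      simp_rw [f1]; simp
    simp [hWdef, WW, W2, this]
  set H : ℝ → ℝ := fun θ => Real.cos θ * avg (dTheta Ψ) θ + Real.sin θ * avg (dTheta (dTheta Ψ)) θ
    + 2*Real.pi * (2*β*Real.cos θ * Real.sin θ) with hH
  have hHc : Continuous H := by
    have := avg_cont hΨ.dT
    have := avg_cont hΨ.dT.dT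
    fun_prop
  have hHe : ∀ θ, avg W θ = Real.sin θ * H θ := by
    intro θ
    have i1 : IntervalIntegrable (fun φ => Real.sin θ * Real.cos θ * dTheta Ψ θ φ) volume 0 (2*Real.pi) :=
      (avg_ii hΨ.dT θ _ _).const_mul _
    have i2 : IntervalIntegrable (fun φ => Real.sin θ ^ 2 * dTheta (dTheta Ψ) θ φ) volume 0 (2*Real.pi) :=
      (avg_ii hΨ.dT.dT θ _ _).const_mul _
    have i3 : IntervalIntegrable (fun φ => dPhi (dPhi Ψ) θ φ) volume 0 (2*Real.pi) := avg_ii hΨ.dP.dP θ _ _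
    have i12 : IntervalIntegrable (fun φ => Real.sin θ * Real.cos θ * dTheta Ψ θ φ + Real.sin θ ^ 2 * dTheta (dTheta Ψ) θ φ) volume 0 (2*Real.pi) := i1.add i2
    have i123 : IntervalIntegrable (fun φ => Real.sin θ * Real.cos θ * dTheta Ψ θ φ + Real.sin θ ^ 2 * dTheta (dTheta Ψ) θ φ + dPhi (dPhi Ψ) θ φ) volume 0 (2*Real.pi) := i12.add i3
    have a0 := avg_dPhi hΨ.dP hP.dP θ
    simp only [avg, hWdef, WW, W2, hH] at a0 ⊢
    rw [intervalIntegral.integral_add i123 (by simp), intervalIntegral.integral_add i12 i3,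
      intervalIntegral.integral_add i1 i2, a0, intervalIntegral.integral_const_mul, intervalIntegral.integral_const_mul,
      intervalIntegral.integral_const]
    simp only [smul_eq_mul]
    ring
  have e : ∀ n : ℕ, |∫ θ in (0:ℝ)..Real.pi, H θ * (EP n 0).eval (Real.cos θ)| * (2*n+1)
      = Real.sqrt (2*Real.pi) * tc w (n, 0) := by
    intro n
    rw [coeff_zero_mode hW hw n W0 W1 hHe]
    simp only [tc]
    rw [if_pos (by simp), abs_mul, abs_of_nonneg (Real.sqrt_nonneg _)]; ring
  have hs0 : Summable fun n : ℕ => |∫ θ in (0:ℝ)..Real.pi, H θ * (EP n 0).eval (Real.cos θ)| * (2*n+1) := by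
    simp_rw [e]; exact (tc_fiber ht 0).mul_left _
  have hb0 := mode_bound 0 hHc hs0
  simp_rw [e, tsum_mul_left] at hb0
  change ∀ θ ∈ Set.Icc 0 Real.pi, |H θ| ≤ Real.sqrt (2*Real.pi) * bm w 0 * Real.sin θ ^ (0+1) at hb0
  intro θ hθ φ
  have hsp : 0 < Real.sin θ := Real.sin_pos_of_mem_Ioo hθ
  have hθ' : θ ∈ Set.Icc 0 Real.pi := ⟨hθ.1.le, hθ.2.le⟩
  have hsq : Real.sqrt Real.pi ≤ Real.sqrt (2*Real.pi) := Real.sqrt_le_sqrt (by linarith [Real.pi_pos])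
  have hfin := mode_sup (h := W θ) (hW.c2 θ) (fun x => hWP θ x)
    (fun m => (Real.sqrt (2*Real.pi) * Real.sin θ ^ 2) * bm w m) (hbs.mul_left _) ?_ ?_ φ
  · refine hfin.trans ?_
    rw [tsum_mul_left, hbe]
    calc _ ≤ (Real.sqrt (2*Real.pi) * Real.sin θ ^ 2) * ((1+K0) * ε) := by gcongr
      _ = _ := by ring
  · intro m
    rcases Nat.eq_zero_or_pos m with rfl | hm
    · have h1 : mC (W θ) ((0:ℕ):ℤ) = Real.sin θ * H θ := by rw [← hHe]; simp [mC, avg]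
      rw [h1, abs_mul, abs_of_pos hsp]
      have := mul_le_mul_of_nonneg_left (hb0 θ hθ') hsp.le
      calc _ ≤ _ := this
        _ = _ := by push_cast; ring
    · calc _ ≤ _ := hC m hm θ hθ'
        _ ≤ Real.sqrt (2*Real.pi) * bm w m * Real.sin θ ^ 2 := by
          have := hbn m
          gcongr
        _ = _ := by ring
  · intro m hm
    calc _ ≤ _ := hS m hm θ hθ'
        _ ≤ Real.sqrt (2*Real.pi) * bm w (-m) * Real.sin θ ^ 2 := by
          have := hbn (-m)
          gcongr
        _ = _ := by ring

end PartC2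

section PartD1
lemma half_gap {B B' r r' N : ℝ → ℝ} {a b : ℝ} (hab : a ≤ b) (h0 : 0 ≤ a) (h1 : b ≤ Real.pi)
    (hd : ∀ x, HasDerivAt B (B' x) x) (hc' : Continuous B')
    (hr : ∀ x ∈ Set.Icc a b, HasDerivAt r (r' x) x) (hrc : ContinuousOn r' (Set.Icc a b))
    (hid : ∀ x ∈ Set.Ioo a b, r' x * Real.sin x + 2 * r x * Real.cos x = Real.sin x ^ 2)
    (hrs : ∀ x ∈ Set.Ioo a b, |r x| ≤ Real.sin x) (ea : r a * B a ^ 2 = 0) (eb : r b * B b ^ 2 = 0)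
    (hN : ∀ x ∈ Set.Ioo a b, N x = (B' x * Real.sin x - B x * Real.cos x)^2 / Real.sin x)
    (hNi : IntervalIntegrable N volume a b) :
    ∫ x in a..b, B x ^ 2 * Real.sin x ≤ 4 * ∫ x in a..b, N x := by
  have hBc : Continuous B := continuous_iff_continuousAt.2 fun x => (hd x).continuousAt
  have hrcont : ContinuousOn r (Set.Icc a b) := fun x hx => (hr x hx).continuousAt.continuousWithinAt
  have hfl : ∀ x ∈ Set.uIcc a b, HasDerivAt (fun x => r x * B x ^ 2) (r' x * B x ^ 2 + r x * (2 * B x * B' x)) x := by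
    intro x hx
    rw [Set.uIcc_of_le hab] at hx
    exact ((hr x hx).mul ((hd x).pow 2)).congr_deriv (by simp)
  have hfi : IntervalIntegrable (fun x => r' x * B x ^ 2 + r x * (2 * B x * B' x)) volume a b := by
    apply ContinuousOn.intervalIntegrable
    rw [Set.uIcc_of_le hab]
    exact (hrc.mul (by fun_prop)).add (hrcont.mul (by fun_prop))
  have hF := intervalIntegral.integral_eq_sub_of_hasDerivAt hfl hfi
  rw [ea, eb, sub_zero] at hF
  have hBi : IntervalIntegrable (fun x => B x ^ 2 * Real.sin x) volume a b :=
    Continuous.intervalIntegrable (by fun_prop) _ _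
  have hle : ∫ x in a..b, (1/2) * (B x ^ 2 * Real.sin x) ≤
      ∫ x in a..b, ((r' x * B x ^ 2 + r x * (2 * B x * B' x)) + 2 * N x) := by
    apply intervalIntegral.integral_mono_on_of_le_Ioo hab (hBi.const_mul _) (hfi.add (hNi.const_mul _))
    intro x hx
    have hs : 0 < Real.sin x := Real.sin_pos_of_mem_Ioo ⟨by linarith [hx.1], by linarith [hx.2]⟩
    rw [hN x hx]
    set D := B' x * Real.sin x - B x * Real.cos x with hD
    have hr2 : r x ^ 2 ≤ Real.sin x ^ 2 := by
      rw [← sq_abs]; exact pow_le_pow_left₀ (abs_nonneg _) (hrs x hx) 2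
    have e2 : r' x * B x ^ 2 + r x * (2 * B x * B' x) = B x ^2 * Real.sin x + 2 * r x * B x * D / Real.sin x := by
      field_simp
      rw [hD]
      linear_combination (B x ^ 2) * hid x hx
    rw [e2]
    have e3 : B x ^ 2 * Real.sin x + 2 * r x * B x * D / Real.sin x + 2 * (D^2/Real.sin x) - 1/2 * (B x ^2 * Real.sin x)
      = (1/2 * (B x * Real.sin x + 2 * r x * D / Real.sin x)^2 + 2 * D^2 * (Real.sin x ^2 - r x ^2) / Real.sin x ^ 2) / Real.sin x := by
      field_simp; ring
    have e4 : 0 ≤ (1/2 * (B x * Real.sin x + 2 * r x * D / Real.sin x)^2 + 2 * D^2 * (Real.sin x ^2 - r x ^2) / Real.sin x ^ 2) / Real.sin x := by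
      have : 0 ≤ Real.sin x ^2 - r x ^2 := by linarith
      positivity
    linarith
  rw [intervalIntegral.integral_add hfi (hNi.const_mul _), hF, intervalIntegral.integral_const_mul,
    intervalIntegral.integral_const_mul] at hle
  linarith

lemma gap {A A' : ℝ → ℝ} (hd : ∀ x, HasDerivAt A (A' x) x) (hc' : Continuous A') {C : ℝ}
    (hC : ∀ θ ∈ Set.Icc 0 Real.pi, |A θ| ≤ C * Real.sin θ)
    (ho : ∫ θ in (0:ℝ)..Real.pi, A θ * Real.sin θ ^ 2 = 0) :
    IntervalIntegrable (fun θ => Real.sin θ * A' θ ^ 2 + A θ ^ 2 / Real.sin θ) volume 0 Real.pi ∧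
    1/9 * (∫ θ in (0:ℝ)..Real.pi, (Real.sin θ * A' θ ^ 2 + A θ ^ 2 / Real.sin θ)) ≤
      ∫ θ in (0:ℝ)..Real.pi, (Real.sin θ * A' θ ^ 2 + A θ ^ 2 / Real.sin θ - 2 * A θ ^ 2 * Real.sin θ) := by
  have hpi := Real.pi_pos
  have hAc : Continuous A := continuous_iff_continuousAt.2 fun x => (hd x).continuousAt
  have hsin : ∀ x ∈ Set.Ioo 0 Real.pi, 0 < Real.sin x := fun x hx => Real.sin_pos_of_mem_Ioo hx
  have hA0 : A 0 = 0 := by simpa using hC 0 ⟨le_rfl, hpi.le⟩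
  have hA1 : A Real.pi = 0 := by simpa using hC Real.pi ⟨hpi.le, le_rfl⟩
  have hC0 : 0 ≤ C := by
    have := hC (Real.pi/2) ⟨by linarith, by linarith⟩
    rw [Real.sin_pi_div_two, mul_one] at this
    exact (abs_nonneg _).trans this
  have i2 : IntervalIntegrable (fun θ => A θ ^ 2 / Real.sin θ) volume 0 Real.pi := by
    apply bdd_ii hpi.le (C := C^2)
    · exact ContinuousOn.div (by fun_prop) (by fun_prop) (fun x hx => (hsin x hx).ne')
    · intro x hx
      have hs := hsin x hx
      have h1 := hC x ⟨hx.1.le, hx.2.le⟩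
      rw [abs_of_nonneg (by positivity), div_le_iff₀ hs, ← sq_abs]
      have h2 : |A x|^2 ≤ (C * Real.sin x)^2 := pow_le_pow_left₀ (abs_nonneg _) h1 2
      have h3 := Real.sin_le_one x
      have : C^2 * Real.sin x * Real.sin x ≤ C^2 * Real.sin x * 1 :=
        mul_le_mul_of_nonneg_left h3 (by positivity)
      nlinarith
  have i1 : IntervalIntegrable (fun θ => Real.sin θ * A' θ ^ 2) volume 0 Real.pi :=
    Continuous.intervalIntegrable (by fun_prop) _ _
  have iP : IntervalIntegrable (fun θ => Real.sin θ * A' θ ^ 2 + A θ ^ 2 / Real.sin θ) volume 0 Real.pi := i1.add i2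
  have iY : IntervalIntegrable (fun θ => 2 * A θ ^ 2 * Real.sin θ) volume 0 Real.pi :=
    Continuous.intervalIntegrable (by fun_prop) _ _
  have iQ : IntervalIntegrable (fun θ => Real.sin θ * A' θ ^ 2 + A θ ^ 2 / Real.sin θ - 2 * A θ ^ 2 * Real.sin θ) volume 0 Real.pi := iP.sub iY
  have iZ : IntervalIntegrable (fun θ => -Real.sin θ * A θ ^ 2 + Real.cos θ * (2 * A θ * A' θ)) volume 0 Real.pi :=
    Continuous.intervalIntegrable (by fun_prop) _ _
  refine ⟨iP, ?_⟩
  set N : ℝ → ℝ := fun θ => (Real.sin θ * A' θ ^ 2 + A θ ^ 2 / Real.sin θ - 2 * A θ ^ 2 * Real.sin θ)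
    - (-Real.sin θ * A θ ^ 2 + Real.cos θ * (2 * A θ * A' θ)) with hN
  have iN : IntervalIntegrable N volume 0 Real.pi := iQ.sub iZ
  have hNe : ∀ x ∈ Set.Ioo 0 Real.pi, N x = (A' x * Real.sin x - A x * Real.cos x)^2 / Real.sin x := by
    intro x hx
    have hs := hsin x hx
    simp only [hN]
    field_simp
    have := Real.sin_sq_add_cos_sq x
    linear_combination (-A x ^ 2) * this
  have hZ : ∫ θ in (0:ℝ)..Real.pi, (-Real.sin θ * A θ ^ 2 + Real.cos θ * (2 * A θ * A' θ)) = 0 := by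
    rw [intervalIntegral.integral_eq_sub_of_hasDerivAt (f := fun θ => Real.cos θ * A θ ^ 2) _ iZ]
    · simp [hA0, hA1]
    · intro x _
      exact ((Real.hasDerivAt_cos x).mul ((hd x).pow 2)).congr_deriv (by simp)
  have hNQ : ∫ θ in (0:ℝ)..Real.pi, N θ = ∫ θ in (0:ℝ)..Real.pi, (Real.sin θ * A' θ ^ 2 + A θ ^ 2 / Real.sin θ - 2 * A θ ^ 2 * Real.sin θ) := by
    rw [hN, intervalIntegral.integral_sub iQ iZ, hZ, sub_zero]
  -- Poincare
  set a := A (Real.pi/2) with ha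
  set B : ℝ → ℝ := fun θ => A θ - a * Real.sin θ with hB
  set B' : ℝ → ℝ := fun θ => A' θ - a * Real.cos θ with hB'
  have hBd : ∀ x, HasDerivAt B (B' x) x := fun x => (hd x).sub ((Real.hasDerivAt_sin x).const_mul a)
  have hB'c : Continuous B' := by fun_prop
  have hBh : B (Real.pi/2) = 0 := by simp [hB, ha]
  have hNB : ∀ x ∈ Set.Ioo 0 Real.pi, N x = (B' x * Real.sin x - B x * Real.cos x)^2 / Real.sin x := by
    intro x hx; rw [hNe x hx]; simp only [hB, hB']; ring_nf
  have iN1 : IntervalIntegrable N volume 0 (Real.pi/2) := iN.mono_set (by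
    rw [Set.uIcc_of_le (by linarith), Set.uIcc_of_le hpi.le]; exact Set.Icc_subset_Icc le_rfl (by linarith))
  have iN2 : IntervalIntegrable N volume (Real.pi/2) Real.pi := iN.mono_set (by
    rw [Set.uIcc_of_le (by linarith), Set.uIcc_of_le hpi.le]; exact Set.Icc_subset_Icc (by linarith) le_rfl)
  have hh1 : ∫ x in (0:ℝ)..(Real.pi/2), B x ^ 2 * Real.sin x ≤ 4 * ∫ x in (0:ℝ)..(Real.pi/2), N x := by
    have hcos : ∀ x ∈ Set.Icc 0 (Real.pi/2), 0 ≤ Real.cos x := fun x hx =>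
      Real.cos_nonneg_of_mem_Icc ⟨by linarith [hx.1], hx.2⟩
    refine half_gap (r := fun x => (1 - Real.cos x) * (2 + Real.cos x) / (3 * (1 + Real.cos x)))
      (r' := fun x => ((Real.sin x * (2 + Real.cos x) + (1 - Real.cos x) * (-Real.sin x)) * (3 * (1 + Real.cos x))
        - (1 - Real.cos x) * (2 + Real.cos x) * (3 * (-Real.sin x))) / (3 * (1 + Real.cos x))^2)
      (by linarith) le_rfl (by linarith) hBd hB'c ?_ ?_ ?_ ?_ ?_ ?_
      (fun x hx => hNB x ⟨hx.1, by linarith [hx.2]⟩) iN1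
    · intro x hx
      have := hcos x hx
      have d1 : HasDerivAt (fun x => 1 - Real.cos x) (Real.sin x) x := by
        simpa using (Real.hasDerivAt_cos x).const_sub 1
      exact (d1.mul ((Real.hasDerivAt_cos x).const_add 2)).div
        (((Real.hasDerivAt_cos x).const_add 1).const_mul 3) (by positivity)
    · refine ContinuousOn.div (by fun_prop) (by fun_prop) fun x hx => ?_
      have := hcos x hx
      positivity
    · intro x hx
      have := hcos x ⟨hx.1.le, hx.2.le⟩
      have h2 := Real.sin_sq x
      field_simp
      rw [h2]; ring
    · intro x hx
      have h2 := hcos x ⟨hx.1.le, hx.2.le⟩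
      have h3 := hsin x ⟨hx.1, by linarith [hx.2]⟩
      have h4 := Real.sin_sq_add_cos_sq x
      have h5 := Real.cos_le_one x
      have h6 : 1 - Real.cos x ≤ Real.sin x := by nlinarith
      have h7 : 0 ≤ 1 - Real.cos x := by linarith
      rw [abs_of_nonneg (by positivity), div_le_iff₀ (by positivity)]
      nlinarith
    · simp
    · simp [hBh]
  have hh2 : ∫ x in (Real.pi/2)..Real.pi, B x ^ 2 * Real.sin x ≤ 4 * ∫ x in (Real.pi/2)..Real.pi, N x := by
    have hcos : ∀ x ∈ Set.Icc (Real.pi/2) Real.pi, Real.cos x ≤ 0 := fun x hx =>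
      Real.cos_nonpos_of_pi_div_two_le_of_le hx.1 (by linarith [hx.2])
    refine half_gap (r := fun x => (-1 - Real.cos x) * (2 - Real.cos x) / (3 * (1 - Real.cos x)))
      (r' := fun x => ((Real.sin x * (2 - Real.cos x) + (-1 - Real.cos x) * (Real.sin x)) * (3 * (1 - Real.cos x))
        - (-1 - Real.cos x) * (2 - Real.cos x) * (3 * (Real.sin x))) / (3 * (1 - Real.cos x))^2)
      (by linarith) (by linarith) le_rfl hBd hB'c ?_ ?_ ?_ ?_ ?_ ?_
      (fun x hx => hNB x ⟨by linarith [hx.1], hx.2⟩) iN2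
    · intro x hx
      have := hcos x hx
      have h3 : 0 < 1 - Real.cos x := by linarith
      have d1 : ∀ c : ℝ, HasDerivAt (fun x => c - Real.cos x) (Real.sin x) x := fun c => by
        simpa using (Real.hasDerivAt_cos x).const_sub c
      exact ((d1 (-1)).mul (d1 2)).div ((d1 1).const_mul 3) (by positivity)
    · refine ContinuousOn.div (by fun_prop) (by fun_prop) fun x hx => ?_
      have := hcos x hx
      have h3 : 0 < 1 - Real.cos x := by linarith
      positivity
    · intro x hx
      have := hcos x ⟨hx.1.le, hx.2.le⟩
      have h3 : 0 < 1 - Real.cos x := by linarith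
      have h2 := Real.sin_sq x
      field_simp
      rw [h2]; ring
    · intro x hx
      have h2 := hcos x ⟨hx.1.le, hx.2.le⟩
      have h3 := hsin x ⟨by linarith [hx.1], hx.2⟩
      have h4 := Real.sin_sq_add_cos_sq x
      have h5 := Real.neg_one_le_cos x
      have h6 : 1 + Real.cos x ≤ Real.sin x := by nlinarith
      have h7 : 0 ≤ 1 + Real.cos x := by linarith
      have h8 : 0 < 1 - Real.cos x := by linarith
      rw [abs_div, abs_of_pos (a := 3 * (1 - Real.cos x)) (by positivity), div_le_iff₀ (by positivity),
        show (-1 - Real.cos x) * (2 - Real.cos x) = -((1 + Real.cos x) * (2 - Real.cos x)) by ring, abs_neg,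
        abs_of_nonneg (mul_nonneg h7 (by linarith))]
      nlinarith
    · simp [hBh]
    · simp
  have iB : ∀ u v, IntervalIntegrable (fun x => B x ^ 2 * Real.sin x) volume u v := fun u v =>
    Continuous.intervalIntegrable (by fun_prop) _ _
  have hsumB := intervalIntegral.integral_add_adjacent_intervals (iB 0 (Real.pi/2)) (iB (Real.pi/2) Real.pi)
  have hsumN := intervalIntegral.integral_add_adjacent_intervals iN1 iN2
  have hBA : ∫ x in (0:ℝ)..Real.pi, A x ^ 2 * Real.sin x ≤ ∫ x in (0:ℝ)..Real.pi, B x ^ 2 * Real.sin x := by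
    have e : ∀ x, B x ^ 2 * Real.sin x = A x ^ 2 * Real.sin x + ((-2*a) * (A x * Real.sin x ^ 2) + a^2 * Real.sin x ^ 3) := by
      intro x; simp only [hB]; ring
    simp_rw [e]
    have j1 : IntervalIntegrable (fun x => A x ^ 2 * Real.sin x) volume 0 Real.pi := Continuous.intervalIntegrable (by fun_prop) _ _
    have j2 : IntervalIntegrable (fun x => (-2*a) * (A x * Real.sin x ^ 2)) volume 0 Real.pi := Continuous.intervalIntegrable (by fun_prop) _ _
    have j3 : IntervalIntegrable (fun x => a^2 * Real.sin x ^ 3) volume 0 Real.pi := Continuous.intervalIntegrable (by fun_prop) _ _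
    rw [intervalIntegral.integral_add j1 (j2.add j3), intervalIntegral.integral_add j2 j3,
      intervalIntegral.integral_const_mul, ho]
    have : 0 ≤ ∫ x in (0:ℝ)..Real.pi, a^2 * Real.sin x ^ 3 := by
      apply intervalIntegral.integral_nonneg hpi.le
      intro x hx
      have := Real.sin_nonneg_of_mem_Icc hx
      positivity
    linarith
  have hQ2 : ∫ θ in (0:ℝ)..Real.pi, (Real.sin θ * A' θ ^ 2 + A θ ^ 2 / Real.sin θ - 2 * A θ ^ 2 * Real.sin θ) =
      (∫ θ in (0:ℝ)..Real.pi, (Real.sin θ * A' θ ^ 2 + A θ ^ 2 / Real.sin θ)) - 2 * ∫ x in (0:ℝ)..Real.pi, A x ^ 2 * Real.sin x := by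
    rw [intervalIntegral.integral_sub iP iY]
    congr 1
    rw [← intervalIntegral.integral_const_mul]
    congr 1; ext x; ring
  linarith

end PartD1

section PartD2
lemma dT_mul {u v : SphereFun} (hu : SphSmooth u) (hv : SphSmooth v) :
    dTheta (fun θ φ => u θ φ * v θ φ) = fun θ φ => dTheta u θ φ * v θ φ + u θ φ * dTheta v θ φ := by
  funext θ φ
  exact ((hu.hT θ φ).mul (hv.hT θ φ)).deriv

lemma dP_mul {u v : SphereFun} (hu : SphSmooth u) (hv : SphSmooth v) :
    dPhi (fun θ φ => u θ φ * v θ φ) = fun θ φ => dPhi u θ φ * v θ φ + u θ φ * dPhi v θ φ := by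
  funext θ φ
  exact ((hu.hP θ φ).mul (hv.hP θ φ)).deriv

lemma avg_add {u v : SphereFun} (hu : SphSmooth u) (hv : SphSmooth v) (θ : ℝ) :
    avg (fun θ φ => u θ φ + v θ φ) θ = avg u θ + avg v θ :=
  intervalIntegral.integral_add (avg_ii hu _ _ _) (avg_ii hv _ _ _)

lemma avg_sub {u v : SphereFun} (hu : SphSmooth u) (hv : SphSmooth v) (θ : ℝ) :
    avg (fun θ φ => u θ φ - v θ φ) θ = avg u θ - avg v θ :=
  intervalIntegral.integral_sub (avg_ii hu _ _ _) (avg_ii hv _ _ _)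

lemma avg_th (u : SphereFun) (g : ℝ → ℝ) (θ : ℝ) :
    avg (fun θ φ => g θ * u θ φ) θ = g θ * avg u θ := by
  unfold avg; exact intervalIntegral.integral_const_mul _ _

lemma avg_const (g : ℝ → ℝ) (θ : ℝ) : avg (fun θ _ => g θ) θ = 2 * Real.pi * g θ := by
  unfold avg; simp

/-- derivative of the average of a product with a function of longitude only -/
lemma avg_g_deriv {u : SphereFun} (hu : SphSmooth u) {g : ℝ → ℝ} (hg : ContDiff ℝ (⊤ : ℕ∞) g) (θ : ℝ) :
    HasDerivAt (avg (fun θ φ => u θ φ * g φ)) (avg (fun θ φ => dTheta u θ φ * g φ) θ) θ := by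
  have h := avg_deriv (hu.mul (SphSmooth.ph hg)) θ
  rw [dT_mul hu (SphSmooth.ph hg)] at h
  refine h.congr_deriv ?_
  congr 1
  funext θ φ
  simp [dTheta]

lemma avg_W2_g {Ψ : SphereFun} (h : SphSmooth Ψ) (hp : PeriodicPhi Ψ) {g g' : ℝ → ℝ}
    (hg : ContDiff ℝ (⊤ : ℕ∞) g) (hg' : ContDiff ℝ (⊤ : ℕ∞) g')
    (pg : ∀ x, g (x + 2*Real.pi) = g x) (pg' : ∀ x, g' (x + 2*Real.pi) = g' x)
    (d : ∀ x, HasDerivAt g (g' x) x) (d' : ∀ x, HasDerivAt g' (-g x) x) (θ : ℝ) :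
    avg (fun θ φ => W2 Ψ θ φ * g φ) θ = Real.sin θ * Real.cos θ * avg (fun θ φ => dTheta Ψ θ φ * g φ) θ
      + Real.sin θ ^ 2 * avg (fun θ φ => dTheta (dTheta Ψ) θ φ * g φ) θ - avg (fun θ φ => Ψ θ φ * g φ) θ := by
  have sg := SphSmooth.ph hg
  have sg' := SphSmooth.ph hg'
  have e1 : dPhi (fun _ φ => g φ) = fun _ φ => g' φ := by funext θ φ; exact (d φ).deriv
  have e2 : dPhi (fun _ φ => g' φ) = fun _ φ => - g φ := by funext θ φ; exact (d' φ).deriv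
  have i1 := avg_ibp h.dP sg hp.dP (fun _ x => pg x) θ
  have i2 := avg_ibp h sg' hp (fun _ x => pg' x) θ
  rw [e1] at i1
  rw [e2] at i2
  have i3 : avg (fun θ φ => dPhi (dPhi Ψ) θ φ * g φ) θ = - avg (fun θ φ => Ψ θ φ * g φ) θ := by
    have : avg (fun θ φ => Ψ θ φ * -g φ) θ = - avg (fun θ φ => Ψ θ φ * g φ) θ := by
      unfold avg; rw [← intervalIntegral.integral_neg]; simp
    linarith
  have e3 : (fun θ φ => W2 Ψ θ φ * g φ) = fun θ φ =>
      ((Real.sin θ * Real.cos θ) * (dTheta Ψ θ φ * g φ) + Real.sin θ ^ 2 * (dTheta (dTheta Ψ) θ φ * g φ))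
      + dPhi (dPhi Ψ) θ φ * g φ := by funext θ φ; unfold W2; ring
  have s1 := (SphSmooth.th (g := fun θ => Real.sin θ * Real.cos θ) (by fun_prop)).mul (h.dT.mul sg)
  have s2 := (SphSmooth.th (g := fun θ => Real.sin θ ^ 2) (by fun_prop)).mul (h.dT.dT.mul sg)
  rw [e3, avg_add (s1.add s2) (h.dP.dP.mul sg), avg_add s1 s2, avg_th _ (fun θ => Real.sin θ * Real.cos θ),
    avg_th _ (fun θ => Real.sin θ ^ 2), i3]
  ring

lemma orth_aux {Ψ : SphereFun} (h : SphSmooth Ψ) (hp : PeriodicPhi Ψ) {g g' : ℝ → ℝ}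
    (hg : ContDiff ℝ (⊤ : ℕ∞) g) (hg' : ContDiff ℝ (⊤ : ℕ∞) g')
    (pg : ∀ x, g (x + 2*Real.pi) = g x) (pg' : ∀ x, g' (x + 2*Real.pi) = g' x)
    (d : ∀ x, HasDerivAt g (g' x) x) (d' : ∀ x, HasDerivAt g' (-g x) x)
    (h0 : ∫ θ in (0:ℝ)..Real.pi, avg (fun θ φ => W2 Ψ θ φ * g φ) θ = 0) :
    ∫ θ in (0:ℝ)..Real.pi, avg (fun θ φ => Ψ θ φ * g φ) θ * Real.sin θ ^ 2 = 0 := by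
  have sg := SphSmooth.ph hg
  set P := avg (fun θ φ => Ψ θ φ * g φ) with hP
  set P1 := avg (fun θ φ => dTheta Ψ θ φ * g φ) with hP1
  have cP : Continuous P := avg_cont (h.mul sg)
  have cW : Continuous (avg (fun θ φ => W2 Ψ θ φ * g φ)) := avg_cont ((W2_sm h).mul sg)
  have hd : ∀ θ ∈ Set.uIcc 0 Real.pi, HasDerivAt (fun θ => Real.sin θ ^ 2 * P1 θ - Real.sin θ * Real.cos θ * P θ)
      (avg (fun θ φ => W2 Ψ θ φ * g φ) θ + 2 * (P θ * Real.sin θ ^ 2)) θ := by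
    intro θ _
    have a1 : HasDerivAt P (P1 θ) θ := avg_g_deriv h hg θ
    have a2 : HasDerivAt P1 _ θ := avg_g_deriv h.dT hg θ
    refine ((((Real.hasDerivAt_sin θ).pow 2).mul a2).sub
      (((Real.hasDerivAt_sin θ).mul (Real.hasDerivAt_cos θ)).mul a1)).congr_deriv ?_
    rw [avg_W2_g h hp hg hg' pg pg' d d']
    simp only [Pi.pow_apply, Pi.mul_apply]
    have := Real.sin_sq_add_cos_sq θ
    rw [← hP, ← hP1]
    push_cast
    linear_combination - P θ * this
  have c2 : Continuous (fun θ => 2 * (P θ * Real.sin θ ^ 2)) := by fun_prop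
  have := intervalIntegral.integral_eq_sub_of_hasDerivAt hd ((cW.add c2).intervalIntegrable _ _)
  rw [intervalIntegral.integral_add (cW.intervalIntegrable _ _) (c2.intervalIntegrable _ _), h0,
    intervalIntegral.integral_const_mul] at this
  simp at this
  exact this

lemma EP11 (s : ℝ) : (EP 1 1).eval s = Real.sqrt (3/4) := by
  rw [EP_eval, iteratedDeriv_one, show legP 1 = fun s => s from funext legP1,
    show (2*((1:ℕ):ℝ)+1)/2 * ((Nat.factorial (1 - 1) : ℝ) / (Nat.factorial (1 + 1) : ℝ)) = 3/4 by
      norm_num [Nat.factorial]]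
  simp

lemma orth_W {Ψ : SphereFun} (h : SphSmooth Ψ) {k : ℤ} {g : ℝ → ℝ} (hg : Continuous g)
    (hY : ∀ θ, 0 ≤ Real.sin θ → ∀ φ, Ynm 1 k θ φ = 1 / Real.sqrt Real.pi * (Real.sin θ ^ 1 * (EP 1 1).eval (Real.cos θ)) * g φ)
    (hk : coeff (lapS Ψ) 1 k = 0) :
    ∫ θ in (0:ℝ)..Real.pi, avg (fun θ φ => W2 Ψ θ φ * g φ) θ = 0 := by
  have := coeff_mode (W2_sm h) (fun θ hθ φ => lapS_eq h hθ φ) 1 1 (by norm_num) hg hY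
  rw [hk] at this
  simp only [EP11, Nat.sub_self, pow_zero, one_mul, mul_zero] at this
  rw [intervalIntegral.integral_mul_const] at this
  have h3 : Real.sqrt (3/4) ≠ 0 := by positivity
  exact (mul_eq_zero.1 this).resolve_right h3

lemma orthAB {Ψ : SphereFun} (h : SphSmooth Ψ) (hp : PeriodicPhi Ψ)
    (h1 : coeff (lapS Ψ) 1 1 = 0) (h2 : coeff (lapS Ψ) 1 (-1) = 0) :
    (∫ θ in (0:ℝ)..Real.pi, avg (fun θ φ => dPhi Ψ θ φ * Real.cos φ) θ * Real.sin θ ^ 2 = 0) ∧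
    (∫ θ in (0:ℝ)..Real.pi, avg (fun θ φ => dPhi Ψ θ φ * Real.sin φ) θ * Real.sin θ ^ 2 = 0) := by
  have pc : ∀ x, Real.cos (x + 2*Real.pi) = Real.cos x := Real.cos_add_two_pi
  have ps : ∀ x, Real.sin (x + 2*Real.pi) = Real.sin x := Real.sin_add_two_pi
  have sc : ContDiff ℝ (⊤ : ℕ∞) Real.cos := Real.contDiff_cos
  have ss : ContDiff ℝ (⊤ : ℕ∞) Real.sin := Real.contDiff_sin
  have w1 := orth_W h (g := Real.cos) Real.continuous_cos (fun θ hs φ => by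
    simpa using Y_pos 1 1 (by norm_num) hs φ) h1
  have w2 := orth_W h (g := Real.sin) Real.continuous_sin (fun θ hs φ => by
    simpa using Y_neg 1 1 (by norm_num) hs φ) h2
  have o2 := orth_aux h hp ss sc ps pc (fun x => Real.hasDerivAt_sin x) (fun x => Real.hasDerivAt_cos x) w2
  have o1 := orth_aux h hp sc (g' := fun x => - Real.sin x) ss.neg pc (fun x => by simp [ps]) (fun x => Real.hasDerivAt_cos x) (fun x => (Real.hasDerivAt_sin x).neg) w1
  constructor
  · rw [← o2]
    congr 1; funext θ; congr 1
    have := avg_ibp h (SphSmooth.ph sc) hp (fun _ x => pc x) θ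
    rw [show dPhi (fun _ φ => Real.cos φ) = fun _ φ => - Real.sin φ by funext θ φ; simp [dPhi]] at this
    have e : avg (fun θ φ => Ψ θ φ * -Real.sin φ) θ = - avg (fun θ φ => Ψ θ φ * Real.sin φ) θ := by
      unfold avg; rw [← intervalIntegral.integral_neg]; simp
    linarith
  · rw [← neg_eq_zero, ← intervalIntegral.integral_neg, ← o1]
    congr 1; funext θ; rw [← neg_mul]; congr 1
    have := avg_ibp h (SphSmooth.ph ss) hp (fun _ x => ps x) θ
    rw [show dPhi (fun _ φ => Real.sin φ) = fun _ φ => Real.cos φ by funext θ φ; simp [dPhi]] at this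
    linarith

end PartD2

section PartD3
lemma avg_WW {Ψ : SphereFun} (h : SphSmooth Ψ) (hp : PeriodicPhi Ψ) (β θ : ℝ) :
    avg (WW β Ψ) θ = Real.sin θ * Real.cos θ * avg (dTheta Ψ) θ + Real.sin θ ^ 2 * avg (dTheta (dTheta Ψ)) θ
      + 4 * Real.pi * β * Real.cos θ * Real.sin θ ^ 2 := by
  have s1 := (SphSmooth.th (g := fun θ => Real.sin θ * Real.cos θ) (by fun_prop)).mul h.dT
  have s2 := (SphSmooth.th (g := fun θ => Real.sin θ ^ 2) (by fun_prop)).mul h.dT.dT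
  have s3 := (SphSmooth.th (g := fun θ => 2 * β * Real.cos θ * Real.sin θ ^ 2) (by fun_prop))
  have e : WW β Ψ = fun θ φ =>
      (((Real.sin θ * Real.cos θ) * dTheta Ψ θ φ + Real.sin θ ^ 2 * dTheta (dTheta Ψ) θ φ)
      + dPhi (dPhi Ψ) θ φ) + 2 * β * Real.cos θ * Real.sin θ ^ 2 := by funext θ φ; unfold WW W2; ring
  rw [e, avg_add ((s1.add s2).add h.dP.dP) s3, avg_add (s1.add s2) h.dP.dP, avg_add s1 s2,
    avg_th _ (fun θ => Real.sin θ * Real.cos θ),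
    avg_th _ (fun θ => Real.sin θ ^ 2), avg_dPhi h.dP hp.dP, avg_const (fun θ => 2 * β * Real.cos θ * Real.sin θ ^ 2)]
  ring

lemma avg_abs_le {u : SphereFun} {θ C : ℝ} (hb : ∀ φ, |u θ φ| ≤ C) : |avg u θ| ≤ 2 * Real.pi * C := by
  have := intervalIntegral.norm_integral_le_of_norm_le_const (a := 0) (b := 2*Real.pi) (f := fun φ => u θ φ) (C := C)
    (fun x _ => by simpa using hb x)
  have hp := Real.pi_pos
  rw [sub_zero, abs_of_pos (by positivity : 0 < 2*Real.pi)] at this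
  rw [Real.norm_eq_abs] at this
  unfold avg; linarith

/-- monotone comparison -/
lemma mono_cmp {S S' : ℝ → ℝ} {η : ℝ} (hS : ∀ θ, HasDerivAt S (S' θ) θ)
    (hb : ∀ θ ∈ Set.Ioo 0 Real.pi, |S' θ| ≤ η * Real.sin θ) (h0 : S 0 = 0) (h1 : S Real.pi = 0)
    {θ : ℝ} (hθ : θ ∈ Set.Icc 0 Real.pi) : S θ ≤ η * Real.sin θ ^ 2 := by
  have hpi := Real.pi_pos
  have m1 : MonotoneOn (fun θ => η * (1 - Real.cos θ) - S θ) (Set.Icc 0 Real.pi) := by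
    have hd : ∀ θ, HasDerivAt (fun θ => η * (1 - Real.cos θ) - S θ) (η * Real.sin θ - S' θ) θ := fun θ => by
      refine ((((Real.hasDerivAt_cos θ).const_sub 1).const_mul η).sub (hS θ)).congr_deriv (by ring)
    apply monotoneOn_of_deriv_nonneg (convex_Icc _ _) (fun x _ => (hd x).continuousAt.continuousWithinAt)
      (fun x _ => (hd x).differentiableAt.differentiableWithinAt)
    intro x hx
    rw [interior_Icc] at hx
    rw [(hd x).deriv]
    linarith [le_abs_self (S' x), hb x hx]
  have m2 : MonotoneOn (fun θ => S θ - η * (1 + Real.cos θ)) (Set.Icc 0 Real.pi) := by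
    have hd : ∀ θ, HasDerivAt (fun θ => S θ - η * (1 + Real.cos θ)) (η * Real.sin θ + S' θ) θ := fun θ => by
      refine ((hS θ).sub (((Real.hasDerivAt_cos θ).const_add 1).const_mul η)).congr_deriv (by ring)
    apply monotoneOn_of_deriv_nonneg (convex_Icc _ _) (fun x _ => (hd x).continuousAt.continuousWithinAt)
      (fun x _ => (hd x).differentiableAt.differentiableWithinAt)
    intro x hx
    rw [interior_Icc] at hx
    rw [(hd x).deriv]
    linarith [neg_abs_le (S' x), hb x hx]
  have a1 := m1 (Set.left_mem_Icc.2 hpi.le) hθ hθ.1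
  have a2 := m2 hθ (Set.right_mem_Icc.2 hpi.le) hθ.2
  simp only [h0, h1, Real.cos_zero, Real.cos_pi] at a1 a2
  have hη : 0 ≤ η := by
    have := hb (Real.pi/2) ⟨by positivity, by linarith⟩
    rw [Real.sin_pi_div_two, mul_one] at this
    exact (abs_nonneg _).trans this
  have hs := Real.sin_sq_add_cos_sq θ
  have c1 := Real.cos_le_one θ
  have c2 := Real.neg_one_le_cos θ
  rcases le_total 0 (Real.cos θ) with hc | hc
  · nlinarith [mul_nonneg hη (mul_nonneg hc (sub_nonneg.2 c1))]
  · have : 0 ≤ 1 + Real.cos θ := by linarith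
    nlinarith [mul_nonneg hη (mul_nonneg (neg_nonneg.2 hc) this)]

lemma k_bound {Ψ : SphereFun} (h : SphSmooth Ψ) (hp : PeriodicPhi Ψ) {β η : ℝ}
    (hw : ∀ θ ∈ Set.Ioo 0 Real.pi, ∀ φ, |WW β Ψ θ φ| ≤ η * Real.sin θ ^ 2)
    {θ : ℝ} (hθ : θ ∈ Set.Ioo 0 Real.pi) :
    |avg (dTheta Ψ) θ / (2*Real.pi) + β * Real.sin θ| ≤ η * Real.sin θ := by
  have hpi := Real.pi_pos
  have hs := Real.sin_pos_of_mem_Ioo hθ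
  set S : ℝ → ℝ := fun θ => Real.sin θ * avg (dTheta Ψ) θ + 2 * Real.pi * β * Real.sin θ ^ 2 with hS
  set S' : ℝ → ℝ := fun θ => Real.cos θ * avg (dTheta Ψ) θ + Real.sin θ * avg (dTheta (dTheta Ψ)) θ
    + 4 * Real.pi * β * Real.cos θ * Real.sin θ
  have hd : ∀ θ, HasDerivAt S (S' θ) θ := fun θ => by
    refine (((Real.hasDerivAt_sin θ).mul (avg_deriv h.dT θ)).add
      (((Real.hasDerivAt_sin θ).pow 2).const_mul (2 * Real.pi * β))).congr_deriv ?_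
    simp only [S']; push_cast; ring
  have hb : ∀ θ ∈ Set.Ioo 0 Real.pi, |S' θ| ≤ (2*Real.pi*η) * Real.sin θ := fun θ hθ => by
    have hs := Real.sin_pos_of_mem_Ioo hθ
    have a := avg_abs_le (hw θ hθ)
    rw [avg_WW h hp] at a
    have e : Real.sin θ * S' θ = Real.sin θ * Real.cos θ * avg (dTheta Ψ) θ + Real.sin θ ^ 2 * avg (dTheta (dTheta Ψ)) θ
      + 4 * Real.pi * β * Real.cos θ * Real.sin θ ^ 2 := by simp only [S']; ring
    rw [← e, abs_mul, abs_of_pos hs] at a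
    exact le_of_mul_le_mul_left (by linarith [a]) hs
  have u := mono_cmp hd hb (by simp [hS]) (by simp [hS]) (Set.Ioo_subset_Icc_self hθ)
  have l := mono_cmp (S := fun θ => - S θ) (S' := fun θ => - S' θ) (fun θ => (hd θ).neg) (fun θ hθ => by rw [abs_neg]; exact hb θ hθ)
    (by simp [hS]) (by simp [hS]) (Set.Ioo_subset_Icc_self hθ)
  have e : S θ = (2 * Real.pi * Real.sin θ) * (avg (dTheta Ψ) θ / (2*Real.pi) + β * Real.sin θ) := by
    simp only [hS]; field_simp
  simp only [e] at u l
  have hps : 0 < 2 * Real.pi * Real.sin θ := by positivity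
  rw [abs_le]
  constructor
  · refine le_of_mul_le_mul_left ?_ hps; linarith
  · refine le_of_mul_le_mul_left ?_ hps; linarith

lemma k'_bound {Ψ : SphereFun} (h : SphSmooth Ψ) (hp : PeriodicPhi Ψ) {β η : ℝ}
    (hw : ∀ θ ∈ Set.Ioo 0 Real.pi, ∀ φ, |WW β Ψ θ φ| ≤ η * Real.sin θ ^ 2)
    {θ : ℝ} (hθ : θ ∈ Set.Ioo 0 Real.pi) :
    |avg (dTheta Ψ) θ / (2*Real.pi) * Real.cos θ / Real.sin θ - avg (dTheta (dTheta Ψ)) θ / (2*Real.pi)| ≤ 3 * η := by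
  have hpi := Real.pi_pos
  have hs := Real.sin_pos_of_mem_Ioo hθ
  have k := k_bound h hp hw hθ
  have a := avg_abs_le (hw θ hθ)
  set κ := avg (dTheta Ψ) θ / (2*Real.pi) + β * Real.sin θ with hκ
  have e : avg (dTheta Ψ) θ / (2*Real.pi) * Real.cos θ / Real.sin θ - avg (dTheta (dTheta Ψ)) θ / (2*Real.pi)
    = 2 * Real.cos θ * (κ / Real.sin θ) - avg (WW β Ψ) θ / (2*Real.pi*Real.sin θ ^ 2) := by
    rw [avg_WW h hp, hκ]; field_simp; ring
  rw [e]
  have b1 : |2 * Real.cos θ * (κ / Real.sin θ)| ≤ 2 * η := by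
    rw [abs_mul, abs_mul, abs_div, abs_of_pos hs, abs_of_pos (by norm_num : (0:ℝ) < 2)]
    have q : |κ| / Real.sin θ ≤ η := by rw [div_le_iff₀ hs]; exact k
    have := Real.abs_cos_le_one θ
    have q0 : 0 ≤ |κ| / Real.sin θ := by positivity
    nlinarith [abs_nonneg (Real.cos θ)]
  have b2 : |avg (WW β Ψ) θ / (2*Real.pi*Real.sin θ ^ 2)| ≤ η := by
    rw [abs_div, abs_of_pos (by positivity : 0 < 2*Real.pi*Real.sin θ ^ 2), div_le_iff₀ (by positivity)]
    linarith
  have := abs_sub (2 * Real.cos θ * (κ / Real.sin θ)) (avg (WW β Ψ) θ / (2*Real.pi*Real.sin θ ^ 2))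
  linarith

lemma steady_eq {Ψ : SphereFun} (h : SphSmooth Ψ) {θ : ℝ} (hθ : θ ∈ Set.Ioo 0 Real.pi) (φ : ℝ)
    (hs : advect Ψ (lapS Ψ) θ φ = 0) :
    dPhi Ψ θ φ * (dTheta (W2 Ψ) θ φ - 2 * Real.cos θ / Real.sin θ * W2 Ψ θ φ) = dTheta Ψ θ φ * dPhi (W2 Ψ) θ φ := by
  have s0 := Real.sin_pos_of_mem_Ioo hθ
  have e1 : dTheta (lapS Ψ) θ φ = (dTheta (W2 Ψ) θ φ * Real.sin θ ^ 2 - W2 Ψ θ φ * (2 * Real.sin θ * Real.cos θ)) / (Real.sin θ ^ 2) ^ 2 := by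
    have : HasDerivAt (fun t => W2 Ψ t φ / Real.sin t ^ 2) _ θ :=
      ((W2_sm h).hT θ φ).div ((Real.hasDerivAt_sin θ).pow 2) (by positivity)
    have ev : (fun t => lapS Ψ t φ) =ᶠ[nhds θ] fun t => W2 Ψ t φ / Real.sin t ^ 2 := by
      filter_upwards [isOpen_Ioo.mem_nhds hθ] with t ht
      exact lapS_eq h ht φ
    unfold dTheta
    rw [ev.deriv_eq, this.deriv]
    simp [dTheta]
  have e2 : dPhi (lapS Ψ) θ φ = dPhi (W2 Ψ) θ φ / Real.sin θ ^ 2 := by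
    have : (fun p => lapS Ψ θ p) = fun p => W2 Ψ θ p / Real.sin θ ^ 2 := funext fun p => lapS_eq h hθ p
    unfold dPhi
    rw [this, deriv_div_const]
  unfold advect at hs
  rw [e1, e2] at hs
  field_simp at hs ⊢
  linarith

end PartD3

section PartD4
lemma avg_congr {u v : SphereFun} {θ : ℝ} (h : ∀ φ, u θ φ = v θ φ) : avg u θ = avg v θ := by
  unfold avg; congr 1; funext φ; exact h φ

def qq (Ψ : SphereFun) : ℝ → ℝ := avg (fun θ φ => dPhi Ψ θ φ * dPhi Ψ θ φ)
def qh (Ψ : SphereFun) : ℝ → ℝ := avg (fun θ φ => dPhi Ψ θ φ * dTheta (dPhi Ψ) θ φ)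
def FF (Ψ : SphereFun) : ℝ → ℝ := avg (fun θ φ => dTheta (dPhi Ψ) θ φ * dTheta (dPhi Ψ) θ φ)
def EE (Ψ : SphereFun) : ℝ → ℝ := avg (fun θ φ => dPhi (dPhi Ψ) θ φ * dPhi (dPhi Ψ) θ φ)
def pp (Ψ : SphereFun) (θ : ℝ) : ℝ := avg (dTheta Ψ) θ / (2*Real.pi)
def pp1 (Ψ : SphereFun) (θ : ℝ) : ℝ := avg (dTheta (dTheta Ψ)) θ / (2*Real.pi)
def RR (β : ℝ) (Ψ : SphereFun) (θ : ℝ) : ℝ :=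
  (avg (fun θ φ => WW β Ψ θ φ * (dTheta Ψ θ φ * dPhi (dPhi Ψ) θ φ)) θ
    - pp Ψ θ * avg (fun θ φ => WW β Ψ θ φ * dPhi (dPhi Ψ) θ φ) θ
    - avg (fun θ φ => WW β Ψ θ φ * (dPhi Ψ θ φ * dTheta (dPhi Ψ) θ φ)) θ) / Real.sin θ ^ 2
def Flux (β : ℝ) (Ψ : SphereFun) (θ : ℝ) : ℝ :=
  avg (fun θ φ => dPhi Ψ θ φ * dPhi Ψ θ φ * W2 Ψ θ φ) θ / Real.sin θ ^ 2 - pp Ψ θ * qh Ψ θ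
    + 2 * β * Real.cos θ * qq Ψ θ
def JJ (β : ℝ) (Ψ : SphereFun) (θ : ℝ) : ℝ :=
  - RR β Ψ θ - pp Ψ θ * (FF Ψ θ + EE Ψ θ / Real.sin θ ^ 2)
    + (pp Ψ θ * Real.cos θ / Real.sin θ - pp1 Ψ θ) * qh Ψ θ - 2 * β * Real.sin θ * qq Ψ θ

lemma avg_WW_mul {Ψ u : SphereFun} (h : SphSmooth Ψ) (hu : SphSmooth u) (β θ : ℝ) :
    avg (fun θ φ => WW β Ψ θ φ * u θ φ) θ = avg (fun θ φ => W2 Ψ θ φ * u θ φ) θ +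
      2 * β * Real.cos θ * Real.sin θ ^ 2 * avg u θ := by
  have s3 := (SphSmooth.th (g := fun θ => 2 * β * Real.cos θ * Real.sin θ ^ 2) (by fun_prop)).mul hu
  rw [show (fun θ φ => WW β Ψ θ φ * u θ φ) = fun θ φ => W2 Ψ θ φ * u θ φ + 2 * β * Real.cos θ * Real.sin θ ^ 2 * u θ φ by
    funext θ φ; unfold WW; ring, avg_add ((W2_sm h).mul hu) s3, avg_th _ (fun θ => 2 * β * Real.cos θ * Real.sin θ ^ 2)]

lemma avg_mul_comm (u v : SphereFun) (θ : ℝ) : avg (fun θ φ => u θ φ * v θ φ) θ = avg (fun θ φ => v θ φ * u θ φ) θ :=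
  avg_congr fun φ => mul_comm _ _

lemma avg_Tf {Ψ : SphereFun} (h : SphSmooth Ψ) (hp : PeriodicPhi Ψ) (θ : ℝ) :
    avg (fun θ φ => dTheta Ψ θ φ * dPhi (dPhi Ψ) θ φ) θ = - qh Ψ θ := by
  rw [avg_ibp h.dT h.dP hp.dT hp.dP]
  unfold qh
  congr 1
  exact avg_congr fun φ => by rw [h.comm]; ring

lemma avg_TTf {Ψ : SphereFun} (h : SphSmooth Ψ) (hp : PeriodicPhi Ψ) (θ : ℝ) :
    avg (fun θ φ => dTheta (dTheta Ψ) θ φ * dPhi (dPhi Ψ) θ φ) θ =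
      - avg (fun θ φ => dPhi Ψ θ φ * dTheta (dTheta (dPhi Ψ)) θ φ) θ := by
  rw [avg_ibp h.dT.dT h.dP hp.dT.dT hp.dP]
  congr 1
  have e : dTheta (dPhi Ψ) = dPhi (dTheta Ψ) := by funext θ φ; exact h.comm θ φ
  exact avg_congr fun φ => by rw [e, h.dT.comm]; ring

lemma avg_W2f {Ψ : SphereFun} (h : SphSmooth Ψ) (hp : PeriodicPhi Ψ) (θ : ℝ) :
    avg (fun θ φ => W2 Ψ θ φ * dPhi (dPhi Ψ) θ φ) θ = - Real.sin θ * Real.cos θ * qh Ψ θ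
      - Real.sin θ ^ 2 * avg (fun θ φ => dPhi Ψ θ φ * dTheta (dTheta (dPhi Ψ)) θ φ) θ + EE Ψ θ := by
  have s1 := (SphSmooth.th (g := fun θ => Real.sin θ * Real.cos θ) (by fun_prop)).mul (h.dT.mul h.dP.dP)
  have s2 := (SphSmooth.th (g := fun θ => Real.sin θ ^ 2) (by fun_prop)).mul (h.dT.dT.mul h.dP.dP)
  rw [show (fun θ φ => W2 Ψ θ φ * dPhi (dPhi Ψ) θ φ) = fun θ φ => ((Real.sin θ * Real.cos θ) * (dTheta Ψ θ φ * dPhi (dPhi Ψ) θ φ)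
      + Real.sin θ ^ 2 * (dTheta (dTheta Ψ) θ φ * dPhi (dPhi Ψ) θ φ)) + dPhi (dPhi Ψ) θ φ * dPhi (dPhi Ψ) θ φ by
      funext θ φ; unfold W2; ring,
    avg_add (s1.add s2) (h.dP.dP.mul h.dP.dP), avg_add s1 s2, avg_th _ (fun θ => Real.sin θ * Real.cos θ),
    avg_th _ (fun θ => Real.sin θ ^ 2), avg_Tf h hp, avg_TTf h hp]
  unfold EE
  ring

lemma pp_deriv {Ψ : SphereFun} (h : SphSmooth Ψ) (θ : ℝ) : HasDerivAt (pp Ψ) (pp1 Ψ θ) θ :=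
  (avg_deriv h.dT θ).div_const _

lemma qq_deriv {Ψ : SphereFun} (h : SphSmooth Ψ) (θ : ℝ) : HasDerivAt (qq Ψ) (2 * qh Ψ θ) θ := by
  have a := avg_deriv (h.dP.mul h.dP) θ
  rw [dT_mul h.dP h.dP, avg_add (h.dP.dT.mul h.dP) (h.dP.mul h.dP.dT), avg_mul_comm (dTheta (dPhi Ψ))] at a
  exact a.congr_deriv (by unfold qh; ring)

lemma qh_deriv {Ψ : SphereFun} (h : SphSmooth Ψ) (θ : ℝ) : HasDerivAt (qh Ψ)
    (FF Ψ θ + avg (fun θ φ => dPhi Ψ θ φ * dTheta (dTheta (dPhi Ψ)) θ φ) θ) θ := by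
  have a := avg_deriv (h.dP.mul h.dP.dT) θ
  rw [dT_mul h.dP h.dP.dT, avg_add (h.dP.dT.mul h.dP.dT) (h.dP.mul h.dP.dT.dT)] at a
  exact a

lemma Flux_deriv {Ψ : SphereFun} (h : SphSmooth Ψ) (hp : PeriodicPhi Ψ) (β : ℝ) {θ : ℝ} (hθ : θ ∈ Set.Ioo 0 Real.pi)
    (hst : ∀ φ : ℝ, advect Ψ (lapS Ψ) θ φ = 0) : HasDerivAt (Flux β Ψ) (JJ β Ψ θ) θ := by
  have s0 := Real.sin_pos_of_mem_Ioo hθ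
  have hf := h.dP
  have hW := W2_sm h
  have ff := hf.mul hf
  -- pieces
  set X1 := avg (fun θ φ => W2 Ψ θ φ * (dPhi Ψ θ φ * dTheta (dPhi Ψ) θ φ)) θ with hX1
  set X2 := avg (fun θ φ => dPhi Ψ θ φ * dPhi Ψ θ φ * dTheta (W2 Ψ) θ φ) θ with hX2
  set X0 := avg (fun θ φ => dPhi Ψ θ φ * dPhi Ψ θ φ * W2 Ψ θ φ) θ with hX0
  set X3 := avg (fun θ φ => (dPhi Ψ θ φ * dTheta Ψ θ φ) * dPhi (W2 Ψ) θ φ) θ with hX3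
  set X4 := avg (fun θ φ => W2 Ψ θ φ * (dTheta Ψ θ φ * dPhi (dPhi Ψ) θ φ)) θ with hX4
  set Y := avg (fun θ φ => dPhi Ψ θ φ * dTheta (dTheta (dPhi Ψ)) θ φ) θ with hY
  have d0 : HasDerivAt (avg (fun θ φ => dPhi Ψ θ φ * dPhi Ψ θ φ * W2 Ψ θ φ)) (2 * X1 + X2) θ := by
    have a := avg_deriv (ff.mul hW) θ
    rw [dT_mul ff hW, dT_mul hf hf, avg_add (((hf.dT.mul hf).add (hf.mul hf.dT)).mul hW) (ff.mul hW.dT)] at a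
    refine a.congr_deriv ?_
    rw [← hX2]
    congr 1
    have : avg (fun θ φ => 2 * (W2 Ψ θ φ * (dPhi Ψ θ φ * dTheta (dPhi Ψ) θ φ))) θ = 2 * X1 := avg_th _ (fun _ => 2) θ
    rw [← this]
    exact avg_congr fun φ => by ring
  have e1 : X2 - 2 * Real.cos θ / Real.sin θ * X0 = X3 := by
    have s2 := (SphSmooth.th (g := fun _ => 2 * Real.cos θ / Real.sin θ) (by fun_prop)).mul (ff.mul hW)
    rw [hX2, hX0, ← avg_th _ (fun _ => 2 * Real.cos θ / Real.sin θ), ← avg_sub (ff.mul hW.dT) s2]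
    refine avg_congr fun φ => ?_
    linear_combination dPhi Ψ θ φ * steady_eq h hθ φ (hst φ)
  have e2 : X3 = - X4 - X1 := by
    rw [hX3, avg_ibp (hf.mul h.dT) hW (fun θ φ => by simp only [hp.dP θ φ, hp.dT θ φ]) (W2_per hp), dP_mul hf h.dT]
    rw [hX4, hX1, ← neg_add', ← avg_add (hW.mul (h.dT.mul hf.dP)) (hW.mul (hf.mul hf.dT))]
    congr 1
    exact avg_congr fun φ => by rw [h.comm]; ring
  have r1 := avg_WW_mul h (h.dT.mul hf.dP) β θ
  have r2 := avg_WW_mul h hf.dP β θ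
  have r3 := avg_WW_mul h (hf.mul hf.dT) β θ
  rw [avg_Tf h hp, ← hX4] at r1
  rw [avg_dPhi hf hp.dP, avg_W2f h hp, ← hY] at r2
  rw [← hX1, show avg (fun θ φ => dPhi Ψ θ φ * dTheta (dPhi Ψ) θ φ) θ = qh Ψ θ from rfl] at r3
  have D := (((d0.div ((Real.hasDerivAt_sin θ).pow 2) (pow_ne_zero 2 (ne_of_gt s0))).sub
    ((pp_deriv h θ).mul (qh_deriv h θ))).add
      (((Real.hasDerivAt_cos θ).const_mul (2*β)).mul (qq_deriv h θ)))
  refine D.congr_deriv ?_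
  simp only [Pi.pow_apply, ← hX0, ← hY]
  unfold JJ RR
  rw [r1, r2, r3]
  have e3 : X2 = 2 * Real.cos θ / Real.sin θ * X0 - X4 - X1 := by linarith
  rw [e3]
  field_simp
  ring

end PartD4

section PartD5
lemma avg_mono {u v : SphereFun} (hu : SphSmooth u) (hv : SphSmooth v) {θ : ℝ} (h : ∀ φ, u θ φ ≤ v θ φ) :
    avg u θ ≤ avg v θ :=
  intervalIntegral.integral_mono (by have := Real.pi_pos; positivity) (avg_ii hu _ _ _) (avg_ii hv _ _ _) h

lemma avg_nn {u : SphereFun} {θ : ℝ} (h : ∀ φ, 0 ≤ u θ φ) : 0 ≤ avg u θ :=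
  intervalIntegral.integral_nonneg (by have := Real.pi_pos; positivity) (fun φ _ => h φ)

lemma per0 {u : SphereFun} (hp : PeriodicPhi u) (θ : ℝ) : u θ (2*Real.pi) = u θ 0 := by
  have := hp θ 0; rwa [zero_add] at this

lemma sq_avg (u : SphereFun) (θ : ℝ) : avg (fun θ φ => u θ φ * u θ φ) θ = ∫ φ in (0:ℝ)..(2*Real.pi), u θ φ ^ 2 := by
  unfold avg; congr 1; funext φ; ring

lemma qq_le_EE {Ψ : SphereFun} (h : SphSmooth Ψ) (hp : PeriodicPhi Ψ) (θ : ℝ) : qq Ψ θ ≤ EE Ψ θ := by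
  unfold qq EE
  rw [sq_avg, sq_avg]
  exact wirtinger (fun x => h.dP.hP θ x) (h.dP.dP.c2 θ) (per0 hp.dP θ) (avg_dPhi h hp θ)

lemma chi_le {Ψ : SphereFun} (h : SphSmooth Ψ) (hp : PeriodicPhi Ψ) (θ : ℝ) :
    avg (fun t φ => (dTheta Ψ t φ - pp Ψ θ) * (dTheta Ψ t φ - pp Ψ θ)) θ ≤ FF Ψ θ := by
  unfold FF
  rw [sq_avg (fun t φ => dTheta Ψ t φ - pp Ψ θ), sq_avg]
  have e : dTheta (dPhi Ψ) = dPhi (dTheta Ψ) := by funext θ φ; exact h.comm θ φ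
  rw [e]
  refine wirtinger (fun x => (h.dT.hP θ x).sub_const _) (h.dT.dP.c2 θ) (by rw [per0 hp.dT]) ?_
  rw [intervalIntegral.integral_sub (avg_ii h.dT _ _ _) (by simp)]
  have hpi := Real.pi_pos
  simp only [intervalIntegral.integral_const, smul_eq_mul, sub_zero]
  unfold pp avg
  field_simp
  ring

def DD (Ψ : SphereFun) (θ : ℝ) : ℝ := Real.sin θ * FF Ψ θ + EE Ψ θ / Real.sin θ

lemma young {x y s : ℝ} (hs : 0 < s) : |x * y| ≤ 1/2 * (s * (x*x)) + 1/2 * (1/s * (y*y)) := by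
  rw [abs_mul]
  have h1 : 0 ≤ (s * |x| - |y|)^2 / s := by positivity
  have h2 : (s * |x| - |y|)^2 / s = s * (|x| * |x|) - 2 * (|x| * |y|) + 1/s * (|y| * |y|) := by field_simp; ring
  rw [abs_mul_abs_self, abs_mul_abs_self] at h2
  linarith

lemma qh_le {Ψ : SphereFun} (h : SphSmooth Ψ) (hp : PeriodicPhi Ψ) {θ : ℝ} (hθ : θ ∈ Set.Ioo 0 Real.pi) :
    |qh Ψ θ| ≤ 1/2 * DD Ψ θ := by
  have hs := Real.sin_pos_of_mem_Ioo hθ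
  have hf := h.dP
  set s := Real.sin θ with hsd
  have a1 := (SphSmooth.th (g := fun _ => 1/2*s) (by fun_prop)).mul (hf.dT.mul hf.dT)
  have a2 := (SphSmooth.th (g := fun _ => 1/2*(1/s)) (by fun_prop)).mul (hf.mul hf)
  have m1 := avg_mono (hf.mul hf.dT) (a1.add a2) (θ := θ) (fun φ => by
    have := young (x := dTheta (dPhi Ψ) θ φ) (y := dPhi Ψ θ φ) hs
    linarith [le_abs_self (dTheta (dPhi Ψ) θ φ * dPhi Ψ θ φ)])
  have nn := (SphSmooth.th (g := fun _ => (-1:ℝ)) (by fun_prop)).mul (hf.mul hf.dT)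
  have m3 := avg_mono nn (a1.add a2) (θ := θ) (fun φ => by
    have := young (x := dTheta (dPhi Ψ) θ φ) (y := dPhi Ψ θ φ) hs
    linarith [neg_abs_le (dTheta (dPhi Ψ) θ φ * dPhi Ψ θ φ)])
  rw [avg_th _ (fun _ => (-1:ℝ))] at m3
  rw [avg_add a1 a2, avg_th _ (fun _ => 1/2*s), avg_th _ (fun _ => 1/2*(1/s))] at m1 m3
  have q := qq_le_EE h hp θ
  have q2 : 1/2*(1/s) * qq Ψ θ ≤ 1/2*(1/s) * EE Ψ θ := by gcongr
  have e : 1/2 * DD Ψ θ = 1/2*s*FF Ψ θ + 1/2*(1/s)*EE Ψ θ := by unfold DD; rw [← hsd]; field_simp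
  rw [e]
  unfold qh FF qq at *
  rw [abs_le]
  constructor <;> linarith

lemma RR_eq {Ψ : SphereFun} (h : SphSmooth Ψ) (β θ : ℝ) : RR β Ψ θ =
    avg (fun t φ => WW β Ψ t φ * ((dTheta Ψ t φ - pp Ψ θ) * dPhi (dPhi Ψ) t φ - dPhi Ψ t φ * dTheta (dPhi Ψ) t φ)) θ / Real.sin θ ^ 2 := by
  unfold RR
  congr 1
  have hW := WW_sm β h
  have a1 := hW.mul (h.dT.mul h.dP.dP)
  have a2 := (SphSmooth.th (g := fun _ => pp Ψ θ) (by fun_prop)).mul (hW.mul h.dP.dP)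
  have a3 := hW.mul (h.dP.mul h.dP.dT)
  have := avg_sub (a1.sub a2) a3 θ
  rw [avg_sub a1 a2, avg_th _ (fun _ => pp Ψ θ)] at this
  rw [← this]
  exact avg_congr fun φ => by ring

lemma RR_le {Ψ : SphereFun} (h : SphSmooth Ψ) (hp : PeriodicPhi Ψ) {β η : ℝ} (hη : 0 ≤ η)
    (hw : ∀ θ ∈ Set.Ioo 0 Real.pi, ∀ φ, |WW β Ψ θ φ| ≤ η * Real.sin θ ^ 2)
    {θ : ℝ} (hθ : θ ∈ Set.Ioo 0 Real.pi) : |RR β Ψ θ| ≤ η * DD Ψ θ := by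
  have hs := Real.sin_pos_of_mem_Ioo hθ
  have hf := h.dP
  have hχ : SphSmooth (fun t φ => dTheta Ψ t φ - pp Ψ θ) := h.dT.sub (SphSmooth.th (g := fun _ => pp Ψ θ) (by fun_prop))
  rw [RR_eq h]
  set s := Real.sin θ with hsd
  have a1 := (SphSmooth.th (g := fun _ => η*s^2*(1/2*s)) (by fun_prop)).mul (hf.dT.mul hf.dT)
  have a2 := (SphSmooth.th (g := fun _ => η*s^2*(1/2*(1/s))) (by fun_prop)).mul (hf.mul hf)
  have a3 := (SphSmooth.th (g := fun _ => η*s^2*(1/2*s)) (by fun_prop)).mul (hχ.mul hχ)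
  have a4 := (SphSmooth.th (g := fun _ => η*s^2*(1/2*(1/s))) (by fun_prop)).mul (hf.dP.mul hf.dP)
  have rs := (WW_sm β h).mul ((hχ.mul hf.dP).sub (hf.mul hf.dT))
  have nn := (SphSmooth.th (g := fun _ => (-1:ℝ)) (by fun_prop)).mul rs
  have key : ∀ φ, |WW β Ψ θ φ * ((dTheta Ψ θ φ - pp Ψ θ) * dPhi (dPhi Ψ) θ φ - dPhi Ψ θ φ * dTheta (dPhi Ψ) θ φ)|
    ≤ (η*s^2*(1/2*s) * (dTheta (dPhi Ψ) θ φ * dTheta (dPhi Ψ) θ φ) + η*s^2*(1/2*(1/s)) * (dPhi Ψ θ φ * dPhi Ψ θ φ))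
      + (η*s^2*(1/2*s) * ((dTheta Ψ θ φ - pp Ψ θ) * (dTheta Ψ θ φ - pp Ψ θ)) + η*s^2*(1/2*(1/s)) * (dPhi (dPhi Ψ) θ φ * dPhi (dPhi Ψ) θ φ)) := by
    intro φ
    have y1 := young (x := dTheta (dPhi Ψ) θ φ) (y := dPhi Ψ θ φ) hs
    have y2 := young (x := dTheta Ψ θ φ - pp Ψ θ) (y := dPhi (dPhi Ψ) θ φ) hs
    have y3 := abs_sub ((dTheta Ψ θ φ - pp Ψ θ) * dPhi (dPhi Ψ) θ φ) (dPhi Ψ θ φ * dTheta (dPhi Ψ) θ φ)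
    rw [mul_comm (dPhi Ψ θ φ) (dTheta (dPhi Ψ) θ φ)] at *
    rw [abs_mul]
    refine (mul_le_mul (hw θ hθ φ) (y3.trans (add_le_add y2 y1)) (abs_nonneg _) (by positivity)).trans (le_of_eq ?_)
    rw [← hsd]; ring
  have m1 := avg_mono rs ((a1.add a2).add (a3.add a4)) (θ := θ) (fun φ => (le_abs_self _).trans (key φ))
  have m3 := avg_mono nn ((a1.add a2).add (a3.add a4)) (θ := θ) (fun φ => by
    rw [neg_one_mul]; exact (neg_le_abs _).trans (key φ))
  rw [avg_th _ (fun _ => (-1:ℝ))] at m3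
  rw [avg_add (a1.add a2) (a3.add a4), avg_add a1 a2, avg_add a3 a4, avg_th _ (fun _ => η*s^2*(1/2*s)), avg_th _ (fun _ => η*s^2*(1/2*(1/s))),
    avg_th _ (fun _ => η*s^2*(1/2*s)), avg_th _ (fun _ => η*s^2*(1/2*(1/s)))] at m1 m3
  have q2 : η*s^2*(1/2*(1/s)) * qq Ψ θ ≤ η*s^2*(1/2*(1/s)) * EE Ψ θ := by
    have := qq_le_EE h hp θ
    gcongr
  have q3 := mul_le_mul_of_nonneg_left (chi_le h hp θ) (by positivity : 0 ≤ η*s^2*(1/2*s))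
  have e : η * DD Ψ θ * s^2 = 2 * (η*s^2*(1/2*s)*FF Ψ θ) + 2 * (η*s^2*(1/2*(1/s))*EE Ψ θ) := by
    unfold DD; rw [← hsd]; field_simp
  rw [abs_div, abs_of_pos (by positivity : 0 < s^2), div_le_iff₀ (by positivity), e, abs_le]
  unfold FF qq EE at *
  constructor <;> linarith

lemma FF_nn (Ψ : SphereFun) (θ : ℝ) : 0 ≤ FF Ψ θ := avg_nn fun _ => mul_self_nonneg _
lemma EE_nn (Ψ : SphereFun) (θ : ℝ) : 0 ≤ EE Ψ θ := avg_nn fun _ => mul_self_nonneg _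
lemma qq_nn (Ψ : SphereFun) (θ : ℝ) : 0 ≤ qq Ψ θ := avg_nn fun _ => mul_self_nonneg _
lemma DD_nn (Ψ : SphereFun) {θ : ℝ} (hθ : θ ∈ Set.Ioo 0 Real.pi) : 0 ≤ DD Ψ θ := by
  have hs := Real.sin_pos_of_mem_Ioo hθ
  have := FF_nn Ψ θ
  have := EE_nn Ψ θ
  unfold DD; positivity

lemma JJ_near {Ψ : SphereFun} (h : SphSmooth Ψ) (hp : PeriodicPhi Ψ) {β η : ℝ} (hη : 0 ≤ η)
    (hw : ∀ θ ∈ Set.Ioo 0 Real.pi, ∀ φ, |WW β Ψ θ φ| ≤ η * Real.sin θ ^ 2)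
    {θ : ℝ} (hθ : θ ∈ Set.Ioo 0 Real.pi) :
    |JJ β Ψ θ - β * (DD Ψ θ - 2 * Real.sin θ * qq Ψ θ)| ≤ 7/2 * η * DD Ψ θ := by
  have hs := Real.sin_pos_of_mem_Ioo hθ
  have r := RR_le h hp hη hw hθ
  have k : |pp Ψ θ + β * Real.sin θ| ≤ η * Real.sin θ := k_bound h hp hw hθ
  have k' : |pp Ψ θ * Real.cos θ / Real.sin θ - pp1 Ψ θ| ≤ 3 * η := k'_bound h hp hw hθ
  have q := qh_le h hp hθ
  have d := DD_nn Ψ hθ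
  have e : JJ β Ψ θ - β * (DD Ψ θ - 2 * Real.sin θ * qq Ψ θ) =
    - RR β Ψ θ - (pp Ψ θ + β * Real.sin θ) / Real.sin θ * DD Ψ θ + (pp Ψ θ * Real.cos θ / Real.sin θ - pp1 Ψ θ) * qh Ψ θ := by
    unfold JJ DD; field_simp; ring
  have b1 : |(pp Ψ θ + β * Real.sin θ) / Real.sin θ * DD Ψ θ| ≤ η * DD Ψ θ := by
    rw [abs_mul, abs_div, abs_of_pos hs, abs_of_nonneg d]
    gcongr
    rw [div_le_iff₀ hs]; exact k
  have b2 : |(pp Ψ θ * Real.cos θ / Real.sin θ - pp1 Ψ θ) * qh Ψ θ| ≤ (3*η) * (1/2 * DD Ψ θ) := by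
    rw [abs_mul]
    exact mul_le_mul k' q (abs_nonneg _) (by positivity)
  rw [e]
  rw [abs_le] at *
  constructor <;> nlinarith

end PartD5

section PartD6
lemma sin_le_inv {θ : ℝ} (hθ : θ ∈ Set.Ioo 0 Real.pi) : Real.sin θ ≤ 1 / Real.sin θ := by
  have hs := Real.sin_pos_of_mem_Ioo hθ
  rw [le_div_iff₀ hs]
  nlinarith [Real.sin_le_one θ]

lemma qq_cont {Ψ : SphereFun} (h : SphSmooth Ψ) : Continuous (qq Ψ) := avg_cont (h.dP.mul h.dP)
lemma qh_cont {Ψ : SphereFun} (h : SphSmooth Ψ) : Continuous (qh Ψ) := avg_cont (h.dP.mul h.dP.dT)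
lemma FF_cont {Ψ : SphereFun} (h : SphSmooth Ψ) : Continuous (FF Ψ) := avg_cont (h.dP.dT.mul h.dP.dT)
lemma EE_cont {Ψ : SphereFun} (h : SphSmooth Ψ) : Continuous (EE Ψ) := avg_cont (h.dP.dP.mul h.dP.dP)
lemma pp_cont {Ψ : SphereFun} (h : SphSmooth Ψ) : Continuous (pp Ψ) := (avg_cont h.dT).div_const _
lemma pp1_cont {Ψ : SphereFun} (h : SphSmooth Ψ) : Continuous (pp1 Ψ) := (avg_cont h.dT.dT).div_const _

lemma sin_ne {θ : ℝ} (hθ : θ ∈ Set.Ioo 0 Real.pi) : Real.sin θ ≠ 0 := ne_of_gt (Real.sin_pos_of_mem_Ioo hθ)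

lemma DD_cont {Ψ : SphereFun} (h : SphSmooth Ψ) : ContinuousOn (DD Ψ) (Set.Ioo 0 Real.pi) := by
  unfold DD
  exact ((Real.continuous_sin.mul (FF_cont h)).continuousOn).add
    ((EE_cont h).continuousOn.div Real.continuous_sin.continuousOn (fun θ hθ => sin_ne hθ))

lemma RR_cont {Ψ : SphereFun} (h : SphSmooth Ψ) (β : ℝ) : ContinuousOn (RR β Ψ) (Set.Ioo 0 Real.pi) := by
  unfold RR
  have hW := WW_sm β h
  have c1 := avg_cont (hW.mul (h.dT.mul h.dP.dP))
  have c2 := avg_cont (hW.mul h.dP.dP)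
  have c3 := avg_cont (hW.mul (h.dP.mul h.dP.dT))
  exact ((c1.sub ((pp_cont h).mul c2)).sub c3).continuousOn.div (Real.continuous_sin.pow 2).continuousOn
    (fun θ hθ => pow_ne_zero 2 (sin_ne hθ))

lemma JJ_cont {Ψ : SphereFun} (h : SphSmooth Ψ) (β : ℝ) : ContinuousOn (JJ β Ψ) (Set.Ioo 0 Real.pi) := by
  unfold JJ
  have c1 := (EE_cont h).continuousOn.div (Real.continuous_sin.pow 2).continuousOn
    (fun θ (hθ : θ ∈ Set.Ioo 0 Real.pi) => pow_ne_zero 2 (sin_ne hθ))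
  have c2 := ((pp_cont h).mul Real.continuous_cos).continuousOn.div Real.continuous_sin.continuousOn
    (fun θ (hθ : θ ∈ Set.Ioo 0 Real.pi) => sin_ne hθ)
  have c3 : Continuous (fun θ => 2 * β * Real.sin θ * qq Ψ θ) := by have := qq_cont h; fun_prop
  exact (((RR_cont h β).neg.sub ((pp_cont h).continuousOn.mul ((FF_cont h).continuousOn.add c1))).add
    ((c2.sub (pp1_cont h).continuousOn).mul (qh_cont h).continuousOn)).sub c3.continuousOn

/-- boundedness of the energy density -/
lemma DD_bdd {Ψ : SphereFun} (h : SphSmooth Ψ) (h0 : ∀ φ, dPhi Ψ 0 φ = 0) (h1 : ∀ φ, dPhi Ψ Real.pi φ = 0) :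
    ∃ M, ∀ θ ∈ Set.Ioo 0 Real.pi, DD Ψ θ ≤ M := by
  obtain ⟨C, hC, hb⟩ := vanish_bound h.dP.dP (fun φ => by
    unfold dPhi; simp only [dPhi] at h0; simp [h0]) (fun φ => by
    unfold dPhi; simp only [dPhi] at h1; simp [h1])
  obtain ⟨M, hM⟩ := (isCompact_Icc (a := 0) (b := Real.pi)).exists_bound_of_continuousOn (FF_cont h).continuousOn
  refine ⟨M + 2*Real.pi*C^2, fun θ hθ => ?_⟩
  have hs := Real.sin_pos_of_mem_Ioo hθ
  have hs1 := Real.sin_le_one θ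
  have hpi := Real.pi_pos
  have m := hM θ (Set.Ioo_subset_Icc_self hθ)
  rw [Real.norm_eq_abs, abs_of_nonneg (FF_nn _ _)] at m
  have e : EE Ψ θ ≤ 2*Real.pi*(C^2 * Real.sin θ^2) := by
    have := intervalIntegral.norm_integral_le_of_norm_le_const (a := 0) (b := 2*Real.pi)
      (f := fun φ => dPhi (dPhi Ψ) θ φ * dPhi (dPhi Ψ) θ φ) (C := C^2 * Real.sin θ^2) (fun x hx => by
        rw [Set.uIoc_of_le (by positivity)] at hx
        have := hb θ (Set.Ioo_subset_Icc_self hθ) x ⟨hx.1.le, hx.2⟩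
        rw [norm_mul, Real.norm_eq_abs, ← mul_pow, ← sq]
        exact pow_le_pow_left₀ (abs_nonneg _) this 2)
    rw [sub_zero, abs_of_pos (by positivity : 0 < 2*Real.pi)] at this
    have := (Real.le_norm_self _).trans this
    unfold EE avg; linarith
  unfold DD
  have b1 : Real.sin θ * FF Ψ θ ≤ M := by nlinarith [FF_nn Ψ θ]
  have b2 : EE Ψ θ / Real.sin θ ≤ 2*Real.pi*C^2 := by
    rw [div_le_iff₀ hs]
    refine e.trans ?_
    have : 0 ≤ 2 * Real.pi * C^2 * Real.sin θ := by positivity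
    nlinarith
  linarith

lemma DD_ii {Ψ : SphereFun} (h : SphSmooth Ψ) (h0 : ∀ φ, dPhi Ψ 0 φ = 0) (h1 : ∀ φ, dPhi Ψ Real.pi φ = 0) :
    IntervalIntegrable (DD Ψ) volume 0 Real.pi := by
  obtain ⟨M, hM⟩ := DD_bdd h h0 h1
  exact bdd_ii Real.pi_pos.le (DD_cont h) (C := M) (fun θ hθ => by rw [abs_of_nonneg (DD_nn Ψ hθ)]; exact hM θ hθ)

lemma sq_le_DD {Ψ : SphereFun} (h : SphSmooth Ψ) (hp : PeriodicPhi Ψ) {θ : ℝ} (hθ : θ ∈ Set.Ioo 0 Real.pi) :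
    Real.sin θ * qq Ψ θ ≤ DD Ψ θ ∧ qq Ψ θ ≤ DD Ψ θ := by
  have hs := Real.sin_pos_of_mem_Ioo hθ
  have hs1 := Real.sin_le_one θ
  have f := FF_nn Ψ θ
  have q := qq_le_EE h hp θ
  have q0 := qq_nn Ψ θ
  have e0 := EE_nn Ψ θ
  have a : qq Ψ θ ≤ EE Ψ θ / Real.sin θ := by
    rw [le_div_iff₀ hs]; nlinarith
  have b : 0 ≤ Real.sin θ * FF Ψ θ := by positivity
  have c : qq Ψ θ ≤ DD Ψ θ := by unfold DD; linarith
  exact ⟨by nlinarith, c⟩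

lemma JJ_ii {Ψ : SphereFun} (h : SphSmooth Ψ) (hp : PeriodicPhi Ψ) {β η : ℝ} (hη : 0 ≤ η)
    (h0 : ∀ φ, dPhi Ψ 0 φ = 0) (h1 : ∀ φ, dPhi Ψ Real.pi φ = 0)
    (hw : ∀ θ ∈ Set.Ioo 0 Real.pi, ∀ φ, |WW β Ψ θ φ| ≤ η * Real.sin θ ^ 2) :
    IntervalIntegrable (JJ β Ψ) volume 0 Real.pi := by
  obtain ⟨M, hM⟩ := DD_bdd h h0 h1
  refine bdd_ii Real.pi_pos.le (JJ_cont h β) (C := (7/2*η + |β|) * M) (fun θ hθ => ?_)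
  have j := JJ_near h hp hη hw hθ
  have d := DD_nn Ψ hθ
  have q0 := qq_nn Ψ θ
  have hs := Real.sin_pos_of_mem_Ioo hθ
  obtain ⟨q, -⟩ := sq_le_DD h hp hθ
  have b : |β * (DD Ψ θ - 2 * Real.sin θ * qq Ψ θ)| ≤ |β| * DD Ψ θ := by
    rw [abs_mul]
    gcongr
    rw [abs_le]
    have : 0 ≤ Real.sin θ * qq Ψ θ := by positivity
    constructor <;> linarith
  have t := abs_add_le (JJ β Ψ θ - β * (DD Ψ θ - 2 * Real.sin θ * qq Ψ θ)) (β * (DD Ψ θ - 2 * Real.sin θ * qq Ψ θ))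
  rw [sub_add_cancel] at t
  calc _ ≤ (7/2*η + |β|) * DD Ψ θ := by linarith
    _ ≤ _ := by gcongr; exact hM θ hθ

lemma avg_zero {u : SphereFun} {θ : ℝ} (h : ∀ φ, u θ φ = 0) : avg u θ = 0 := by
  unfold avg; simp [h]

lemma Flux_lim {Ψ : SphereFun} (h : SphSmooth Ψ) {β η : ℝ}
    (hw : ∀ θ ∈ Set.Ioo 0 Real.pi, ∀ φ, |WW β Ψ θ φ| ≤ η * Real.sin θ ^ 2)
    {a : ℝ} {l : Filter ℝ} (hl : l ≤ nhds a) (hl' : Set.Ioo 0 Real.pi ∈ l) (h0 : ∀ φ, dPhi Ψ a φ = 0) :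
    Filter.Tendsto (Flux β Ψ) l (nhds 0) := by
  have q0 : qq Ψ a = 0 := avg_zero fun φ => by simp [h0]
  have qh0 : qh Ψ a = 0 := avg_zero fun φ => by simp [h0]
  have tq : Filter.Tendsto (qq Ψ) l (nhds 0) := by
    rw [← q0]; exact ((qq_cont h).tendsto a).mono_left hl
  have t2 : Filter.Tendsto (fun θ => pp Ψ θ * qh Ψ θ) l (nhds 0) := by
    have := (((pp_cont h).mul (qh_cont h)).tendsto a).mono_left hl
    rwa [Pi.mul_apply, qh0, mul_zero] at this
  have t3 : Filter.Tendsto (fun θ => 2 * β * Real.cos θ * qq Ψ θ) l (nhds 0) := by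
    have c : Continuous (fun θ => 2 * β * Real.cos θ * qq Ψ θ) := by have := qq_cont h; fun_prop
    have := (c.tendsto a).mono_left hl
    rwa [q0, mul_zero] at this
  have t1 : Filter.Tendsto (fun θ => avg (fun θ φ => dPhi Ψ θ φ * dPhi Ψ θ φ * W2 Ψ θ φ) θ / Real.sin θ ^ 2) l (nhds 0) := by
    apply squeeze_zero_norm' (a := fun θ => (η + 2 * |β|) * qq Ψ θ)
    · filter_upwards [hl'] with θ hθ
      have hs := Real.sin_pos_of_mem_Ioo hθ
      rw [norm_div, Real.norm_eq_abs, Real.norm_eq_abs, abs_of_pos (by positivity : 0 < Real.sin θ ^2), div_le_iff₀ (by positivity)]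
      have wb : ∀ φ, |W2 Ψ θ φ| ≤ (η + 2*|β|) * Real.sin θ ^ 2 := fun φ => by
        have e : W2 Ψ θ φ = WW β Ψ θ φ - 2 * β * Real.cos θ * Real.sin θ ^ 2 := by unfold WW; ring
        have b : |2 * β * Real.cos θ * Real.sin θ ^ 2| ≤ 2 * |β| * Real.sin θ ^ 2 := by
          rw [abs_mul, abs_mul, abs_mul, abs_of_pos (by positivity : 0 < Real.sin θ ^2), abs_two]
          have := Real.abs_cos_le_one θ
          have : 2 * |β| * |Real.cos θ| ≤ 2 * |β| * 1 := by gcongr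
          exact mul_le_mul_of_nonneg_right (by linarith) (by positivity)
        rw [e]
        have := abs_sub (WW β Ψ θ φ) (2 * β * Real.cos θ * Real.sin θ ^ 2)
        linarith [hw θ hθ φ]
      have ff := h.dP.mul h.dP
      have c := (SphSmooth.th (g := fun _ => (η + 2*|β|) * Real.sin θ ^ 2) (by fun_prop)).mul ff
      have nn := (SphSmooth.th (g := fun _ => (-1:ℝ)) (by fun_prop)).mul (ff.mul (W2_sm h))
      have m1 := avg_mono (ff.mul (W2_sm h)) c (θ := θ) (fun φ => by
        have := mul_self_nonneg (dPhi Ψ θ φ)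
        nlinarith [wb φ, le_abs_self (W2 Ψ θ φ)])
      have m2 := avg_mono nn c (θ := θ) (fun φ => by
        have := mul_self_nonneg (dPhi Ψ θ φ)
        nlinarith [wb φ, neg_abs_le (W2 Ψ θ φ)])
      rw [avg_th _ (fun _ => (η + 2*|β|) * Real.sin θ ^ 2)] at m1 m2
      rw [avg_th _ (fun _ => (-1:ℝ))] at m2
      unfold qq
      rw [abs_le]
      constructor <;> linarith
    · have := tq.const_mul (η + 2 * |β|)
      rwa [mul_zero] at this
  have := (t1.sub t2).add t3
  simp only [sub_zero, add_zero] at this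
  exact this

lemma JJ_int {Ψ : SphereFun} (h : SphSmooth Ψ) (hp : PeriodicPhi Ψ) {β η : ℝ} (hη : 0 ≤ η)
    (h0 : ∀ φ, dPhi Ψ 0 φ = 0) (h1 : ∀ φ, dPhi Ψ Real.pi φ = 0)
    (hw : ∀ θ ∈ Set.Ioo 0 Real.pi, ∀ φ, |WW β Ψ θ φ| ≤ η * Real.sin θ ^ 2)
    (hst : ∀ θ ∈ Set.Ioo (0:ℝ) Real.pi, ∀ φ : ℝ, advect Ψ (lapS Ψ) θ φ = 0) :
    ∫ θ in (0:ℝ)..Real.pi, JJ β Ψ θ = 0 := by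
  have := intervalIntegral.integral_eq_sub_of_hasDerivAt_of_tendsto Real.pi_pos
    (fun θ hθ => Flux_deriv h hp β hθ (hst θ hθ)) (JJ_ii h hp hη h0 h1 hw)
    (Flux_lim h hw nhdsWithin_le_nhds (Ioo_mem_nhdsGT Real.pi_pos) h0)
    (Flux_lim h hw nhdsWithin_le_nhds (Ioo_mem_nhdsLT Real.pi_pos) h1)
  rw [this]; simp

end PartD6

section PartD7
lemma avg_bd_sin {u : SphereFun} {C : ℝ} {θ : ℝ} {g : ℝ → ℝ} (hg : ∀ x, |g x| ≤ 1)
    (hb : ∀ φ ∈ Set.Icc 0 (2*Real.pi), |u θ φ| ≤ C * Real.sin θ) :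
    |avg (fun θ φ => u θ φ * g φ) θ| ≤ (2*Real.pi*C) * Real.sin θ := by
  have hpi := Real.pi_pos
  have := intervalIntegral.norm_integral_le_of_norm_le_const (a := 0) (b := 2*Real.pi)
    (f := fun φ => u θ φ * g φ) (C := C * Real.sin θ) (fun x hx => by
      rw [Set.uIoc_of_le (by positivity)] at hx
      have := hb x ⟨hx.1.le, hx.2⟩
      rw [norm_mul, Real.norm_eq_abs, Real.norm_eq_abs]
      nlinarith [hg x, abs_nonneg (u θ x), abs_nonneg (g x)])
  rw [sub_zero, abs_of_pos (by positivity : 0 < 2*Real.pi), Real.norm_eq_abs] at this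
  unfold avg; linarith

lemma gap_tot {Ψ : SphereFun} (h : SphSmooth Ψ) (hp : PeriodicPhi Ψ)
    (h0 : ∀ φ, dPhi Ψ 0 φ = 0) (h1 : ∀ φ, dPhi Ψ Real.pi φ = 0)
    (c1 : coeff (lapS Ψ) 1 1 = 0) (c2 : coeff (lapS Ψ) 1 (-1) = 0) :
    1/9 * ∫ θ in (0:ℝ)..Real.pi, DD Ψ θ ≤ ∫ θ in (0:ℝ)..Real.pi, (DD Ψ θ - 2 * Real.sin θ * qq Ψ θ) := by
  have hpi := Real.pi_pos
  have sc : ContDiff ℝ (⊤ : ℕ∞) Real.cos := Real.contDiff_cos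
  have ss : ContDiff ℝ (⊤ : ℕ∞) Real.sin := Real.contDiff_sin
  have hf := h.dP
  obtain ⟨oA, oB⟩ := orthAB h hp c1 c2
  obtain ⟨C, hC, hb⟩ := vanish_bound hf h0 h1
  set A := avg (fun θ φ => dPhi Ψ θ φ * Real.cos φ) with hA
  set B := avg (fun θ φ => dPhi Ψ θ φ * Real.sin φ) with hB
  set A' := avg (fun θ φ => dTheta (dPhi Ψ) θ φ * Real.cos φ) with hA'
  set B' := avg (fun θ φ => dTheta (dPhi Ψ) θ φ * Real.sin φ) with hB'
  have cA : Continuous A := avg_cont (hf.mul (SphSmooth.ph sc))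
  have cB : Continuous B := avg_cont (hf.mul (SphSmooth.ph ss))
  obtain ⟨iA, gA⟩ := gap (A := A) (A' := A') (C := 2*Real.pi*C) (fun x => avg_g_deriv hf sc x) (avg_cont (hf.dT.mul (SphSmooth.ph sc)))
    (fun θ hθ => avg_bd_sin Real.abs_cos_le_one (hb θ hθ)) oA
  obtain ⟨iB, gB⟩ := gap (A := B) (A' := B') (C := 2*Real.pi*C) (fun x => avg_g_deriv hf ss x) (avg_cont (hf.dT.mul (SphSmooth.ph ss)))
    (fun θ hθ => avg_bd_sin Real.abs_sin_le_one (hb θ hθ)) oB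
  have kA : IntervalIntegrable (fun θ => 2 * A θ ^ 2 * Real.sin θ) volume 0 Real.pi := by
    apply Continuous.intervalIntegrable; fun_prop
  have kB : IntervalIntegrable (fun θ => 2 * B θ ^ 2 * Real.sin θ) volume 0 Real.pi := by
    apply Continuous.intervalIntegrable; fun_prop
  have kq : IntervalIntegrable (fun θ => 2 * Real.sin θ * qq Ψ θ) volume 0 Real.pi := by
    apply Continuous.intervalIntegrable
    have := qq_cont h
    fun_prop
  have iD : IntervalIntegrable (fun θ => DD Ψ θ) volume 0 Real.pi := DD_ii h h0 h1
  rw [intervalIntegral.integral_sub iA kA] at gA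
  rw [intervalIntegral.integral_sub iB kB] at gB
  have iG : IntervalIntegrable (fun θ => (8/9 * (Real.sin θ * A' θ ^ 2 + A θ ^ 2 / Real.sin θ) - 2 * A θ ^ 2 * Real.sin θ)
      + (8/9 * (Real.sin θ * B' θ ^ 2 + B θ ^ 2 / Real.sin θ) - 2 * B θ ^ 2 * Real.sin θ)) volume 0 Real.pi :=
    ((iA.const_mul _).sub kA).add ((iB.const_mul _).sub kB)
  have iL : IntervalIntegrable (fun θ => Real.pi * (8/9 * DD Ψ θ - 2 * Real.sin θ * qq Ψ θ)) volume 0 Real.pi :=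
    ((iD.const_mul _).sub kq).const_mul _
  have key := intervalIntegral.integral_mono_on_of_le_Ioo hpi.le iG iL (fun θ hθ => by
    have hs := Real.sin_pos_of_mem_Ioo hθ
    have hsi := sin_le_inv hθ
    have mC1 : mC (fun φ => dPhi Ψ θ φ) 1 = A θ := by simp [mC, hA, avg]
    have mS1 : mS (fun φ => dPhi Ψ θ φ) 1 = B θ := by simp [mS, hB, avg]
    have mC2 : mC (fun φ => dTheta (dPhi Ψ) θ φ) 1 = A' θ := by simp [mC, hA', avg]
    have mS2 : mS (fun φ => dTheta (dPhi Ψ) θ φ) 1 = B' θ := by simp [mS, hB', avg]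
    have mC3 := mC_deriv (fun x => hf.hP θ x) (hf.dP.c2 θ) (per0 hp.dP θ) 1
    have mS3 := mS_deriv (fun x => hf.hP θ x) (hf.dP.c2 θ) (per0 hp.dP θ) 1
    rw [mC1] at mS3
    rw [mS1] at mC3
    have w2 := wirtinger2 (fun x => hf.hP θ x) (hf.dP.c2 θ) (per0 hp.dP θ) (avg_dPhi h hp θ)
    rw [mC1, mS1, ← sq_avg, ← sq_avg] at w2
    have b1 := bessel1 (hf.dT.c2 θ)
    rw [mC2, mS2, ← sq_avg, div_le_iff₀ hpi] at b1
    have b2 := bessel1 (hf.dP.c2 θ)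
    rw [mC3, mS3, ← sq_avg, div_le_iff₀ hpi] at b2
    push_cast at b2
    change A' θ ^ 2 + B' θ ^ 2 ≤ FF Ψ θ * Real.pi at b1
    change _ ≤ EE Ψ θ * Real.pi at b2
    change 4 * qq Ψ θ - _ ≤ EE Ψ θ at w2
    have w3 : 4 * (Real.pi * qq Ψ θ) - 3 * (A θ ^ 2 + B θ ^ 2) ≤ Real.pi * EE Ψ θ := by
      have := mul_le_mul_of_nonneg_left w2 hpi.le
      have e : Real.pi * (4 * qq Ψ θ - 3 / Real.pi * (A θ ^ 2 + B θ ^ 2)) = 4 * (Real.pi * qq Ψ θ) - 3 * (A θ ^ 2 + B θ ^ 2) := by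
        field_simp
      linarith
    unfold DD
    set s := Real.sin θ
    have f1 : 0 ≤ s * (FF Ψ θ * Real.pi - (A' θ ^ 2 + B' θ ^ 2)) := mul_nonneg hs.le (by linarith)
    have hx : 0 ≤ Real.pi * EE Ψ θ - (A θ ^ 2 + B θ ^ 2) := by linarith
    have f2 : s * (Real.pi * EE Ψ θ - (A θ ^ 2 + B θ ^ 2)) ≤ 1/s * (Real.pi * EE Ψ θ - (A θ ^ 2 + B θ ^ 2)) :=
      mul_le_mul_of_nonneg_right hsi hx
    have f3 : 0 ≤ 1/s * (Real.pi * EE Ψ θ - (A θ ^ 2 + B θ ^ 2)) := by positivity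
    have f4 := mul_le_mul_of_nonneg_left w3 hs.le
    rw [div_eq_mul_one_div (A θ ^ 2), div_eq_mul_one_div (B θ ^ 2), div_eq_mul_one_div (EE Ψ θ)]
    nlinarith)
  rw [intervalIntegral.integral_add ((iA.const_mul _).sub kA) ((iB.const_mul _).sub kB),
    intervalIntegral.integral_sub (iA.const_mul _) kA, intervalIntegral.integral_sub (iB.const_mul _) kB,
    intervalIntegral.integral_const_mul, intervalIntegral.integral_const_mul, intervalIntegral.integral_const_mul,
    intervalIntegral.integral_sub (iD.const_mul _) kq, intervalIntegral.integral_const_mul] at key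
  rw [intervalIntegral.integral_sub iD kq]
  have : 0 ≤ Real.pi * (8 / 9 * (∫ θ in (0:ℝ)..Real.pi, DD Ψ θ) - ∫ θ in (0:ℝ)..Real.pi, 2 * Real.sin θ * qq Ψ θ) := by
    linarith
  have := nonneg_of_mul_nonneg_right this hpi
  linarith

lemma DD_int_zero {Ψ : SphereFun} (h : SphSmooth Ψ) (hp : PeriodicPhi Ψ) {β η : ℝ} (hη : 0 ≤ η) (hηβ : 63/2 * η < |β|)
    (h0 : ∀ φ, dPhi Ψ 0 φ = 0) (h1 : ∀ φ, dPhi Ψ Real.pi φ = 0)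
    (hw : ∀ θ ∈ Set.Ioo 0 Real.pi, ∀ φ, |WW β Ψ θ φ| ≤ η * Real.sin θ ^ 2)
    (hst : ∀ θ ∈ Set.Ioo (0:ℝ) Real.pi, ∀ φ : ℝ, advect Ψ (lapS Ψ) θ φ = 0)
    (c1 : coeff (lapS Ψ) 1 1 = 0) (c2 : coeff (lapS Ψ) 1 (-1) = 0) :
    ∫ θ in (0:ℝ)..Real.pi, DD Ψ θ ≤ 0 := by
  have g := gap_tot h hp h0 h1 c1 c2
  have j := JJ_int h hp hη h0 h1 hw hst
  have iD : IntervalIntegrable (fun θ => DD Ψ θ) volume 0 Real.pi := DD_ii h h0 h1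
  have iJ : IntervalIntegrable (fun θ => JJ β Ψ θ) volume 0 Real.pi := JJ_ii h hp hη h0 h1 hw
  have kq : IntervalIntegrable (fun θ => 2 * Real.sin θ * qq Ψ θ) volume 0 Real.pi := by
    apply Continuous.intervalIntegrable
    have := qq_cont h
    fun_prop
  have iK : IntervalIntegrable (fun θ => β * (DD Ψ θ - 2 * Real.sin θ * qq Ψ θ)) volume 0 Real.pi := (iD.sub kq).const_mul _
  have m1 := intervalIntegral.integral_mono_on_of_le_Ioo Real.pi_pos.le (iJ.sub iK) (iD.const_mul (7/2*η)) (fun θ hθ =>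
    (abs_le.1 (JJ_near h hp hη hw hθ)).2)
  have m2 := intervalIntegral.integral_mono_on_of_le_Ioo Real.pi_pos.le (iD.const_mul (-(7/2*η))) (iJ.sub iK) (fun θ hθ => by
    have := (abs_le.1 (JJ_near h hp hη hw hθ)).1
    linarith)
  rw [intervalIntegral.integral_sub iJ iK, j, intervalIntegral.integral_const_mul, intervalIntegral.integral_const_mul] at m1 m2
  by_contra hc
  push Not at hc
  set I := ∫ θ in (0:ℝ)..Real.pi, DD Ψ θ
  set G := ∫ θ in (0:ℝ)..Real.pi, (DD Ψ θ - 2 * Real.sin θ * qq Ψ θ)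
  have b : |β| * G ≤ 7/2 * η * I := by
    have hG : 0 ≤ G := by linarith
    rw [← abs_of_nonneg hG, ← abs_mul, abs_le]
    constructor <;> linarith
  nlinarith [mul_le_mul_of_nonneg_left g (abs_nonneg β)]

lemma f_zero {Ψ : SphereFun} (h : SphSmooth Ψ) (hp : PeriodicPhi Ψ)
    (h0 : ∀ φ, dPhi Ψ 0 φ = 0) (h1 : ∀ φ, dPhi Ψ Real.pi φ = 0)
    (hD : ∫ θ in (0:ℝ)..Real.pi, DD Ψ θ ≤ 0) {θ : ℝ} (hθ : θ ∈ Set.Icc 0 Real.pi) (φ : ℝ) : dPhi Ψ θ φ = 0 := by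
  have hpi := Real.pi_pos
  have i1 : ∫ θ in (0:ℝ)..Real.pi, qq Ψ θ ≤ 0 :=
    (intervalIntegral.integral_mono_on_of_le_Ioo hpi.le ((qq_cont h).intervalIntegrable _ _) (DD_ii h h0 h1)
      (fun θ hθ => (sq_le_DD h hp hθ).2)).trans hD
  have q0 : qq Ψ θ ≤ 0 := by
    by_contra hc
    push Not at hc
    have := intervalIntegral.integral_pos hpi (qq_cont h).continuousOn (fun x _ => qq_nn Ψ x) ⟨θ, hθ, hc⟩
    linarith
  have z : ∀ φ ∈ Set.Icc 0 (2*Real.pi), dPhi Ψ θ φ = 0 := by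
    intro φ hφ
    by_contra hc
    have := intervalIntegral.integral_pos (by positivity : 0 < 2*Real.pi) ((h.dP.mul h.dP).c2 θ).continuousOn
      (fun x _ => mul_self_nonneg (dPhi Ψ θ x)) ⟨φ, hφ, mul_self_pos.2 hc⟩
    have e : qq Ψ θ = ∫ x in (0:ℝ)..(2*Real.pi), dPhi Ψ θ x * dPhi Ψ θ x := rfl
    linarith
  have per : Function.Periodic (fun φ => dPhi Ψ θ φ) (2*Real.pi) := fun x => hp.dP θ x
  obtain ⟨y, hy, e⟩ := per.exists_mem_Ico₀ (by positivity) φ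
  exact e.trans (z y ⟨hy.1, hy.2.le⟩)

lemma zonal_of {Ψ : SphereFun} (h : SphSmooth Ψ) (hz : ∀ θ ∈ Set.Icc 0 Real.pi, ∀ φ, dPhi Ψ θ φ = 0) :
    ZonalOn Ψ ∧ ZonalOn (lapS Ψ) := by
  have z : ZonalOn Ψ := fun θ hθ a b =>
    is_const_of_deriv_eq_zero (f := fun p => Ψ θ p) (fun x => (h.hP θ x).differentiableAt) (fun x => hz θ hθ x) a b
  refine ⟨z, fun θ hθ a b => ?_⟩
  have hpi := Real.pi_pos
  rcases eq_or_lt_of_le hθ.1 with e | e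
  · simp [lapS, ← e]
  rcases eq_or_lt_of_le hθ.2 with e' | e'
  · simp [lapS, e']
  have t1 : ∀ t ∈ Set.Ioo 0 Real.pi, dTheta Ψ t a = dTheta Ψ t b := fun t ht => by
    have ev : (fun t => Ψ t a) =ᶠ[nhds t] fun t => Ψ t b := by
      filter_upwards [isOpen_Ioo.mem_nhds ht] with s hs
      exact z s (Set.Ioo_subset_Icc_self hs) a b
    exact ev.deriv_eq
  have ev : (fun t => Real.sin t * dTheta Ψ t a) =ᶠ[nhds θ] fun t => Real.sin t * dTheta Ψ t b := by
    filter_upwards [isOpen_Ioo.mem_nhds ⟨e, e'⟩] with s hs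
    rw [t1 s hs]
  have d : ∀ x, dPhi (dPhi Ψ) θ x = 0 := fun x => by
    have : (fun p => dPhi Ψ θ p) = fun _ => 0 := funext fun p => hz θ hθ p
    show deriv (fun p => dPhi Ψ θ p) x = 0
    rw [this]; simp
  simp only [lapS]
  rw [ev.deriv_eq, d, d]

end PartD7

/-- Conditional rigidity of the rigid rotation for the
non-rotating Euler equations: every steady solution whose vorticity `Ω̄ = ΔΨ`
is `ε₀`-close to `−2αY₁⁰` in `H⁴` and is orthogonal to `Y₁^{±1}` must be zonal. -/
theorem rigidity_nonrotating_orthogonal (α : ℝ) (hα : α ≠ 0) :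
    ∃ ε₀ : ℝ, 0 < ε₀ ∧
      ∀ Ψ : SphereFun, SphSmooth Ψ → PeriodicPhi Ψ →
        -- steady non-rotating Euler: Ū·∇Ω̄ = 0 with Ū = ∇⊥Ψ, Ω̄ = ΔΨ
        (∀ θ ∈ Set.Ioo (0:ℝ) Real.pi, ∀ φ : ℝ,
          advect Ψ (lapS Ψ) θ φ = 0) →
        -- ‖Ω̄ + 2αY₁⁰‖_{H⁴} ≤ ε₀
        sobNormSq 4 (fun θ φ => lapS Ψ θ φ + 2*α*Ynm 1 0 θ φ)
          ≤ ENNReal.ofReal (ε₀^2) →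
        -- ⟨Ω̄, Y₁^m⟩ = 0 for |m| = 1
        coeff (lapS Ψ) 1 1 = 0 → coeff (lapS Ψ) 1 (-1) = 0 →
        -- conclusion: Ū = Ū(θ)e_φ and Ω̄ = Ω̄(θ)
        ZonalOn Ψ ∧ ZonalOn (lapS Ψ) := by
  set β := α * Real.sqrt (3/(4*Real.pi)) with hβ
  have hpi := Real.pi_pos
  have hβ0 : 0 < |β| := by
    rw [abs_pos]
    exact mul_ne_zero hα (by positivity)
  set c := Real.sqrt (2*Real.pi) * (1+K0) with hc
  have hc0 : 0 < c := by
    have := K0_nonneg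
    positivity
  refine ⟨|β| / (64 * c), by positivity, ?_⟩
  intro Ψ h hp hst hN c1 c2
  obtain ⟨h0, h1, hw⟩ := sup_w h hp α (by positivity : 0 < |β| / (64 * c)) hN
  rw [← hβ, ← hc] at hw
  have e : c * (|β| / (64 * c)) = |β| / 64 := by field_simp
  rw [e] at hw
  have hD := DD_int_zero h hp (by positivity) (by linarith) h0 h1 hw hst c1 c2
  exact zonal_of h (fun θ hθ φ => f_zero h hp h0 h1 hD hθ φ)
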